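/- arXiv:2509.25432 — 2 statements merged into one kernel-verified Lean document; each statement's English description precedes it below -/
import Mathlib

section
/- Let $k$ be an algebraically closed field and let $C \subset \mathbb{P}^2_k$ be a smooth plane curve of degree $d$. Let $p_1, \dots, p_{d-1}$ be distinct points of $C$ and let $\mathcal{L} = \mathcal{O}_C(p_1 + \cdots + p_{d-1})$. If the points $p_1, \dots, p_{d-1}$ do not all lie on a line in $\mathbb{P}^2_k$, then $h^0(C, \mathcal{L}) = 1$. If they all lie on a line $\ell \subset \mathbb{P}^2_k$, then $h^0(C, \mathcal{L}) = 2$ and $h^0(C, \mathcal{O}_C(\ell \cap C)) = 3$, where $\ell \cap C$ denotes the intersection divisor of $\ell$ with $C$ (a degree-$d$ effective divisor). -/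
/-!
Framework: a smooth plane curve of degree `d` over an algebraically closed field `k` is
`C = V(f) ⊆ ℙ²_k` for `f ∈ k[X₀,X₁,X₂]` homogeneous of degree `d` whose only common zero
with its partial derivatives is the origin.  We realize the points of `C`, the order of
vanishing at a point of `C` of a homogeneous polynomial, Riemann–Roch spaces `L(D)` of
divisors on `C` (inside the fraction field `F` of the homogeneous coordinate ring of `C`,
as the degree-zero fractions `g/h` with `div(g/h) + D ≥ 0`), and `h⁰(C, O_C(D)) = dim L(D)`.
-/

noncomputable section PlaneCurve

variable {k : Type*} [Field k]

/-- The points of the plane curve `V(f) ⊆ ℙ²_k`: points of the projectivization of `k³`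
whose (fixed) representative vector is a zero of `f`.  (For homogeneous `f` this is
independent of the representative.) -/
def PlanePoint (f : MvPolynomial (Fin 3) k) : Type _ :=
  { p : Projectivization k (Fin 3 → k) // MvPolynomial.eval p.rep f = 0 }

open Classical in
/-- The inhomogeneous polynomial `ℓ - 1`, where `ℓ` is a linear form with `ℓ(v) = 1`;
the hyperplane `ℓ = 1` is an affine chart of `ℙ²` containing the point `[v]`. -/
def slicePoly (v : Fin 3 → k) : MvPolynomial (Fin 3) k :=
  if hv : ∃ i, v i ≠ 0 then
    MvPolynomial.C (v hv.choose)⁻¹ * MvPolynomial.X hv.choose - 1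
  else 0

/-- The order of vanishing, at the point `p` of the curve `C = V(f)`, of the restriction
to `C` of a homogeneous polynomial `g`: in the affine chart `ℓ = 1` of `ℙ²` containing `p`,
it is the largest `n` such that, locally at `p` (i.e., after multiplying by some polynomial
not vanishing at `p`), `g` lies in the `n`-th power of the maximal ideal of `p` on the
affine curve `{f = 0, ℓ = 1}`. -/
def ordAt (f : MvPolynomial (Fin 3) k) (p : PlanePoint f) (g : MvPolynomial (Fin 3) k) : ℕ :=
  sSup { n : ℕ | ∃ h : MvPolynomial (Fin 3) k, MvPolynomial.eval p.1.rep h ≠ 0 ∧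
    h * g ∈ Ideal.span {f, slicePoly p.1.rep} +
      (RingHom.ker (MvPolynomial.eval p.1.rep)) ^ n }

variable (F : Type*) [CommRing F]

/-- The Riemann–Roch space `L(D) = H⁰(C, O_C(D))` of a divisor `D` on the smooth plane
curve `C = V(f)`, realized inside the fraction field `F` of the homogeneous coordinate ring
`k[X₀,X₁,X₂]/(f)` of `C`: it consists of `0` together with all degree-zero fractions `g/h`
(`g`, `h` homogeneous of the same degree, neither divisible by `f`) with `div(g/h) + D ≥ 0`. -/
def RRspace (f : MvPolynomial (Fin 3) k)
    [Algebra (MvPolynomial (Fin 3) k ⧸ Ideal.span {f}) F]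
    (D : PlanePoint f → ℤ) : Set F :=
  {φ | φ = 0 ∨ ∃ (e : ℕ) (g h : MvPolynomial (Fin 3) k),
    g.IsHomogeneous e ∧ h.IsHomogeneous e ∧ ¬ f ∣ g ∧ ¬ f ∣ h ∧
    φ * algebraMap (MvPolynomial (Fin 3) k ⧸ Ideal.span {f}) F
          (Ideal.Quotient.mk (Ideal.span {f}) h)
      = algebraMap (MvPolynomial (Fin 3) k ⧸ Ideal.span {f}) F
          (Ideal.Quotient.mk (Ideal.span {f}) g) ∧
    ∀ p : PlanePoint f, 0 ≤ (ordAt f p g : ℤ) - (ordAt f p h : ℤ) + D p}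

/-- `h⁰(C, O_C(D))`: the dimension over `k` of the Riemann–Roch space of the divisor `D`. -/
def h0 (f : MvPolynomial (Fin 3) k)
    [Algebra (MvPolynomial (Fin 3) k ⧸ Ideal.span {f}) F] [Algebra k F]
    (D : PlanePoint f → ℤ) : ℕ :=
  Module.finrank k (Submodule.span k (RRspace F f D))

end PlaneCurve

section PCProof
open MvPolynomial

theorem pc_hom_aeval {k A : Type*} [Field k] [CommRing A] [Algebra k A] {n : ℕ}
    {g : MvPolynomial (Fin 3) k} (hg : g.IsHomogeneous n) (c : A) (x : Fin 3 → A) :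
    aeval (fun i => c * x i) g = c ^ n * aeval x g := by
  rw [aeval_def, aeval_def, eval₂_eq, eval₂_eq, Finset.mul_sum]
  refine Finset.sum_congr rfl fun m hm => ?_
  have : m.degree = n := by
    by_contra h
    exact (mem_support_iff.1 hm) (hg.coeff_eq_zero h)
  have h2 : ∏ i ∈ m.support, (c * x i) ^ m i = c ^ n * ∏ i ∈ m.support, x i ^ m i := by
    simp_rw [mul_pow]
    rw [Finset.prod_mul_distrib, Finset.prod_pow_eq_pow_sum, ← this]
    rfl
  rw [h2]; ring

theorem pc_hom_eval {k : Type*} [Field k] {n : ℕ}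
    {g : MvPolynomial (Fin 3) k} (hg : g.IsHomogeneous n) (c : k) (x : Fin 3 → k) :
    eval (c • x) g = c ^ n * eval x g := by
  have := pc_hom_aeval hg c x
  simpa [aeval_eq_eval, Pi.smul_def] using this

theorem pc_reg3 {k : Type*} [Field k] (N : ℕ) (i j l : Fin 3) (hij : i ≠ j) (hil : i ≠ l)
    (q : MvPolynomial (Fin 3) k)
    (h : X i ^ N * q ∈ Ideal.span {(X j ^ N : MvPolynomial (Fin 3) k), X l ^ N}) :
    q ∈ Ideal.span {(X j ^ N : MvPolynomial (Fin 3) k), X l ^ N} := by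
  have e : ({(X j ^ N : MvPolynomial (Fin 3) k), X l ^ N} : Set _) =
      (fun s => monomial s (1:k)) '' {Finsupp.single j N, Finsupp.single l N} := by
    simp [Set.image_pair, X_pow_eq_monomial]
  rw [e] at h ⊢
  rw [mem_ideal_span_monomial_image] at h ⊢
  intro m hm
  have hm' : Finsupp.single i N + m ∈ (X i ^ N * q).support := by
    rw [mem_support_iff, X_pow_eq_monomial, coeff_monomial_mul]
    simpa using mem_support_iff.1 hm
  obtain ⟨s, hs, hle⟩ := h _ hm'
  refine ⟨s, hs, ?_⟩
  rcases hs with rfl | rfl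
  · rw [Finsupp.single_le_iff] at hle ⊢
    simpa [Finsupp.single_apply, hij] using hle
  · rw [Finsupp.single_le_iff] at hle ⊢
    simpa [Finsupp.single_apply, hil] using hle

theorem pc_reg2 {k : Type*} [Field k] (N : ℕ) (i j : Fin 3) (hij : i ≠ j)
    (u w : MvPolynomial (Fin 3) k) (h : X i ^ N * u = X j ^ N * w) :
    (X i ^ N : MvPolynomial (Fin 3) k) ∣ w := by
  have hc : ¬ (X i : MvPolynomial (Fin 3) k) ∣ X j ^ N := by
    intro hd
    have := (X_prime (R := k) (i := i)).dvd_of_dvd_pow hd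
    rw [X_dvd_X] at this
    exact hij this
  exact (X_prime (R := k) (i := i)).pow_dvd_of_dvd_mul_left N hc (h ▸ dvd_mul_right _ _)

/-- The ideal `(h, f)` is saturated. -/
theorem pc_saturated {k : Type*} [Field k] (f h a : MvPolynomial (Fin 3) k) (hf : Prime f)
    (hX : ¬ f ∣ X 0) (hh : ¬ f ∣ h) (N : ℕ)
    (H : ∀ i : Fin 3, X i ^ N * a ∈ Ideal.span {h, f}) : a ∈ Ideal.span {h, f} := by
  have H' : ∀ i : Fin 3, ∃ b c, X i ^ N * a = b * h + c * f := by
    intro i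
    obtain ⟨b, c, e⟩ := Ideal.mem_span_pair.1 (H i)
    exact ⟨b, c, e.symm⟩
  choose b c hbc using H'
  have hne := hf.ne_zero
  have Q : ∀ i j : Fin 3, ∃ q, X j ^ N * b i - X i ^ N * b j = f * q := by
    intro i j
    have : f ∣ h * (X j ^ N * b i - X i ^ N * b j) :=
      ⟨X i ^ N * c j - X j ^ N * c i, by linear_combination X i ^ N * hbc j - X j ^ N * hbc i⟩
    exact (hf.dvd_or_dvd this).resolve_left hh
  obtain ⟨q01, h01⟩ := Q 0 1
  obtain ⟨q02, h02⟩ := Q 0 2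
  obtain ⟨q12, h12⟩ := Q 1 2
  have K : X 0 ^ N * q12 - X 1 ^ N * q02 + X 2 ^ N * q01 = 0 := by
    apply mul_left_cancel₀ hne
    linear_combination -(X 0 ^ N) * h12 + X 1 ^ N * h02 - X 2 ^ N * h01
  have m12 : q12 ∈ Ideal.span {(X 1 ^ N : MvPolynomial (Fin 3) k), X 2 ^ N} := by
    refine pc_reg3 N 0 1 2 (by decide) (by decide) q12 ?_
    rw [Ideal.mem_span_pair]
    exact ⟨q02, -q01, by linear_combination -K⟩
  obtain ⟨s, r1, e12⟩ := Ideal.mem_span_pair.1 m12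
  -- q12 = s X1 + r1 X2
  obtain ⟨r0, hr0⟩ := pc_reg2 N 1 2 (by decide) (q02 - X 0 ^ N * s) (X 0 ^ N * r1 + q01)
    (by linear_combination -K - X 0 ^ N * e12)
  obtain ⟨w, hw⟩ := pc_reg2 N 0 1 (by decide) (b 1 - f * r1) (b 0 - f * r0)
    (by linear_combination -h01 - f * hr0)
  have : f ∣ a - w * h := by
    have : f ∣ X 0 ^ N * (a - w * h) := ⟨r0 * h + c 0, by linear_combination hbc 0 + h * hw⟩
    exact (hf.dvd_or_dvd this).resolve_left fun hd => hX (hf.dvd_of_dvd_pow hd)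
  obtain ⟨z, hz⟩ := this
  rw [Ideal.mem_span_pair]
  exact ⟨w, z, by linear_combination -hz⟩

theorem pc_comp_mul {k : Type*} [Field k] {m : ℕ} {h : MvPolynomial (Fin 3) k}
    (hh : h.IsHomogeneous m) (w : MvPolynomial (Fin 3) k) (t : ℕ) :
    ∃ G : MvPolynomial (Fin 3) k, homogeneousComponent t (w * h) = G * h ∧
      ∀ n, t = n + m → G.IsHomogeneous n := by
  classical
  refine ⟨∑ i ∈ Finset.range (w.totalDegree + 1),
    if i + m = t then homogeneousComponent i w else 0, ?_, ?_⟩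
  · conv_lhs => rw [← sum_homogeneousComponent w]
    rw [Finset.sum_mul, map_sum, Finset.sum_mul]
    refine Finset.sum_congr rfl fun i _ => ?_
    rw [homogeneousComponent_of_mem (n := i + m)
      ((homogeneousComponent_isHomogeneous i w).mul hh)]
    by_cases h : t = i + m
    · simp [h]
    · simp [h, Ne.symm h]
  · rintro n rfl
    refine IsHomogeneous.sum _ _ _ fun i _ => ?_
    split_ifs with hi
    · obtain rfl : i = n := by omega
      exact homogeneousComponent_isHomogeneous i w
    · exact isHomogeneous_zero _ _ _

theorem pc_span_hom {k : Type*} [Field k] {d e n : ℕ} {f h a : MvPolynomial (Fin 3) k}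
    (hf : f.IsHomogeneous d) (hh : h.IsHomogeneous e) (ha : a.IsHomogeneous (n + e))
    (H : a ∈ Ideal.span {h, f}) : ∃ G : MvPolynomial (Fin 3) k, G.IsHomogeneous n ∧
      f ∣ a - G * h := by
  obtain ⟨w, z, e1⟩ := Ideal.mem_span_pair.1 H
  obtain ⟨G, hG, hG'⟩ := pc_comp_mul hh w (n + e)
  obtain ⟨Z, hZ, -⟩ := pc_comp_mul hf z (n + e)
  refine ⟨G, hG' n rfl, Z, ?_⟩
  have := congrArg (homogeneousComponent (n + e)) e1
  rw [map_add, hG, hZ, homogeneousComponent_eq_self ha] at this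
  linear_combination -this

/-- Degree obstruction: a form of degree `< d` divisible by `f` is zero. -/
theorem pc_dvd_deg {k : Type*} [Field k] {d n : ℕ} {f g : MvPolynomial (Fin 3) k}
    (hf : f.IsHomogeneous d) (hf0 : f ≠ 0) (hg : g.IsHomogeneous n) (hn : n < d) (h : f ∣ g) :
    g = 0 := by
  by_contra h0
  obtain ⟨q, rfl⟩ := h
  have hq : q ≠ 0 := right_ne_zero_of_mul h0
  have := totalDegree_mul_of_isDomain hf0 hq
  rw [hg.totalDegree h0, hf.totalDegree hf0] at this
  omega

/-- Taylor expansion to first order. -/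
theorem pc_taylor {k : Type*} [Field k] (v : Fin 3 → k) (g : MvPolynomial (Fin 3) k) :
    g - C (eval v g) - ∑ i, C (eval v (pderiv i g)) * (X i - C (v i)) ∈
      (RingHom.ker (eval v)) ^ 2 := by
  have hX : ∀ i, (X i - C (v i) : MvPolynomial (Fin 3) k) ∈ RingHom.ker (eval v) := by
    intro i; simp [RingHom.mem_ker]
  induction g using MvPolynomial.induction_on with
  | C a => simp
  | add p q hp hq =>
    convert Ideal.add_mem _ hp hq using 1
    simp [add_mul, Finset.sum_add_distrib]
    ring
  | mul_X p j hp =>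
    have hp1 : p - C (eval v p) ∈ RingHom.ker (eval v) := by simp [RingHom.mem_ker]
    have h2 : (p - C (eval v p)) * (X j - C (v j)) ∈ (RingHom.ker (eval v)) ^ 2 := by
      rw [pow_two]; exact Ideal.mul_mem_mul hp1 (hX j)
    have h3 := Ideal.mul_mem_left _ (C (v j)) hp
    convert Ideal.add_mem _ h2 h3 using 1
    have : ∀ i : Fin 3, C (eval v (pderiv i (p * X j))) * (X i - C (v i)) =
        C (v j) * (C (eval v (pderiv i p)) * (X i - C (v i))) +
        (if i = j then C (eval v p) * (X j - C (v j)) else 0) := by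
      intro i
      by_cases h : i = j
      · subst h; simp; ring
      · simp [pderiv_X_of_ne (Ne.symm h), h]; ring
    simp_rw [this]
    rw [Finset.sum_add_distrib, ← Finset.mul_sum]
    simp
    ring

/-- Homogenization with respect to a linear form `L`. -/
theorem pc_homogenize {k : Type*} [Field k] {L : MvPolynomial (Fin 3) k}
    (hL : L.IsHomogeneous 1) (q : MvPolynomial (Fin 3) k) :
    ∃ (N : ℕ) (Q : MvPolynomial (Fin 3) k), Q.IsHomogeneous N ∧ L - 1 ∣ q - Q := by
  refine ⟨q.totalDegree, ∑ i ∈ Finset.range (q.totalDegree + 1),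
    homogeneousComponent i q * L ^ (q.totalDegree - i), ?_, ?_⟩
  · refine IsHomogeneous.sum _ _ _ fun i hi => ?_
    have := (homogeneousComponent_isHomogeneous i q).mul (hL.pow (q.totalDegree - i))
    have e : i + 1 * (q.totalDegree - i) = q.totalDegree := by
      have := Finset.mem_range.1 hi; omega
    rwa [e] at this
  · have : q - ∑ i ∈ Finset.range (q.totalDegree + 1),
        homogeneousComponent i q * L ^ (q.totalDegree - i) =
        ∑ i ∈ Finset.range (q.totalDegree + 1),
        homogeneousComponent i q * (1 - L ^ (q.totalDegree - i)) := by
      simp_rw [mul_sub, mul_one]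
      rw [Finset.sum_sub_distrib, sum_homogeneousComponent]
    rw [this]
    refine Finset.dvd_sum fun i _ => Dvd.dvd.mul_left ?_ _
    rw [← dvd_neg, neg_sub]
    simpa using sub_dvd_pow_sub_pow L 1 (q.totalDegree - i)

section theta
variable {k : Type*} [Field k] {F : Type*} [Field F] [Algebra k F]
  {f : MvPolynomial (Fin 3) k} {d : ℕ}
  (π : MvPolynomial (Fin 3) k →ₐ[k] F) {L : MvPolynomial (Fin 3) k}

/-- Dehomogenization map to the function field. -/
noncomputable def pcTheta (L : MvPolynomial (Fin 3) k) : MvPolynomial (Fin 3) k →ₐ[k] F :=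
  aeval (fun i => π (X i) / π L)

theorem pcTheta_hom (hL0 : π L ≠ 0) {n : ℕ} {g : MvPolynomial (Fin 3) k}
    (hg : g.IsHomogeneous n) : π L ^ n * pcTheta π L g = π g := by
  have := pc_hom_aeval hg (π L) (fun i => π (X i) / π L)
  rw [pcTheta, ← this]
  have e : (fun i => π L * (π (X i) / π L)) = fun i => π (X i) := by
    funext i; field_simp
  rw [e]
  exact (DFunLike.congr_fun (aeval_unique π) g).symm

theorem pcTheta_slice (hL0 : π L ≠ 0) (hL : L.IsHomogeneous 1) : pcTheta π L (L - 1) = 0 := by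
  have := pcTheta_hom π hL0 hL
  rw [pow_one] at this
  have h1 : pcTheta π L L = 1 := mul_left_cancel₀ hL0 (by rw [this, mul_one])
  rw [map_sub, map_one, h1, sub_self]

theorem pcTheta_ker (hπ : ∀ q, π q = 0 ↔ f ∣ q) (hf : f.IsHomogeneous d)
    (hL0 : π L ≠ 0) (hL : L.IsHomogeneous 1) :
    RingHom.ker (pcTheta π L) = Ideal.span {f, L - 1} := by
  apply le_antisymm
  · intro q hq
    rw [RingHom.mem_ker] at hq
    obtain ⟨N, Q, hQ, hd⟩ := pc_homogenize hL q
    have h1 : pcTheta π L Q = 0 := by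
      obtain ⟨r, hr⟩ := hd
      have := congrArg (pcTheta π L) hr
      rw [map_sub, map_mul, pcTheta_slice π hL0 hL, hq] at this
      simpa using this
    have h2 : π Q = 0 := by rw [← pcTheta_hom π hL0 hQ, h1, mul_zero]
    rw [hπ] at h2
    obtain ⟨a, ha⟩ := h2
    obtain ⟨b, hb⟩ := hd
    rw [Ideal.mem_span_pair]
    exact ⟨a, b, by linear_combination -ha - hb⟩
  · rw [Ideal.span_le]
    rintro x (rfl | rfl)
    · have := pcTheta_hom π hL0 hf
      rw [(hπ x).2 dvd_rfl] at this
      simpa [RingHom.mem_ker, hL0] using this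
    · exact pcTheta_slice π hL0 hL

theorem pc_hom_mem (hπ : ∀ q, π q = 0 ↔ f ∣ q) (hf : f.IsHomogeneous d)
    (hL0 : π L ≠ 0) (hL : L.IsHomogeneous 1) {n : ℕ} {g : MvPolynomial (Fin 3) k}
    (hg : g.IsHomogeneous n) (h : g ∈ Ideal.span {f, L - 1}) : f ∣ g := by
  rw [← pcTheta_ker π hπ hf hL0 hL, RingHom.mem_ker] at h
  rw [← hπ, ← pcTheta_hom π hL0 hg, h, mul_zero]

/-- From a local relation on the affine chart to a global one. -/
theorem pc_globalize (hπ : ∀ q, π q = 0 ↔ f ∣ q) (hf : f.IsHomogeneous d)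
    (hL0 : π L ≠ 0) (hL : L.IsHomogeneous 1) (v : Fin 3 → k) (hv : eval v L = 1)
    {a h : MvPolynomial (Fin 3) k} {m n : ℕ} (ha : a.IsHomogeneous m) (hh : h.IsHomogeneous n)
    (u x : MvPolynomial (Fin 3) k) (hu : eval v u ≠ 0)
    (H : u * a - x * h ∈ Ideal.span {f, L - 1}) :
    ∃ (N : ℕ) (U : MvPolynomial (Fin 3) k), U.IsHomogeneous N ∧ eval v U ≠ 0 ∧
      U * a ∈ Ideal.span {h, f} := by
  obtain ⟨N, U, hU, hdU⟩ := pc_homogenize hL u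
  obtain ⟨M, Y, hY, hdY⟩ := pc_homogenize hL x
  refine ⟨_, U * L ^ (M + n), hU.mul (hL.pow _), ?_, ?_⟩
  · obtain ⟨r, hr⟩ := hdU
    have := congrArg (eval v) hr
    simp [hv] at this
    rw [map_mul, map_pow, hv]
    have : eval v U = eval v u := by linear_combination -this
    simpa [this] using hu
  · have e1 : U * a - Y * h ∈ Ideal.span {f, L - 1} := by
      have h1 : u - U ∈ Ideal.span {f, L - 1} :=
        Ideal.mem_of_dvd _ hdU (Ideal.subset_span (by simp))
      have h2 : x - Y ∈ Ideal.span {f, L - 1} :=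
        Ideal.mem_of_dvd _ hdY (Ideal.subset_span (by simp))
      have := Ideal.add_mem _ (Ideal.sub_mem _ H (Ideal.mul_mem_right a _ h1))
        (Ideal.mul_mem_right h _ h2)
      convert this using 1
      ring
    rw [← pcTheta_ker π hπ hf hL0 hL, RingHom.mem_ker] at e1
    have t1 := pcTheta_hom π hL0 hU
    have t2 := pcTheta_hom π hL0 hY
    have t3 := pcTheta_hom π hL0 ha
    have t4 := pcTheta_hom π hL0 hh
    have : π (U * L ^ (M + n) * a - Y * L ^ (N + m) * h) = 0 := by
      simp only [map_sub, map_mul, map_pow] at e1 ⊢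
      rw [← t1, ← t2, ← t3, ← t4]
      linear_combination π L ^ (N + m + M + n) * e1
    rw [hπ] at this
    obtain ⟨z, hz⟩ := this
    rw [Ideal.mem_span_pair]
    exact ⟨Y * L ^ (N + m), z, by linear_combination -hz⟩
end theta

theorem pc_nak {B : Type*} [CommRing B] [IsLocalRing B] [IsNoetherianRing B] (t : B)
    (h : IsLocalRing.maximalIdeal B ≤ Ideal.span {t} ⊔ IsLocalRing.maximalIdeal B ^ 2) :
    IsLocalRing.maximalIdeal B ≤ Ideal.span {t} := by
  rw [pow_two] at h
  exact Submodule.le_of_le_smul_of_le_jacobson_bot (IsNoetherian.noetherian _)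
    (IsLocalRing.maximalIdeal_le_jacobson _) h

theorem pc_val_core {k : Type*} [Field k] (I : Ideal (MvPolynomial (Fin 3) k)) (hI : I.IsPrime)
    (v : Fin 3 → k) (hIv : I ≤ RingHom.ker (eval v)) (t : MvPolynomial (Fin 3) k)
    (htm : t ∈ RingHom.ker (eval v))
    (ht : RingHom.ker (eval v) ≤ Ideal.span {t} ⊔ I ⊔ (RingHom.ker (eval v)) ^ 2)
    (hnot : ¬ RingHom.ker (eval v) ≤ I)
    (m' : Ideal (MvPolynomial (Fin 3) k ⧸ I)) (hpr : m'.IsPrime)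
    (hmd : ∀ g, Ideal.Quotient.mk I g ∈ m' ↔ eval v g = 0)
    (B : Type*) [CommRing B] [Algebra (MvPolynomial (Fin 3) k ⧸ I) B]
    [IsLocalization.AtPrime B m'] [IsLocalRing B] :
    ∃ w : MvPolynomial (Fin 3) k → ℕ∞, (∀ g h, w (g * h) = w g + w h) ∧
      (∀ (n : ℕ) g, (n : ℕ∞) ≤ w g ↔ ∃ h, eval v h ≠ 0 ∧ h * g ∈ I + (RingHom.ker (eval v)) ^ n) ∧
      (∀ g, w g = ⊤ → g ∈ I) ∧
      (∀ a h, h ∉ I → w h ≤ w a → ∃ u x, eval v u ≠ 0 ∧ u * a - x * h ∈ I) := by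
  classical
  set m := RingHom.ker (eval v) with hm
  let A := MvPolynomial (Fin 3) k ⧸ I
  let mk : MvPolynomial (Fin 3) k →+* A := Ideal.Quotient.mk I
  have hsurj : Function.Surjective mk := Ideal.Quotient.mk_surjective
  have hm' : m' = m.map mk := by
    apply le_antisymm
    · intro a ha
      obtain ⟨g, rfl⟩ := hsurj a
      exact Ideal.mem_map_of_mem mk ((hmd g).1 ha)
    · rw [Ideal.map_le_iff_le_comap]
      intro g hg
      exact (hmd g).2 hg
  have : IsDomain A := Ideal.Quotient.isDomain I
  have : IsNoetherianRing B := IsLocalization.isNoetherianRing m'.primeCompl B inferInstance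
  have : IsDomain B := IsLocalization.isDomain_of_le_nonZeroDivisors B m'.primeCompl_le_nonZeroDivisors
  let ι : MvPolynomial (Fin 3) k →+* B := (algebraMap A B).comp mk
  have hinj : Function.Injective (algebraMap A B) :=
    IsLocalization.injective B m'.primeCompl_le_nonZeroDivisors
  have hι0 : ∀ g, ι g = 0 ↔ g ∈ I := by
    intro g
    rw [← Ideal.Quotient.eq_zero_iff_mem]
    constructor
    · intro h; exact hinj (by rw [map_zero]; exact h)
    · intro h; show algebraMap A B (mk g) = 0
      rw [show mk g = 0 from h, map_zero]
  have hmB : IsLocalRing.maximalIdeal B = m.map ι := by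
    have h1 : IsLocalRing.maximalIdeal B = m'.map (algebraMap A B) :=
      (IsLocalization.AtPrime.map_eq_maximalIdeal m' B).symm
    have h2 : m'.map (algebraMap A B) = (m.map mk).map (algebraMap A B) :=
      congrArg (Ideal.map (algebraMap A B)) hm'
    rw [h1, h2, Ideal.map_map]
  have hunit : ∀ g, eval v g ≠ 0 → IsUnit (ι g) := fun g hg =>
    IsLocalization.map_units B (⟨mk g, fun h => hg ((hmd g).1 h)⟩ : m'.primeCompl)
  have hIbot : I.map ι = ⊥ := by
    rw [Ideal.map_eq_bot_iff_le_ker]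
    intro g hg; exact (hι0 g).2 hg
  have hprin : IsLocalRing.maximalIdeal B = Ideal.span {ι t} := by
    apply le_antisymm
    · apply pc_nak
      have := Ideal.map_mono (f := ι) ht
      rw [Ideal.map_sup, Ideal.map_sup, hIbot, Ideal.map_pow, ← hmB, Ideal.map_span,
        Set.image_singleton, sup_bot_eq] at this
      exact this
    · rw [Ideal.span_singleton_le_iff_mem, hmB]
      exact Ideal.mem_map_of_mem ι htm
  have ht0 : ι t ≠ 0 := by
    intro h0
    rw [h0, Ideal.span_singleton_zero] at hprin
    apply hnot
    intro g hg
    rw [← hι0]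
    have : ι g ∈ IsLocalRing.maximalIdeal B := by rw [hmB]; exact Ideal.mem_map_of_mem ι hg
    rw [hprin] at this
    exact this
  have htp : Prime (ι t) := by
    rw [← Ideal.span_singleton_prime ht0, ← hprin]
    infer_instance
  have hkey : ∀ (n : ℕ) g, (ι t) ^ n ∣ ι g ↔
      ∃ h, eval v h ≠ 0 ∧ h * g ∈ I + m ^ n := by
    intro n g
    have e : (ι t) ^ n ∣ ι g ↔ ι g ∈ ((m' ^ n).map (algebraMap A B)) := by
      rw [Ideal.map_pow, IsLocalization.AtPrime.map_eq_maximalIdeal m' B, hprin,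
        Ideal.span_singleton_pow, Ideal.mem_span_singleton]
    rw [e, IsLocalization.mem_map_algebraMap_iff m'.primeCompl]
    constructor
    · rintro ⟨⟨x, s⟩, hx⟩
      obtain ⟨h, hh⟩ := hsurj s
      refine ⟨h, ?_, ?_⟩
      · intro h0
        apply s.2
        rw [← hh]; exact (hmd h).2 h0
      · have h1 : mk (h * g) ∈ (m ^ n).map mk := by
          rw [Ideal.map_pow, ← hm']
          have : mk (h * g) = x := by
            apply hinj
            rw [map_mul, map_mul, hh, mul_comm]
            exact hx
          rw [this]; exact x.2
        rw [Ideal.mem_map_iff_of_surjective mk hsurj] at h1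
        obtain ⟨y, hy, hyg⟩ := h1
        have : h * g - y ∈ I := by
          rw [← Ideal.Quotient.eq]; exact hyg.symm
        have e2 : h * g = (h * g - y) + y := by ring
        rw [e2]
        exact Submodule.add_mem_sup this hy
    · rintro ⟨h, hh, hm2⟩
      refine ⟨⟨⟨mk (h * g), ?_⟩, ⟨mk h, fun h' => hh ((hmd h).1 h')⟩⟩, ?_⟩
      · have : mk (h * g) ∈ (I + m ^ n).map mk := Ideal.mem_map_of_mem mk hm2
        rw [Ideal.add_eq_sup, Ideal.map_sup, Ideal.map_quotient_self, bot_sup_eq, Ideal.map_pow,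
          ← hm'] at this
        exact this
      · show ι g * ι h = ι (h * g)
        rw [map_mul, mul_comm]
  refine ⟨fun g => emultiplicity (ι t) (ι g), ?_, ?_, ?_, ?_⟩
  · intro g h
    simp only [map_mul]
    exact emultiplicity_mul htp
  · intro n g
    rw [← hkey, pow_dvd_iff_le_emultiplicity]
  · intro g hg
    by_contra h
    rw [← hι0] at h
    have := FiniteMultiplicity.of_not_isUnit htp.not_isUnit h
    rw [finiteMultiplicity_iff_emultiplicity_ne_top] at this
    exact this hg
  · intro a h hhI hle
    have h0 : ι h ≠ 0 := fun h' => hhI ((hι0 h).1 h')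
    have hfin := FiniteMultiplicity.of_not_isUnit htp.not_isUnit h0
    obtain ⟨c, hc, hcn⟩ := hfin.exists_eq_pow_mul_and_not_dvd
    have hcu : IsUnit c := by
      by_contra hc'
      have : c ∈ IsLocalRing.maximalIdeal B := hc'
      rw [hprin, Ideal.mem_span_singleton] at this
      exact hcn this
    have hd : (ι t) ^ multiplicity (ι t) (ι h) ∣ ι a := by
      rw [pow_dvd_iff_le_emultiplicity, ← hfin.emultiplicity_eq_multiplicity]
      exact hle
    have hd2 : ι h ∣ ι a := by
      rw [hc]
      exact (hcu.mul_right_dvd).2 hd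
    obtain ⟨y, hy⟩ := hd2
    obtain ⟨⟨x, s⟩, hxs⟩ := IsLocalization.surj m'.primeCompl y
    obtain ⟨x', rfl⟩ := hsurj x
    obtain ⟨s', hs'⟩ := hsurj s
    refine ⟨s', x', ?_, ?_⟩
    · intro h0
      apply s.2
      rw [← hs']; exact (hmd s').2 h0
    · rw [← hι0, map_sub, map_mul, map_mul, hy]
      have h1 : y * ι s' = ι x' := by
        show y * algebraMap A B (mk s') = _
        rw [hs']; exact hxs
      rw [← h1]; ring

theorem pc_val {k : Type*} [Field k] (I : Ideal (MvPolynomial (Fin 3) k)) (hI : I.IsPrime)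
    (v : Fin 3 → k) (hIv : I ≤ RingHom.ker (eval v)) (t : MvPolynomial (Fin 3) k)
    (htm : t ∈ RingHom.ker (eval v))
    (ht : RingHom.ker (eval v) ≤ Ideal.span {t} ⊔ I ⊔ (RingHom.ker (eval v)) ^ 2)
    (hnot : ¬ RingHom.ker (eval v) ≤ I) :
    ∃ w : MvPolynomial (Fin 3) k → ℕ∞, (∀ g h, w (g * h) = w g + w h) ∧
      (∀ (n : ℕ) g, (n : ℕ∞) ≤ w g ↔ ∃ h, eval v h ≠ 0 ∧ h * g ∈ I + (RingHom.ker (eval v)) ^ n) ∧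
      (∀ g, w g = ⊤ → g ∈ I) ∧
      (∀ a h, h ∉ I → w h ≤ w a → ∃ u x, eval v u ≠ 0 ∧ u * a - x * h ∈ I) := by
  let ev : MvPolynomial (Fin 3) k ⧸ I →+* k := Ideal.Quotient.lift I (eval v) (fun a ha => hIv ha)
  have : (RingHom.ker ev).IsPrime := RingHom.ker_isPrime ev
  exact pc_val_core I hI v hIv t htm ht hnot (RingHom.ker ev) this (fun g => Iff.rfl)
    (Localization.AtPrime (RingHom.ker ev))

theorem pc_slice {k : Type*} [Field k] {v : Fin 3 → k} (hv : v ≠ 0) :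
    ∃ j, v j ≠ 0 ∧ slicePoly v = C (v j)⁻¹ * X j - 1 := by
  have h : ∃ i, v i ≠ 0 := by
    by_contra h; push Not at h; exact hv (funext h)
  exact ⟨h.choose, h.choose_spec, by rw [slicePoly, dif_pos h]⟩

section
variable {k : Type*} [Field k] {F : Type*} [Field F] [Algebra k F]
  {f : MvPolynomial (Fin 3) k} {d : ℕ}

theorem pc_prime (π : MvPolynomial (Fin 3) k →ₐ[k] F) (hπ : ∀ q, π q = 0 ↔ f ∣ q)
    (hf0 : f ≠ 0) : Prime f := by
  refine ⟨hf0, fun hu => ?_, fun a b h => ?_⟩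
  · have := (hπ 1).2 hu.dvd
    simp at this
  · rw [← hπ, map_mul, mul_eq_zero, hπ, hπ] at h
    exact h

/-- The cotangent space at a smooth point is generated by one element. -/
theorem pc_cotangent (hf : f.IsHomogeneous d) (v : Fin 3 → k) (hfv : eval v f = 0)
    (hsm : (∀ i : Fin 3, eval v (pderiv i f) = 0) → v = 0) (hv : v ≠ 0) (j : Fin 3)
    (hj : v j ≠ 0) :
    ∃ t ∈ RingHom.ker (eval v), RingHom.ker (eval v) ≤
      Ideal.span {t} ⊔ Ideal.span {f, C (v j)⁻¹ * X j - 1} ⊔ (RingHom.ker (eval v)) ^ 2 := by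
  have eul : ∑ i, v i * eval v (pderiv i f) = 0 := by
    have := congrArg (eval v) hf.sum_X_mul_pderiv
    simpa [hfv] using this
  obtain ⟨i, hij, hi⟩ : ∃ i, i ≠ j ∧ eval v (pderiv i f) ≠ 0 := by
    by_contra h
    push Not at h
    rw [Finset.sum_eq_single j (fun b _ hb => by rw [h b hb, mul_zero]) (by simp)] at eul
    refine hv (hsm fun a => ?_)
    by_cases ha : a = j
    · subst ha; exact (mul_eq_zero.1 eul).resolve_left hj
    · exact h a ha
  obtain ⟨l, hl⟩ : ∃ l : Fin 3, ∀ a, a = j ∨ a = i ∨ a = l := by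
    have : ∀ i j : Fin 3, i ≠ j → ∃ l : Fin 3, ∀ a, a = j ∨ a = i ∨ a = l := by decide
    exact this i j hij
  refine ⟨X l - C (v l), by simp [RingHom.mem_ker], ?_⟩
  set T := Ideal.span {X l - C (v l)} ⊔ Ideal.span {f, C (v j)⁻¹ * X j - 1} ⊔
    (RingHom.ker (eval v)) ^ 2 with hT
  have hm2 : (RingHom.ker (eval v)) ^ 2 ≤ T := le_sup_right
  have hI : Ideal.span {f, C (v j)⁻¹ * X j - 1} ≤ T := le_sup_right.trans le_sup_left
  have ht : Ideal.span {X l - C (v l)} ≤ T := le_sup_left.trans le_sup_left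
  have hXl : X l - C (v l) ∈ T := ht (Ideal.subset_span rfl)
  have hXj : X j - C (v j) ∈ T := by
    have h1 : C (v j)⁻¹ * X j - 1 ∈ T := hI (Ideal.subset_span (by simp))
    have h2 := Ideal.mul_mem_left T (C (v j)) h1
    convert h2 using 1
    rw [mul_sub, ← mul_assoc, ← C_mul, mul_inv_cancel₀ hj]
    simp
  have hXi : X i - C (v i) ∈ T := by
    have h1 := hm2 (pc_taylor v f)
    have hfT : f ∈ T := hI (Ideal.subset_span (by simp))
    rw [hfv, C_0, sub_zero] at h1
    have h2 : ∑ a, C (eval v (pderiv a f)) * (X a - C (v a)) ∈ T := by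
      have := Ideal.sub_mem _ hfT h1
      simpa using this
    rw [← Finset.add_sum_erase _ _ (Finset.mem_univ i)] at h2
    have h3 : ∑ a ∈ Finset.univ.erase i, C (eval v (pderiv a f)) * (X a - C (v a)) ∈ T := by
      refine Ideal.sum_mem _ fun a ha => Ideal.mul_mem_left _ _ ?_
      rcases hl a with rfl | rfl | rfl
      · exact hXj
      · simp at ha
      · exact hXl
    have h4 := (Ideal.add_mem_iff_left _ h3).1 h2
    have h5 := Ideal.mul_mem_left T (C (eval v (pderiv i f))⁻¹) h4
    rwa [← mul_assoc, ← C_mul, inv_mul_cancel₀ hi, C_1, one_mul] at h5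
  intro g hg
  have h1 := hm2 (pc_taylor v g)
  have hg' : eval v g = 0 := hg
  rw [hg', C_0, sub_zero] at h1
  have h2 : ∑ a, C (eval v (pderiv a g)) * (X a - C (v a)) ∈ T := by
    refine Ideal.sum_mem _ fun a _ => Ideal.mul_mem_left _ _ ?_
    rcases hl a with rfl | rfl | rfl
    · exact hXj
    · exact hXi
    · exact hXl
  have := Ideal.add_mem _ h1 h2
  simpa using this

theorem pc_ord (hd : 2 ≤ d) (hf : f.IsHomogeneous d) (hf0 : f ≠ 0)
    (hsm : ∀ v : Fin 3 → k, eval v f = 0 → (∀ i : Fin 3, eval v (pderiv i f) = 0) → v = 0)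
    (π : MvPolynomial (Fin 3) k →ₐ[k] F) (hπ : ∀ q, π q = 0 ↔ f ∣ q) (p : PlanePoint f) :
    ∃ w : MvPolynomial (Fin 3) k → ℕ∞, (∀ g h, w (g * h) = w g + w h) ∧
      (∀ (n : ℕ) g, (n : ℕ∞) ≤ w g ↔ ∃ h, eval p.1.rep h ≠ 0 ∧
        h * g ∈ Ideal.span {f, slicePoly p.1.rep} + (RingHom.ker (eval p.1.rep)) ^ n) ∧
      (∀ (n : ℕ) g, g.IsHomogeneous n → ¬ f ∣ g → w g ≠ ⊤ ∧ (ordAt f p g : ℕ∞) = w g) ∧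
      (∀ (m n : ℕ) a h, a.IsHomogeneous m → h.IsHomogeneous n → ¬ f ∣ h → w h ≤ w a →
        ∃ (N : ℕ) (U : MvPolynomial (Fin 3) k), U.IsHomogeneous N ∧ eval p.1.rep U ≠ 0 ∧
          U * a ∈ Ideal.span {h, f}) := by
  have hv := p.1.rep_nonzero
  have hfv : eval p.1.rep f = 0 := p.2
  have hO : ∀ g, ordAt f p g = sSup { n : ℕ | ∃ h : MvPolynomial (Fin 3) k,
    eval p.1.rep h ≠ 0 ∧ h * g ∈ Ideal.span {f, slicePoly p.1.rep} +
      (RingHom.ker (eval p.1.rep)) ^ n } := fun g => rfl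
  obtain ⟨j, hj, hs⟩ := pc_slice hv
  set v := p.1.rep with hvdef
  set L : MvPolynomial (Fin 3) k := C (v j)⁻¹ * X j with hL
  rw [hs]
  simp_rw [hs] at hO
  have hLh : L.IsHomogeneous 1 := by
    have := (isHomogeneous_C (Fin 3) (v j)⁻¹).mul (isHomogeneous_X k j)
    simpa using this
  have hLv : eval v L = 1 := by simp [hL, hj]
  have hL0 : π L ≠ 0 := by
    rw [Ne, hπ]
    intro h
    have := pc_dvd_deg hf hf0 hLh (by omega) h
    rw [this] at hLv; simp at hLv
  have hker := pcTheta_ker π hπ hf hL0 hLh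
  have hIp : (Ideal.span {f, L - 1}).IsPrime := by
    rw [← hker]; exact RingHom.ker_isPrime _
  have hIv : Ideal.span {f, L - 1} ≤ RingHom.ker (eval v) := by
    rw [Ideal.span_le]
    rintro x (rfl | rfl)
    · exact hfv
    · simp [RingHom.mem_ker, hLv]
  obtain ⟨t, ht, hcot⟩ := pc_cotangent hf v hfv (hsm v hfv) hv j hj
  have hnot : ¬ RingHom.ker (eval v) ≤ Ideal.span {f, L - 1} := by
    intro hle
    obtain ⟨i, hi⟩ : ∃ i : Fin 3, i ≠ j := exists_ne j
    have h1 : (X i - C (v i) * L) ∈ RingHom.ker (eval v) := by simp [RingHom.mem_ker, hLv]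
    have hh : (X i - C (v i) * L).IsHomogeneous 1 := by
      refine (isHomogeneous_X k i).sub ?_
      exact hLh.C_mul _
    have h2 := pc_dvd_deg hf hf0 hh (by omega) (pc_hom_mem π hπ hf hL0 hLh hh (hle h1))
    have h3 := congrArg (eval (Pi.single i (1:k))) h2
    simp [hL, hi.symm] at h3
  obtain ⟨w, hw1, hw2, hw3, hw4⟩ := pc_val _ hIp v hIv t ht hcot hnot
  refine ⟨w, hw1, hw2, ?_, ?_⟩
  · intro n g hg hfg
    have htop : w g ≠ ⊤ := fun h => hfg (pc_hom_mem π hπ hf hL0 hLh hg (hw3 g h))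
    refine ⟨htop, ?_⟩
    rw [hO]
    obtain ⟨N, hN⟩ := ENat.ne_top_iff_exists.1 htop
    have : { n : ℕ | ∃ h : MvPolynomial (Fin 3) k, eval v h ≠ 0 ∧
        h * g ∈ Ideal.span {f, L - 1} + (RingHom.ker (eval v)) ^ n } = Set.Iic N := by
      ext n
      rw [Set.mem_ofPred_eq, ← hw2, ← hN, Set.mem_Iic, Nat.cast_le]
    rw [this, csSup_Iic, hN]
  · intro m n a h ha hh hfh hle
    obtain ⟨u, x, hu, hx⟩ := hw4 a h (fun h' => hfh (pc_hom_mem π hπ hf hL0 hLh hh h')) hle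
    exact pc_globalize π hπ hf hL0 hLh v hLv ha hh u x hu hx
end

/-- Valuation package on the curve. -/
structure PCVal {k : Type*} [Field k] (f : MvPolynomial (Fin 3) k)
    (w : PlanePoint f → MvPolynomial (Fin 3) k → ℕ∞) : Prop where
  mul : ∀ p g h, w p (g * h) = w p g + w p h
  le_iff : ∀ p (n : ℕ) g, (n : ℕ∞) ≤ w p g ↔ ∃ h, eval p.1.rep h ≠ 0 ∧
        h * g ∈ Ideal.span {f, slicePoly p.1.rep} + (RingHom.ker (eval p.1.rep)) ^ n
  ord : ∀ p (n : ℕ) g, g.IsHomogeneous n → ¬ f ∣ g → w p g ≠ ⊤ ∧ (ordAt f p g : ℕ∞) = w p g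
  glob : ∀ p (m n : ℕ) a h, a.IsHomogeneous m → h.IsHomogeneous n → ¬ f ∣ h → w p h ≤ w p a →
        ∃ (N : ℕ) (U : MvPolynomial (Fin 3) k), U.IsHomogeneous N ∧ eval p.1.rep U ≠ 0 ∧
          U * a ∈ Ideal.span {h, f}

theorem pc_exists_val {k : Type*} [Field k] {F : Type*} [Field F] [Algebra k F]
    {f : MvPolynomial (Fin 3) k} {d : ℕ} (hd : 2 ≤ d) (hf : f.IsHomogeneous d) (hf0 : f ≠ 0)
    (hsm : ∀ v : Fin 3 → k, eval v f = 0 → (∀ i : Fin 3, eval v (pderiv i f) = 0) → v = 0)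
    (π : MvPolynomial (Fin 3) k →ₐ[k] F) (hπ : ∀ q, π q = 0 ↔ f ∣ q) :
    ∃ w, PCVal f w := by
  choose w h1 h2 h3 h4 using fun p : PlanePoint f => pc_ord hd hf hf0 hsm π hπ p
  exact ⟨w, h1, h2, h3, h4⟩

theorem pc_noether {k : Type*} [Field k] [IsAlgClosed k]
    {f : MvPolynomial (Fin 3) k} {d : ℕ} (hd : 2 ≤ d) (hf : f.IsHomogeneous d) (hp : Prime f)
    {w : PlanePoint f → MvPolynomial (Fin 3) k → ℕ∞} (hw : PCVal f w)
    {n e : ℕ} {a h : MvPolynomial (Fin 3) k} (ha : a.IsHomogeneous (n + e))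
    (hh : h.IsHomogeneous e) (hfh : ¬ f ∣ h) (hle : ∀ p, w p h ≤ w p a) :
    ∃ G : MvPolynomial (Fin 3) k, G.IsHomogeneous n ∧ f ∣ a - G * h := by
  refine pc_span_hom hf hh ha ?_
  let J : Ideal (MvPolynomial (Fin 3) k) := (Ideal.span {h, f}).colon (Ideal.span {a})
  have hJ : ∀ u, u ∈ J ↔ u * a ∈ Ideal.span {h, f} := by
    intro u
    rw [Ideal.mem_colon_span_singleton]
  have hz : ∀ x ∈ zeroLocus k J, x = 0 := by
    intro x hx
    rw [mem_zeroLocus_iff] at hx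
    by_contra hx0
    have hfx : eval x f = 0 := by
      have := hx f ((hJ f).2 (Ideal.mul_mem_right _ _ (Ideal.subset_span (by simp))))
      rwa [aeval_eq_eval] at this
    obtain ⟨c, hc⟩ := Projectivization.exists_smul_eq_mk_rep k x hx0
    have hc' : (Projectivization.mk k x hx0).rep = (c : k) • x := hc.symm
    let p : PlanePoint f := ⟨Projectivization.mk k x hx0, by
      rw [hc', pc_hom_eval hf, hfx, mul_zero]⟩
    obtain ⟨N, U, hU, hU0, hUa⟩ := hw.glob p _ _ a h ha hh hfh (hle p)
    have h1 := hx U ((hJ U).2 hUa)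
    rw [aeval_eq_eval] at h1
    apply hU0
    show eval (Projectivization.mk k x hx0).rep U = 0
    rw [hc', pc_hom_eval hU]
    exact mul_eq_zero_of_right _ h1
  have hX : ∀ i : Fin 3, ∃ N : ℕ, X i ^ N ∈ J := by
    intro i
    have : (X i : MvPolynomial (Fin 3) k) ∈ J.radical := by
      rw [← vanishingIdeal_zeroLocus_eq_radical (K := k), mem_vanishingIdeal_iff]
      intro x hx
      rw [hz x hx]; simp
    exact this
  choose N hN using hX
  refine pc_saturated f h a hp (fun hd' => ?_) hfh (N 0 + N 1 + N 2) fun i => ?_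
  · exact (X_ne_zero (R := k) (0 : Fin 3))
      (pc_dvd_deg hf hp.ne_zero (isHomogeneous_X k 0) (by omega) hd')
  · rw [← hJ]
    refine J.pow_mem_of_pow_mem (hN i) ?_
    fin_cases i <;> simp <;> omega

/-- The linear form with given coefficients. -/
noncomputable def pcLin {k : Type*} [Field k] (c : Fin 3 → k) : MvPolynomial (Fin 3) k :=
  ∑ i, C (c i) * X i

theorem pcLin_hom {k : Type*} [Field k] (c : Fin 3 → k) : (pcLin c).IsHomogeneous 1 := by
  refine IsHomogeneous.sum _ _ _ fun i _ => ?_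
  simpa using (isHomogeneous_C (Fin 3) (c i)).mul (isHomogeneous_X k i)

theorem pcLin_eval {k : Type*} [Field k] (c v : Fin 3 → k) :
    eval v (pcLin c) = ∑ i, c i * v i := by
  simp [pcLin]

theorem pcLin_pderiv {k : Type*} [Field k] (c : Fin 3 → k) (i : Fin 3) :
    pderiv i (pcLin c) = C (c i) := by
  simp [pcLin, pderiv_X, Pi.single_apply]

theorem pcLin_surj {k : Type*} [Field k] {l : MvPolynomial (Fin 3) k} (hl : l.IsHomogeneous 1) :
    ∃ c, l = pcLin c := by
  have h : l ∈ homogeneousSubmodule (Fin 3) k 1 := hl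
  rw [homogeneousSubmodule_one_eq_span_X] at h
  obtain ⟨c, hc⟩ := (Submodule.mem_span_range_iff_exists_fun k).1 h
  exact ⟨c, by rw [← hc, pcLin]; simp [smul_eq_C_mul]⟩

theorem pcLin_zero {k : Type*} [Field k] : pcLin (0 : Fin 3 → k) = 0 := by
  simp [pcLin]

theorem pcLin_inj {k : Type*} [Field k] {c c' : Fin 3 → k} (h : pcLin c = pcLin c') : c = c' := by
  funext i
  have := congrArg (fun q => eval 0 (pderiv i q)) h
  simpa [pcLin_pderiv] using this

theorem pc_lin_dvd {k : Type*} [Field k] [Infinite k] {l G : MvPolynomial (Fin 3) k}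
    (hl : l.IsHomogeneous 1) (hl0 : l ≠ 0) (h : ∀ x, eval x l = 0 → eval x G = 0) : l ∣ G := by
  obtain ⟨c, rfl⟩ := pcLin_surj hl
  have : ∃ j, c j ≠ 0 := by
    by_contra hc
    push Not at hc
    exact hl0 (by rw [show c = 0 from funext hc, pcLin_zero])
  obtain ⟨j, hj⟩ := this
  let s : Fin 3 → MvPolynomial (Fin 3) k := fun i =>
    if i = j then X j - C (c j)⁻¹ * pcLin c else X i
  have h1 : aeval s G = 0 := by
    apply MvPolynomial.funext
    intro x
    rw [map_zero]
    have : eval x (aeval s G) = eval (fun i => eval x (s i)) G := by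
      rw [← aeval_eq_eval, ← aeval_eq_eval]
      change (aeval x) (aeval s G) = _
      rw [← AlgHom.comp_apply, comp_aeval]
    rw [this]
    apply h
    rw [pcLin_eval, Finset.sum_eq_add_sum_sdiff_singleton_of_mem (Finset.mem_univ j)]
    have e : ∑ i ∈ Finset.univ \ {j}, c i * eval x (s i) = ∑ i ∈ Finset.univ \ {j}, c i * x i := by
      refine Finset.sum_congr rfl fun i hi => ?_
      have : i ≠ j := by simpa using hi
      simp [s, this]
    rw [e]
    have e2 := pcLin_eval c x
    rw [Finset.sum_eq_add_sum_sdiff_singleton_of_mem (Finset.mem_univ j)] at e2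
    simp only [s, if_true, map_sub, eval_X, map_mul, eval_C]
    rw [mul_sub, ← mul_assoc, mul_inv_cancel₀ hj, e2]
    ring
  have h2 : Ideal.Quotient.mkₐ k (Ideal.span {pcLin c}) G =
      Ideal.Quotient.mkₐ k (Ideal.span {pcLin c}) (aeval s G) := by
    rw [← AlgHom.comp_apply]
    congr 1
    apply MvPolynomial.algHom_ext
    intro i
    simp only [AlgHom.comp_apply, aeval_X, s]
    split_ifs with hi
    · subst hi
      rw [map_sub, map_mul]
      have : Ideal.Quotient.mkₐ k (Ideal.span {pcLin c}) (pcLin c) = 0 :=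
        Ideal.Quotient.eq_zero_iff_mem.2 (Ideal.mem_span_singleton_self _)
      rw [this]; simp
    · rfl
  rw [h1, map_zero] at h2
  exact Ideal.mem_span_singleton.1 (Ideal.Quotient.eq_zero_iff_mem.1 h2)

theorem pc_coords {k : Type*} [Field k] {l : MvPolynomial (Fin 3) k}
    (hl : l.IsHomogeneous 1) (hl0 : l ≠ 0) {w1 : Fin 3 → k} (hw1 : w1 ≠ 0) (hlw : eval w1 l = 0) :
    ∃ (w0 : Fin 3 → k) (a b : MvPolynomial (Fin 3) k), eval w0 l = 0 ∧ a.IsHomogeneous 1 ∧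
      b.IsHomogeneous 1 ∧ eval w0 a = 1 ∧ eval w1 a = 0 ∧ eval w0 b = 0 ∧ eval w1 b = 1 ∧
      ∀ x, eval x l = 0 → x = eval x a • w0 + eval x b • w1 := by
  obtain ⟨c, rfl⟩ := pcLin_surj hl
  have : ∃ j, c j ≠ 0 := by
    by_contra hc
    push Not at hc
    exact hl0 (by rw [show c = 0 from funext hc, pcLin_zero])
  obtain ⟨j, hj⟩ := this
  let φ : (Fin 3 → k) →ₗ[k] k := ∑ i, c i • LinearMap.proj i
  have hφ : ∀ x, φ x = eval x (pcLin c) := by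
    intro x; simp [φ, pcLin_eval]
  let w2 : Fin 3 → k := Pi.single j 1
  have hw2 : φ w2 ≠ 0 := by
    simpa [φ, w2, Pi.single_apply] using hj
  have hsurj : LinearMap.range φ = ⊤ := by
    rw [LinearMap.range_eq_top]
    exact LinearMap.surjective (fun h => hw2 (by rw [h]; rfl))
  have hrk := LinearMap.finrank_range_add_finrank_ker φ
  rw [hsurj] at hrk
  simp at hrk
  have : ∃ w0 ∈ LinearMap.ker φ, w0 ∉ Submodule.span k {w1} := by
    by_contra hcon
    push Not at hcon
    have hle : LinearMap.ker φ ≤ Submodule.span k {w1} := hcon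
    have := Submodule.finrank_mono hle
    rw [finrank_span_singleton hw1] at this
    omega
  obtain ⟨w0, hw0, hw0'⟩ := this
  have hli : LinearIndependent k ![w0, w1, w2] := by
    rw [Fintype.linearIndependent_iff]
    intro g hg
    rw [Fin.sum_univ_three] at hg
    simp only [Matrix.cons_val] at hg
    have h2 : g 2 = 0 := by
      have := congrArg φ hg
      rw [map_add, map_add, map_smul, map_smul, map_smul, LinearMap.mem_ker.1 hw0, hφ w1, hlw] at this
      simpa [hw2] using this
    have h0 : g 0 = 0 := by
      by_contra h0
      apply hw0'
      rw [Submodule.mem_span_singleton]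
      refine ⟨-(g 0)⁻¹ * g 1, ?_⟩
      rw [h2, zero_smul, add_zero] at hg
      have : g 1 • w1 = - (g 0 • w0) := by
        rw [eq_neg_iff_add_eq_zero, add_comm]; exact hg
      rw [mul_smul, this, smul_neg, neg_smul, neg_neg, smul_smul, inv_mul_cancel₀ h0, one_smul]
    have h1 : g 1 = 0 := by
      rw [h2, h0] at hg
      simpa [hw1] using hg
    intro i; fin_cases i
    exacts [h0, h1, h2]
  let B := basisOfLinearIndependentOfCardEqFinrank hli (by simp)
  have hB : ∀ i, B i = ![w0, w1, w2] i := fun i => by simp [B]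
  have hB0 : B 0 = w0 := hB 0
  have hB1 : B 1 = w1 := hB 1
  have hB2 : B 2 = w2 := hB 2
  let q : Fin 3 → MvPolynomial (Fin 3) k := fun n => pcLin (fun i => B.coord n (Pi.single i 1))
  have hq : ∀ n x, eval x (q n) = B.coord n x := by
    intro n x
    rw [pcLin_eval, LinearMap.pi_apply_eq_sum_univ (B.coord n) x]
    refine Finset.sum_congr rfl fun i _ => ?_
    rw [smul_eq_mul, mul_comm]
    congr 2
    funext t
    simp [Pi.single_apply, eq_comm]
  refine ⟨w0, q 0, q 1, ?_, pcLin_hom _, pcLin_hom _, ?_, ?_, ?_, ?_, ?_⟩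
  · rw [← hφ]; exact hw0
  · rw [hq, ← hB0]; simp
  · rw [hq, ← hB1]; simp
  · rw [hq, ← hB0]; simp
  · rw [hq, ← hB1]; simp
  · intro x hx
    have h := B.sum_repr x
    rw [Fin.sum_univ_three, hB0, hB1, hB2] at h
    have h2 : B.repr x 2 = 0 := by
      have := congrArg φ h
      rw [map_add, map_add, map_smul, map_smul, map_smul, LinearMap.mem_ker.1 hw0, hφ w1, hlw,
        hφ x, hx] at this
      simpa [hw2] using this
    rw [h2, zero_smul, add_zero] at h
    rw [hq, hq]
    exact h.symm

/-- Restriction to the parametrized line. -/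
noncomputable def pcRestr {k : Type*} [Field k] (w0 w1 : Fin 3 → k) :
    MvPolynomial (Fin 3) k →ₐ[k] Polynomial k :=
  aeval (fun i => Polynomial.C (w0 i) + Polynomial.C (w1 i) * Polynomial.X)

theorem pcRestr_eval {k : Type*} [Field k] (w0 w1 : Fin 3 → k) (g : MvPolynomial (Fin 3) k)
    (t : k) : (pcRestr w0 w1 g).eval t = eval (w0 + t • w1) g := by
  have : (Polynomial.aeval t).comp (pcRestr w0 w1) = aeval (w0 + t • w1) := by
    apply MvPolynomial.algHom_ext
    intro i
    simp [pcRestr]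
    ring
  have h := DFunLike.congr_fun this g
  rw [AlgHom.comp_apply, aeval_eq_eval] at h
  simpa [Polynomial.aeval_def, Polynomial.eval₂_eq_eval_map] using h

theorem pcRestr_deg {k : Type*} [Field k] (w0 w1 : Fin 3 → k) {g : MvPolynomial (Fin 3) k} {n : ℕ}
    (hg : g.IsHomogeneous n) : (pcRestr w0 w1 g).natDegree ≤ n ∧
      (pcRestr w0 w1 g).coeff n = eval w1 g := by
  have key : ∀ m : Fin 3 →₀ ℕ, m ∈ g.support →
      (∏ i, (Polynomial.C (w0 i) + Polynomial.C (w1 i) * Polynomial.X) ^ m i).natDegree ≤ n ∧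
      (∏ i, (Polynomial.C (w0 i) + Polynomial.C (w1 i) * Polynomial.X) ^ m i).coeff n =
        ∏ i, w1 i ^ m i := by
    intro m hm
    have hmn : m.degree = n := by
      by_contra h
      exact (mem_support_iff.1 hm) (hg.coeff_eq_zero h)
    have hmn' : m 0 + m 1 + m 2 = n := by
      rw [← hmn, Finsupp.degree_eq_sum, Fin.sum_univ_three]
    have h1 : ∀ i, (Polynomial.C (w0 i) + Polynomial.C (w1 i) * Polynomial.X).natDegree ≤ 1 := by
      intro i; rw [add_comm]; exact Polynomial.natDegree_linear_le
    have h2 : ∀ i, ((Polynomial.C (w0 i) + Polynomial.C (w1 i) * Polynomial.X) ^ m i).natDegree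
        ≤ m i := by
      intro i
      simpa using Polynomial.natDegree_pow_le_of_le (m i) (h1 i)
    have h3 : ∀ i, ((Polynomial.C (w0 i) + Polynomial.C (w1 i) * Polynomial.X) ^ m i).coeff (m i)
        = w1 i ^ m i := by
      intro i
      have := Polynomial.coeff_pow_of_natDegree_le (m := m i) (h1 i)
      simpa [Polynomial.coeff_C] using this
    have h4 := Polynomial.natDegree_mul_le_of_le (h2 0) (h2 1)
    have h5 := Polynomial.natDegree_mul_le_of_le h4 (h2 2)
    rw [Fin.prod_univ_three, Fin.prod_univ_three, ← hmn']
    refine ⟨h5, ?_⟩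
    rw [Polynomial.coeff_mul_add_eq_of_natDegree_le h4 (h2 2),
      Polynomial.coeff_mul_add_eq_of_natDegree_le (h2 0) (h2 1), h3, h3, h3]
  have e : pcRestr w0 w1 g = ∑ m ∈ g.support, Polynomial.C (coeff m g) *
      ∏ i, (Polynomial.C (w0 i) + Polynomial.C (w1 i) * Polynomial.X) ^ m i := by
    rw [pcRestr, aeval_def, eval₂_eq']
    rfl
  constructor
  · rw [e]
    refine Polynomial.natDegree_sum_le_of_forall_le _ _ fun m hm => ?_
    exact (Polynomial.natDegree_C_mul_le _ _).trans (key m hm).1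
  · rw [e, Polynomial.finsetSum_coeff, eval_eq']
    refine Finset.sum_congr rfl fun m hm => ?_
    rw [Polynomial.coeff_C_mul, (key m hm).2]

theorem pcRestr_dvd {k : Type*} [Field k] [Infinite k] {l a b G : MvPolynomial (Fin 3) k} {e : ℕ}
    (hl : l.IsHomogeneous 1) (hl0 : l ≠ 0) {w0 w1 : Fin 3 → k}
    (hx : ∀ x, eval x l = 0 → x = eval x a • w0 + eval x b • w1)
    (hG : G.IsHomogeneous e) (h : pcRestr w0 w1 G = 0) : l ∣ G := by
  refine pc_lin_dvd hl hl0 fun x hxl => ?_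
  rw [hx x hxl]
  by_cases ha : eval x a = 0
  · rw [ha, zero_smul, zero_add, pc_hom_eval hG, ← (pcRestr_deg w0 w1 hG).2, h]
    simp
  · have : eval x a • w0 + eval x b • w1 = eval x a • (w0 + (eval x b / eval x a) • w1) := by
      rw [smul_add, smul_smul, mul_div_cancel₀ _ ha]
    rw [this, pc_hom_eval hG, ← pcRestr_eval, h]
    simp

theorem pcRestr_lin {k : Type*} [Field k] {a : MvPolynomial (Fin 3) k}
    (ha : a.IsHomogeneous 1) (w0 w1 : Fin 3 → k) :
    pcRestr w0 w1 a = Polynomial.C (eval w0 a) + Polynomial.C (eval w1 a) * Polynomial.X := by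
  obtain ⟨c, rfl⟩ := pcLin_surj ha
  rw [pcLin_eval, pcLin_eval, pcLin, map_sum, map_sum, map_sum, Finset.sum_mul,
    ← Finset.sum_add_distrib]
  refine Finset.sum_congr rfl fun i _ => ?_
  rw [map_mul, ← algebraMap_eq, AlgHom.commutes]
  simp [pcRestr, Polynomial.algebraMap_eq]
  ring

theorem pc_split {k : Type*} [Field k] [IsAlgClosed k] {l a b f : MvPolynomial (Fin 3) k} {d : ℕ}
    (hl : l.IsHomogeneous 1) (hl0 : l ≠ 0) {w0 w1 : Fin 3 → k}
    (ha : a.IsHomogeneous 1) (hb : b.IsHomogeneous 1)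
    (ha0 : eval w0 a = 1) (ha1 : eval w1 a = 0) (hb0 : eval w0 b = 0) (hb1 : eval w1 b = 1)
    (hx : ∀ x, eval x l = 0 → x = eval x a • w0 + eval x b • w1)
    (hf : f.IsHomogeneous d) (hfw : eval w1 f ≠ 0) :
    Multiset.card (pcRestr w0 w1 f).roots = d ∧ ∃ H,
      f = C (eval w1 f) * ((pcRestr w0 w1 f).roots.map (fun t => b - C t * a)).prod + l * H := by
  obtain ⟨h1, h2⟩ := pcRestr_deg w0 w1 hf
  have hdeg : (pcRestr w0 w1 f).natDegree = d :=
    le_antisymm h1 (Polynomial.le_natDegree_of_ne_zero (by rwa [h2]))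
  have hs : (pcRestr w0 w1 f).Splits := IsAlgClosed.splits _
  have hcard : Multiset.card (pcRestr w0 w1 f).roots = d := by
    rw [← hs.natDegree_eq_card_roots, hdeg]
  refine ⟨hcard, ?_⟩
  have hlead : (pcRestr w0 w1 f).leadingCoeff = eval w1 f := by
    rw [Polynomial.leadingCoeff, hdeg, h2]
  have hmap : pcRestr w0 w1 ((pcRestr w0 w1 f).roots.map (fun t => b - C t * a)).prod =
      ((pcRestr w0 w1 f).roots.map (fun t => Polynomial.X - Polynomial.C t)).prod := by
    rw [map_multiset_prod, Multiset.map_map]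
    congr 1
    refine Multiset.map_congr rfl fun t _ => ?_
    have hC : pcRestr w0 w1 (C t) = Polynomial.C t := by
      rw [← algebraMap_eq, AlgHom.commutes]; rfl
    simp [pcRestr_lin ha, pcRestr_lin hb, ha0, ha1, hb0, hb1, hC]
  have hhom : ∀ T : Multiset k, (T.map (fun t => b - C t * a)).prod.IsHomogeneous (Multiset.card T) := by
    intro T
    induction T using Multiset.induction with
    | empty => simpa using isHomogeneous_one (Fin 3) k
    | cons t T ih =>
      rw [Multiset.map_cons, Multiset.prod_cons, Multiset.card_cons, add_comm]
      refine IsHomogeneous.mul (hb.sub ?_) ih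
      simpa using (isHomogeneous_C (Fin 3) t).mul ha
  have hh : (f - C (eval w1 f) *
      ((pcRestr w0 w1 f).roots.map (fun t => b - C t * a)).prod).IsHomogeneous d := by
    refine hf.sub ?_
    have := (isHomogeneous_C (Fin 3) (eval w1 f)).mul (hhom (pcRestr w0 w1 f).roots)
    rwa [hcard, zero_add] at this
  have := pcRestr_dvd hl hl0 hx hh (by
    have hC : pcRestr w0 w1 (C (eval w1 f)) = Polynomial.C (eval w1 f) := by
      rw [← algebraMap_eq, AlgHom.commutes]; rfl
    rw [map_sub, map_mul, hmap, hC, ← hlead, ← hs.eq_prod_roots, sub_self])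
  obtain ⟨H, hH⟩ := this
  exact ⟨H, by rw [← hH]; ring⟩

theorem pc_psi {k : Type*} [Field k] {w0 w1 v : Fin 3 → k} {A t : k} (hA : A ≠ 0) (hv0 : v ≠ 0)
    (hv : v = A • (w0 + t • w1)) (j : ℕ) :
    ∃ (Ψ : MvPolynomial (Fin 3) k →ₐ[k] Polynomial k) (u : Polynomial k), u.eval t ≠ 0 ∧
      (∀ n g, g.IsHomogeneous n → Ψ g = u ^ n * pcRestr w0 w1 g) ∧
      (Polynomial.X - Polynomial.C t) ^ j ∣ Ψ (slicePoly v) ∧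
      (∀ g, (Ψ g).eval t = eval v g) := by
  obtain ⟨i, hi, hs⟩ := pc_slice hv0
  have hL : (C (v i)⁻¹ * X i : MvPolynomial (Fin 3) k).IsHomogeneous 1 := by
    simpa using (isHomogeneous_C (Fin 3) (v i)⁻¹).mul (isHomogeneous_X k i)
  set κ := pcRestr w0 w1 (C (v i)⁻¹ * X i) with hκ
  have h1 : A * κ.eval t = 1 := by
    have h2 : eval v (C (v i)⁻¹ * X i) = 1 := by simp [hi]
    have h3 := pc_hom_eval hL A (w0 + t • w1)
    rw [← hv, h2, pow_one] at h3
    rw [hκ, pcRestr_eval, ← h3]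
  have hκ0 : κ.eval t ≠ 0 := fun h => by rw [h, mul_zero] at h1; exact zero_ne_one h1
  have hco : IsCoprime κ ((Polynomial.X - Polynomial.C t) ^ (j + 1)) := by
    apply IsCoprime.pow_right
    apply IsCoprime.symm
    rw [(Polynomial.irreducible_X_sub_C t).coprime_iff_not_dvd, Polynomial.dvd_iff_isRoot]
    exact hκ0
  obtain ⟨u, s, hus⟩ := hco
  have hu : u.eval t = A := by
    have := congrArg (Polynomial.eval t) hus
    simp at this
    have h5 : u.eval t * κ.eval t = A * κ.eval t := by rw [this, h1]
    exact mul_right_cancel₀ hκ0 h5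
  let P : Fin 3 → Polynomial k := fun i => Polynomial.C (w0 i) + Polynomial.C (w1 i) * Polynomial.X
  have hh : ∀ n g, g.IsHomogeneous n → aeval (fun i => u * P i) g = u ^ n * pcRestr w0 w1 g :=
    fun n g hg => pc_hom_aeval hg u P
  refine ⟨aeval (fun i => u * P i), u, by rwa [hu], hh, ?_, ?_⟩
  · rw [hs, map_sub, hh 1 _ hL, map_one, pow_one, ← hκ]
    refine ⟨-(s * (Polynomial.X - Polynomial.C t)), ?_⟩
    rw [← hus]; ring
  · intro g
    have : (Polynomial.aeval t).comp (aeval (fun i => u * P i)) = aeval (R := k) v := by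
      apply MvPolynomial.algHom_ext
      intro i
      rw [hv]
      simp [P, ← hu]
      ring
    have h := DFunLike.congr_fun this g
    rw [AlgHom.comp_apply, aeval_eq_eval] at h
    simpa [Polynomial.aeval_def, Polynomial.eval₂_eq_eval_map] using h

theorem pc_psi_pow {k : Type*} [Field k] {v : Fin 3 → k} {t : k}
    (Ψ : MvPolynomial (Fin 3) k →ₐ[k] Polynomial k) (hΨ : ∀ g, (Ψ g).eval t = eval v g)
    {n : ℕ} {c : MvPolynomial (Fin 3) k} (hc : c ∈ (RingHom.ker (eval v)) ^ n) :
    (Polynomial.X - Polynomial.C t) ^ n ∣ Ψ c := by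
  have h1 : (RingHom.ker (eval v)).map (Ψ : MvPolynomial (Fin 3) k →+* Polynomial k) ≤
      Ideal.span {Polynomial.X - Polynomial.C t} := by
    rw [Ideal.map_le_iff_le_comap]
    intro g hg
    rw [Ideal.mem_comap, Ideal.mem_span_singleton, Polynomial.dvd_iff_isRoot]
    change (Ψ g).eval t = 0
    rw [hΨ]; exact hg
  have h2 := Ideal.mem_map_of_mem (Ψ : MvPolynomial (Fin 3) k →+* Polynomial k) hc
  rw [Ideal.map_pow] at h2
  have h3 := Ideal.pow_right_mono h1 n h2
  rw [Ideal.span_singleton_pow, Ideal.mem_span_singleton] at h3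
  exact h3

theorem pc_decomp {k : Type*} [Field k] {f s q : MvPolynomial (Fin 3) k}
    {I : Ideal (MvPolynomial (Fin 3) k)} (h : q ∈ Ideal.span {f, s} + I) :
    ∃ α β c, c ∈ I ∧ q = α * f + β * s + c := by
  obtain ⟨x, hx, c, hc, rfl⟩ := Submodule.mem_sup.1 h
  obtain ⟨α, β, rfl⟩ := Ideal.mem_span_pair.1 hx
  exact ⟨α, β, c, hc, rfl⟩

theorem pc_prime_pow {k : Type*} [Field k] {t : k} {n : ℕ} {x y : Polynomial k}
    (hx : x.eval t ≠ 0) (h : (Polynomial.X - Polynomial.C t) ^ n ∣ x * y) :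
    (Polynomial.X - Polynomial.C t) ^ n ∣ y := by
  refine IsCoprime.dvd_of_dvd_mul_left (IsCoprime.pow_left ?_) h
  rw [(Polynomial.irreducible_X_sub_C t).coprime_iff_not_dvd, Polynomial.dvd_iff_isRoot]
  exact hx

theorem pc_restr_G {k : Type*} [Field k] {w0 w1 v : Fin 3 → k} {A t : k} (hA : A ≠ 0) (hv0 : v ≠ 0)
    (hv : v = A • (w0 + t • w1)) {f G h : MvPolynomial (Fin 3) k} {d e n : ℕ}
    (hf : f.IsHomogeneous d) (hG : G.IsHomogeneous e) (hh : eval v h ≠ 0)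
    (hfn : (Polynomial.X - Polynomial.C t) ^ n ∣ pcRestr w0 w1 f)
    (hmem : h * G ∈ Ideal.span {f, slicePoly v} + (RingHom.ker (eval v)) ^ n) :
    (Polynomial.X - Polynomial.C t) ^ n ∣ pcRestr w0 w1 G := by
  obtain ⟨Ψ, u, hu, h1, h2, h3⟩ := pc_psi hA hv0 hv n
  obtain ⟨α, β, c, hc, he⟩ := pc_decomp hmem
  have := congrArg Ψ he
  rw [map_mul, map_add, map_add, map_mul, map_mul, h1 d f hf, h1 e G hG] at this
  have h4 : (Polynomial.X - Polynomial.C t) ^ n ∣ (Ψ h * u ^ e) * pcRestr w0 w1 G := by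
    rw [mul_assoc, this]
    refine dvd_add (dvd_add ?_ ?_) (pc_psi_pow Ψ h3 hc)
    · exact Dvd.dvd.mul_left (Dvd.dvd.mul_left hfn _) _
    · exact Dvd.dvd.mul_left h2 _
  refine pc_prime_pow ?_ h4
  simp [h3, hh, hu]

theorem pc_m2_pderiv {k : Type*} [Field k] {v : Fin 3 → k} {c : MvPolynomial (Fin 3) k}
    (hc : c ∈ (RingHom.ker (eval v)) ^ 2) (i : Fin 3) : eval v (pderiv i c) = 0 := by
  rw [pow_two] at hc
  induction hc using Submodule.mul_induction_on' with
  | mem_mul_mem x hx y hy =>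
    have hx' : eval v x = 0 := hx
    have hy' : eval v y = 0 := hy
    simp [Derivation.leibniz, hx', hy']
  | add x hx y hy h1 h2 => rw [map_add, map_add, h1, h2, add_zero]

theorem pc_restr_l {k : Type*} [Field k] {w0 w1 v : Fin 3 → k} {A t : k} (hA : A ≠ 0) (hv0 : v ≠ 0)
    (hv : v = A • (w0 + t • w1)) {f l h : MvPolynomial (Fin 3) k} {d n : ℕ} (hn : 2 ≤ n)
    (hf : f.IsHomogeneous d) (hl : l.IsHomogeneous 1) (hl0 : l ≠ 0) (hh : eval v h ≠ 0)
    (hlv : eval v l = 0) (hfv : eval v f = 0)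
    (hrl : pcRestr w0 w1 l = 0)
    (hmem : h * l ∈ Ideal.span {f, slicePoly v} + (RingHom.ker (eval v)) ^ n) :
    (Polynomial.X - Polynomial.C t) ^ n ∣ pcRestr w0 w1 f := by
  obtain ⟨Ψ, u, hu, h1, h2, h3⟩ := pc_psi hA hv0 hv n
  obtain ⟨α, β, c, hc, he⟩ := pc_decomp hmem
  have hα : eval v α ≠ 0 := by
    intro hα
    obtain ⟨z, rfl⟩ := pcLin_surj hl
    obtain ⟨j, hj, hs⟩ := pc_slice hv0
    have hsv : eval v (slicePoly v) = 0 := by rw [hs]; simp [hj]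
    have hd : ∀ i, eval v h * z i = eval v β * eval v (pderiv i (slicePoly v)) := by
      intro i
      have := congrArg (fun q => eval v (pderiv i q)) he
      simp only [map_add, Derivation.leibniz, smul_eq_mul, map_mul, hα, hfv, hsv, hlv,
        pcLin_pderiv, eval_C, pc_m2_pderiv (Ideal.pow_le_pow_right hn hc)] at this
      simpa using this
    have hds : ∀ i, eval v (pderiv i (slicePoly v)) = if i = j then (v j)⁻¹ else 0 := by
      intro i
      rw [hs]
      by_cases hij : i = j
      · simp [hij]
      · simp [pderiv_X, Pi.single_apply, hij, Ne.symm hij]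
    have hβ : eval v β = 0 := by
      have h5 : ∑ i, (eval v h * z i) * v i = 0 := by
        rw [pcLin_eval] at hlv
        simp_rw [mul_assoc]
        rw [← Finset.mul_sum, hlv, mul_zero]
      simp_rw [hd, hds] at h5
      simpa [hj] using h5
    apply hl0
    have : z = 0 := by
      funext i
      have := hd i
      rw [hβ, zero_mul] at this
      exact (mul_eq_zero.1 this).resolve_left hh
    rw [this, pcLin_zero]
  have := congrArg Ψ he
  rw [map_mul, map_add, map_add, map_mul, map_mul, h1 d f hf, h1 1 l hl, hrl, mul_zero,
    mul_zero] at this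
  have h4 : (Polynomial.X - Polynomial.C t) ^ n ∣ (Ψ α * u ^ d) * pcRestr w0 w1 f := by
    have e : (Ψ α * u ^ d) * pcRestr w0 w1 f = - (Ψ β * Ψ (slicePoly v) + Ψ c) := by
      linear_combination -this
    rw [e]
    exact (dvd_add (Dvd.dvd.mul_left h2 _) (pc_psi_pow Ψ h3 hc)).neg_right
  refine pc_prime_pow ?_ h4
  simp [h3, hα, hu]

/-- Intersection of the curve with a line. -/
structure PCLine {k : Type*} [Field k] [DecidableEq k] (f : MvPolynomial (Fin 3) k) (d : ℕ)
    (w : PlanePoint f → MvPolynomial (Fin 3) k → ℕ∞) (l : MvPolynomial (Fin 3) k)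
    (T : Multiset k) (τ : PlanePoint f → k) : Prop where
  card : Multiset.card T = d
  on : ∀ p, eval p.1.rep l = 0 → w p l = Multiset.count (τ p) T
  off : ∀ p, eval p.1.rep l ≠ 0 → w p l = 0
  inj : ∀ p q, eval p.1.rep l = 0 → eval q.1.rep l = 0 → τ p = τ q → p = q
  surj : ∀ t ∈ T, ∃ p, eval p.1.rep l = 0 ∧ τ p = t
  dvd : ∀ e G (A : Multiset k), G.IsHomogeneous e → Multiset.card A + e < d →
    (∀ p, eval p.1.rep l = 0 → (Multiset.count (τ p) T : ℕ∞) ≤ w p G + Multiset.count (τ p) A) →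
    l ∣ G

theorem PCVal.one_le {k : Type*} [Field k] {f : MvPolynomial (Fin 3) k}
    {w : PlanePoint f → MvPolynomial (Fin 3) k → ℕ∞} (hw : PCVal f w) (p G) :
    1 ≤ w p G ↔ eval p.1.rep G = 0 := by
  have := hw.le_iff p 1 G
  rw [Nat.cast_one] at this
  rw [this]
  obtain ⟨j, hj, hs⟩ := pc_slice p.1.rep_nonzero
  constructor
  · rintro ⟨h, h0, hm⟩
    obtain ⟨α, β, c, hc, he⟩ := pc_decomp hm
    rw [pow_one] at hc
    have hc' : eval p.1.rep c = 0 := hc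
    have := congrArg (eval p.1.rep) he
    rw [hs] at this
    simp [hc', p.2, hj, h0] at this
    exact this
  · intro h
    refine ⟨1, by simp, ?_⟩
    rw [pow_one, one_mul]
    exact Ideal.mem_sup_right h

theorem pc_l_ge {k : Type*} [Field k] {v : Fin 3 → k} (hv0 : v ≠ 0) {f l q Q H : MvPolynomial (Fin 3) k}
    {n : ℕ} (hn : 2 ≤ n)
    (hsm : eval v f = 0 → (∀ i : Fin 3, eval v (pderiv i f) = 0) → v = 0)
    (hfv : eval v f = 0) (hlv : eval v l = 0) (hq : eval v q = 0)
    (he : f = q ^ n * Q + l * H) :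
    eval v H ≠ 0 ∧ H * l ∈ Ideal.span {f, slicePoly v} + (RingHom.ker (eval v)) ^ n := by
  have hmem : q ^ n * Q ∈ (RingHom.ker (eval v)) ^ n :=
    Ideal.mul_mem_right _ _ (Ideal.pow_mem_pow hq n)
  constructor
  · intro hH
    refine hv0 (hsm hfv fun i => ?_)
    rw [he, map_add, map_add, pc_m2_pderiv (Ideal.pow_le_pow_right hn hmem), Derivation.leibniz]
    simp [hlv, hH]
  · have : H * l = f + -(q ^ n * Q) := by rw [he]; ring
    rw [this]
    refine add_mem (Ideal.mem_sup_left (Ideal.subset_span (by simp))) (Ideal.mem_sup_right ?_)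
    exact neg_mem hmem

theorem pc_line {k : Type*} [Field k] [IsAlgClosed k] [DecidableEq k]
    {f : MvPolynomial (Fin 3) k} {d : ℕ} (hd : 2 ≤ d) (hf : f.IsHomogeneous d) (hp : Prime f)
    (hsm : ∀ v : Fin 3 → k, eval v f = 0 → (∀ i : Fin 3, eval v (pderiv i f) = 0) → v = 0)
    {w : PlanePoint f → MvPolynomial (Fin 3) k → ℕ∞} (hw : PCVal f w)
    {l : MvPolynomial (Fin 3) k} (hl : l.IsHomogeneous 1) (hl0 : l ≠ 0) :
    ∃ T τ, PCLine f d w l T τ := by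
  have : Infinite k := IsAlgClosed.instInfinite
  have hlf : ¬ l ∣ f := by
    rintro ⟨H, hH⟩
    rcases hp.dvd_or_dvd (show f ∣ l * H from hH ▸ dvd_rfl) with h | h
    · exact hl0 (pc_dvd_deg hf hp.ne_zero hl (by omega) h)
    · obtain ⟨u, rfl⟩ := h
      have h1 : f * 1 = f * (l * u) := by rw [mul_one]; linear_combination hH
      have h2 := mul_left_cancel₀ hp.ne_zero h1
      have h3 := congrArg (eval 0) h2
      have h4 := pc_hom_eval hl 0 0
      simp at h4
      simp [h4] at h3
  have : ∃ w1, eval w1 l = 0 ∧ eval w1 f ≠ 0 := by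
    by_contra hcon
    push Not at hcon
    exact hlf (pc_lin_dvd hl hl0 hcon)
  obtain ⟨w1, hlw1, hfw1⟩ := this
  have hw10 : w1 ≠ 0 := by
    rintro rfl
    apply hfw1
    have := pc_hom_eval hf 0 0
    rwa [smul_zero, zero_pow (by omega), zero_mul] at this
  obtain ⟨w0, a, b, hlw0, ha, hb, ha0, ha1, hb0, hb1, hx⟩ := pc_coords hl hl0 hw10 hlw1
  obtain ⟨hcard, H, hH⟩ := pc_split hl hl0 ha hb ha0 ha1 hb0 hb1 hx hf hfw1
  have hrl : pcRestr w0 w1 l = 0 := by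
    rw [pcRestr_lin hl, hlw0, hlw1]; simp
  set R := pcRestr w0 w1 f with hR
  have hR0 : R ≠ 0 := by
    intro h0
    apply hfw1
    rw [← (pcRestr_deg w0 w1 hf).2, ← hR, h0]; simp
  let τ : PlanePoint f → k := fun p => eval p.1.rep b / eval p.1.rep a
  have hpt : ∀ p : PlanePoint f, eval p.1.rep l = 0 → eval p.1.rep a ≠ 0 ∧
      p.1.rep = eval p.1.rep a • (w0 + τ p • w1) := by
    intro p hpl
    have h1 := hx _ hpl
    have h2 : eval p.1.rep a ≠ 0 := by
      intro h2
      rw [h2, zero_smul, zero_add] at h1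
      have h3 := p.2
      have h4 : eval p.1.rep b ≠ 0 := by
        intro h4; rw [h4, zero_smul] at h1; exact p.1.rep_nonzero h1
      rw [h1, pc_hom_eval hf] at h3
      exact (mul_ne_zero (pow_ne_zero _ h4) hfw1) h3
    refine ⟨h2, ?_⟩
    rw [smul_add, smul_smul, mul_div_cancel₀ _ h2]
    exact h1
  have hmult : ∀ t n, (Polynomial.X - Polynomial.C t) ^ n ∣ R ↔ n ≤ Multiset.count t R.roots := by
    intro t n
    rw [Polynomial.count_roots, Polynomial.le_rootMultiplicity_iff hR0]
  have hsurj : ∀ t ∈ R.roots, ∃ p : PlanePoint f, eval p.1.rep l = 0 ∧ τ p = t := by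
    intro t ht
    have h1 : eval (w0 + t • w1) f = 0 := by
      rw [← pcRestr_eval]; exact (Polynomial.mem_roots'.1 ht).2
    have hlin : ∀ {q : MvPolynomial (Fin 3) k}, q.IsHomogeneous 1 → ∀ x y : Fin 3 → k, ∀ t : k,
        eval (x + t • y) q = eval x q + t * eval y q := by
      intro q hq x y t
      obtain ⟨c, rfl⟩ := pcLin_surj hq
      simp only [pcLin_eval, Fin.sum_univ_three, Pi.add_apply, Pi.smul_apply, smul_eq_mul]
      ring
    have h2 : eval (w0 + t • w1) a = 1 := by rw [hlin ha, ha0, ha1]; simp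
    have h3 : eval (w0 + t • w1) b = t := by rw [hlin hb, hb0, hb1]; simp
    have h4 : eval (w0 + t • w1) l = 0 := by rw [hlin hl, hlw0, hlw1]; simp
    have h5 : w0 + t • w1 ≠ 0 := by
      intro h5
      rw [h5] at h2
      have := pc_hom_eval ha 0 0
      simp at this
      simp [this] at h2
    obtain ⟨c, hc⟩ := Projectivization.exists_smul_eq_mk_rep k _ h5
    have hc' : (Projectivization.mk k _ h5).rep = (c : k) • (w0 + t • w1) := hc.symm
    refine ⟨⟨Projectivization.mk k _ h5, by rw [hc', pc_hom_eval hf, h1, mul_zero]⟩, ?_, ?_⟩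
    · show eval (Projectivization.mk k _ h5).rep l = 0
      rw [hc', pc_hom_eval hl, h4, mul_zero]
    · show eval (Projectivization.mk k _ h5).rep b / eval (Projectivization.mk k _ h5).rep a = t
      rw [hc', pc_hom_eval hb, pc_hom_eval ha, h2, h3]
      have : (c : k) ≠ 0 := c.ne_zero
      field_simp
  refine ⟨R.roots, τ, hcard, ?_, ?_, ?_, hsurj, ?_⟩
  · intro p hpl
    obtain ⟨hA, hv⟩ := hpt p hpl
    have hb' : eval p.1.rep (b - C (τ p) * a) = 0 := by
      simp [τ, div_mul_cancel₀ _ hA]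
    apply ENat.eq_of_forall_natCast_le_iff
    intro n
    rw [Nat.cast_le]
    have h1 : (n ≤ 1) → (n : ℕ∞) ≤ w p l := by
      intro hn
      refine le_trans ?_ ((hw.one_le p l).2 hpl)
      exact_mod_cast hn
    have h2 : 1 ≤ Multiset.count (τ p) R.roots := by
      rw [← hmult, pow_one, Polynomial.dvd_iff_isRoot]
      have h3 := p.2
      rw [hv, pc_hom_eval hf, ← pcRestr_eval] at h3
      exact (mul_eq_zero.1 h3).resolve_left (pow_ne_zero _ hA)
    rcases le_or_gt n 1 with hn | hn
    · exact ⟨fun _ => hn.trans h2, fun _ => h1 hn⟩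
    · rw [← hmult]
      constructor
      · intro hle
        obtain ⟨h, hh, hm⟩ := (hw.le_iff p n l).1 hle
        exact pc_restr_l hA p.1.rep_nonzero hv hn hf hl hl0 hh hpl p.2 hrl hm
      · intro hdv
        rw [hmult, Multiset.le_count_iff_replicate_le] at hdv
        have h3 := Multiset.prod_dvd_prod_of_le
          (Multiset.map_le_map (f := fun t => b - C t * a) hdv)
        rw [Multiset.map_replicate, Multiset.prod_replicate] at h3
        obtain ⟨Q, hQ⟩ := h3
        rw [hw.le_iff]
        refine ⟨H, pc_l_ge p.1.rep_nonzero (Q := C (eval w1 f) * Q) hn (hsm _) p.2 hpl hb' ?_⟩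
        rw [hQ] at hH
        refine hH.trans ?_
        ring
  · intro p hpl
    by_contra h
    exact hpl ((hw.one_le p l).1 (Order.one_le_iff_pos.2 (pos_iff_ne_zero.2 h)))
  · intro p q hpl hql hpq
    obtain ⟨hA, hv⟩ := hpt p hpl
    obtain ⟨hA', hv'⟩ := hpt q hql
    apply Subtype.ext
    rw [← p.1.mk_rep, ← q.1.mk_rep, Projectivization.mk_eq_mk_iff']
    refine ⟨eval p.1.rep a / eval q.1.rep a, ?_⟩
    conv_rhs => rw [hv, hpq]
    conv_lhs => rw [hv']
    have key : ∀ (A B : k) (x : Fin 3 → k), B ≠ 0 → (A / B) • (B • x) = A • x := by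
      intro A B x hB
      rw [smul_smul, div_mul_cancel₀ _ hB]
    rw [← hv']
    nth_rewrite 2 [hv']
    exact key _ _ _ hA'
  · intro e G M hG hlt hcnt
    by_contra hnd
    have hG0 : pcRestr w0 w1 G ≠ 0 := fun h => hnd (pcRestr_dvd hl hl0 hx hG h)
    have hle : R.roots ≤ (pcRestr w0 w1 G).roots + M := by
      rw [Multiset.le_iff_count]
      intro t
      by_cases ht : t ∈ R.roots
      · obtain ⟨p, hpl, rfl⟩ := hsurj t ht
        obtain ⟨hA, hv⟩ := hpt p hpl
        have h1 := hcnt p hpl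
        rw [Multiset.count_add]
        have h2 : ((Multiset.count (τ p) R.roots - Multiset.count (τ p) M : ℕ) : ℕ∞) ≤ w p G := by
          rw [ENat.natCast_sub]
          exact tsub_le_iff_right.2 h1
        obtain ⟨h, hh, hm⟩ := (hw.le_iff p _ G).1 h2
        have h3 := pc_restr_G hA p.1.rep_nonzero hv hf hG hh
          ((hmult _ _).2 (Nat.sub_le _ _)) hm
        rw [← Polynomial.le_rootMultiplicity_iff hG0, ← Polynomial.count_roots] at h3
        omega
      · rw [Multiset.count_eq_zero_of_notMem ht]; exact Nat.zero_le _
    have h1 := Multiset.card_le_card hle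
    rw [hcard, Multiset.card_add] at h1
    have h2 := Polynomial.card_roots' (pcRestr w0 w1 G)
    have h3 := (pcRestr_deg w0 w1 hG).1
    omega

section
variable {k : Type*} [Field k] {f : MvPolynomial (Fin 3) k}
  {w : PlanePoint f → MvPolynomial (Fin 3) k → ℕ∞}

theorem PCVal.congr (hw : PCVal f w) (p) {x y : MvPolynomial (Fin 3) k} (h : f ∣ x - y) :
    w p x = w p y := by
  have key : ∀ x y : MvPolynomial (Fin 3) k, f ∣ x - y → ∀ n : ℕ, (n : ℕ∞) ≤ w p x →
      (n : ℕ∞) ≤ w p y := by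
    intro x y h n hn
    rw [hw.le_iff] at hn ⊢
    obtain ⟨u, hu, hm⟩ := hn
    refine ⟨u, hu, ?_⟩
    obtain ⟨z, hz⟩ := h
    have : u * y = u * x + (-(u * z)) * f := by linear_combination -u * hz
    rw [this]
    exact add_mem hm (Ideal.mem_sup_left (Ideal.mul_mem_left _ _ (Ideal.subset_span (by simp))))
  refine ENat.eq_of_forall_natCast_le_iff fun n => ⟨key x y h n, key y x ?_ n⟩
  rw [← neg_sub]; exact h.neg_right

theorem PCVal.zero (hw : PCVal f w) (p) : w p 0 = ⊤ := by
  rw [ENat.eq_top_iff_forall_ge]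
  intro n
  rw [hw.le_iff]
  exact ⟨1, by simp, by simp⟩

theorem PCVal.one (hw : PCVal f w) (p) : w p 1 = 0 := by
  by_contra h
  have := (hw.one_le p 1).1 (Order.one_le_iff_pos.2 (pos_iff_ne_zero.2 h))
  simp at this

theorem PCVal.prod (hw : PCVal f w) (p) {ι : Type*} (s : Finset ι)
    (g : ι → MvPolynomial (Fin 3) k) : w p (∏ i ∈ s, g i) = ∑ i ∈ s, w p (g i) := by
  classical
  induction s using Finset.induction with
  | empty => simpa using hw.one p
  | insert a s ha ih => rw [Finset.prod_insert ha, Finset.sum_insert ha, hw.mul, ih]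

variable [IsAlgClosed k] {F : Type*} [Field F] [Algebra k F]
  [Algebra (MvPolynomial (Fin 3) k ⧸ Ideal.span {f}) F]

theorem pc_rr_iff {d : ℕ} (hd : 2 ≤ d) (hf : f.IsHomogeneous d) (hp : Prime f)
    (hw : PCVal f w) (π : MvPolynomial (Fin 3) k →ₐ[k] F) (hπ : ∀ q, π q = 0 ↔ f ∣ q)
    (hπ' : ∀ q, algebraMap (MvPolynomial (Fin 3) k ⧸ Ideal.span {f}) F
      (Ideal.Quotient.mk (Ideal.span {f}) q) = π q)
    (D : PlanePoint f → ℕ) {H : MvPolynomial (Fin 3) k} {n : ℕ} (hH : H.IsHomogeneous n)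
    (hfH : ¬ f ∣ H) (hD : ∀ p, (D p : ℕ∞) ≤ w p H) (φ : F) :
    φ ∈ RRspace F f (fun q => (D q : ℤ)) ↔ ∃ G : MvPolynomial (Fin 3) k, G.IsHomogeneous n ∧
      φ * π H = π G ∧ ∀ p, w p H ≤ w p G + D p := by
  have hconv : ∀ p e (g h : MvPolynomial (Fin 3) k), g.IsHomogeneous e → h.IsHomogeneous e →
      ¬ f ∣ g → ¬ f ∣ h →
      (0 ≤ (ordAt f p g : ℤ) - (ordAt f p h : ℤ) + (D p : ℤ) ↔ w p h ≤ w p g + D p) := by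
    intro p e g h hg hh hfg hfh
    rw [← (hw.ord p e g hg hfg).2, ← (hw.ord p e h hh hfh).2]
    have h1 : ((ordAt f p h : ℕ∞) ≤ ordAt f p g + D p) ↔ ordAt f p h ≤ ordAt f p g + D p := by
      norm_cast
    rw [h1]
    omega
  constructor
  · rintro (rfl | ⟨e, g, h, hg, hh, hfg, hfh, he, hord⟩)
    · exact ⟨0, isHomogeneous_zero _ _ _, by simp, fun p => by rw [hw.zero]; simp⟩
    · rw [hπ', hπ'] at he
      have hle : ∀ p, w p h ≤ w p g + D p := fun p => (hconv p e g h hg hh hfg hfh).1 (hord p)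
      have hle2 : ∀ p, w p h ≤ w p (g * H) := fun p => by
        rw [hw.mul]; exact (hle p).trans (add_le_add_right (hD p) _)
      have hgH : (g * H).IsHomogeneous (n + e) := by rw [add_comm]; exact hg.mul hH
      obtain ⟨G, hG, hdv⟩ := pc_noether hd hf hp hw hgH hh hfh hle2
      have hh0 : π h ≠ 0 := fun h0 => hfh ((hπ h).1 h0)
      refine ⟨G, hG, ?_, fun p => ?_⟩
      · have := (hπ _).2 hdv
        rw [map_sub, map_mul, map_mul] at this
        apply mul_right_cancel₀ hh0
        linear_combination this + π H * he
      · have h1 := hw.congr p hdv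
        rw [hw.mul, hw.mul] at h1
        have h2 := (hw.ord p e h hh hfh).1
        rw [← ENat.add_le_add_iff_right h2]
        calc w p H + w p h ≤ w p H + (w p g + D p) := add_le_add_right (hle p) _
          _ = w p G + w p h + D p := by rw [← h1]; ring
          _ = w p G + D p + w p h := by ring
  · rintro ⟨G, hG, he, hle⟩
    have hH0 : π H ≠ 0 := fun h0 => hfH ((hπ H).1 h0)
    by_cases hfG : f ∣ G
    · left
      rw [(hπ G).2 hfG] at he
      exact (mul_eq_zero.1 he).resolve_right hH0
    · right
      exact ⟨n, G, H, hG, hH, hfG, hfH, by rw [hπ', hπ']; exact he,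
        fun p => (hconv p n G H hG hH hfG hfH).2 (hle p)⟩

end

/-- Linear forms as a linear map. -/
noncomputable def pcLinMap (k : Type*) [Field k] : (Fin 3 → k) →ₗ[k] MvPolynomial (Fin 3) k where
  toFun := pcLin
  map_add' := by
    intro x y
    simp [pcLin, add_mul, Finset.sum_add_distrib]
  map_smul' := by
    intro c x
    simp [pcLin, Finset.smul_sum, smul_eq_C_mul, mul_assoc]

section
variable {k : Type*} [Field k] {f : MvPolynomial (Fin 3) k}
  {w : PlanePoint f → MvPolynomial (Fin 3) k → ℕ∞}
  [IsAlgClosed k] {F : Type*} [Field F] [Algebra k F]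
  [Algebra (MvPolynomial (Fin 3) k ⧸ Ideal.span {f}) F]

theorem pc_h0_of {d : ℕ} (hd : 2 ≤ d) (hf : f.IsHomogeneous d) (hp : Prime f)
    (hw : PCVal f w) (π : MvPolynomial (Fin 3) k →ₐ[k] F) (hπ : ∀ q, π q = 0 ↔ f ∣ q)
    (hπ' : ∀ q, algebraMap (MvPolynomial (Fin 3) k ⧸ Ideal.span {f}) F
      (Ideal.Quotient.mk (Ideal.span {f}) q) = π q)
    (D : PlanePoint f → ℕ) {l : MvPolynomial (Fin 3) k} (hl : l.IsHomogeneous 1)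
    (hl0 : l ≠ 0) (hD : ∀ p, (D p : ℕ∞) ≤ w p l) (K : Submodule k (Fin 3 → k))
    (hK : ∀ c, c ∈ K ↔ ∀ p, w p l ≤ w p (pcLin c) + D p) :
    h0 F f (fun q => (D q : ℤ)) = Module.finrank k K := by
  have hfl : ¬ f ∣ l := fun h => hl0 (pc_dvd_deg hf hp.ne_zero hl (by omega) h)
  have hl1 : π l ≠ 0 := fun h => hfl ((hπ l).1 h)
  let ψ : (Fin 3 → k) →ₗ[k] F := (LinearMap.mulRight k (π l)⁻¹).comp (π.toLinearMap.comp (pcLinMap k))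
  have hψ : ∀ c, ψ c = π (pcLin c) * (π l)⁻¹ := fun c => rfl
  have hinj : Function.Injective ψ := by
    rw [← LinearMap.ker_eq_bot, LinearMap.ker_eq_bot']
    intro c hc
    rw [hψ] at hc
    have h1 := (mul_eq_zero.1 hc).resolve_right (inv_ne_zero hl1)
    have h2 := pc_dvd_deg hf hp.ne_zero (pcLin_hom c) (by omega) ((hπ _).1 h1)
    exact pcLin_inj (h2.trans pcLin_zero.symm)
  have hset : RRspace F f (fun q => (D q : ℤ)) = (K.map ψ : Set F) := by
    ext φ
    rw [pc_rr_iff hd hf hp hw π hπ hπ' D hl hfl hD]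
    simp only [Submodule.map_coe, Set.mem_image, SetLike.mem_coe]
    constructor
    · rintro ⟨G, hG, he, hle⟩
      obtain ⟨c, rfl⟩ := pcLin_surj hG
      exact ⟨c, (hK c).2 hle, by rw [hψ, ← he, mul_assoc, mul_inv_cancel₀ hl1, mul_one]⟩
    · rintro ⟨c, hc, rfl⟩
      exact ⟨pcLin c, pcLin_hom c, by rw [hψ, mul_assoc, inv_mul_cancel₀ hl1, mul_one], (hK c).1 hc⟩
  rw [h0, hset, Submodule.span_eq]
  exact (LinearEquiv.finrank_eq (Submodule.equivMapOfInjective ψ hinj K)).symm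

theorem pc_h0_line {d : ℕ} (hd : 2 ≤ d) (hf : f.IsHomogeneous d) (hp : Prime f)
    (hw : PCVal f w) (π : MvPolynomial (Fin 3) k →ₐ[k] F) (hπ : ∀ q, π q = 0 ↔ f ∣ q)
    (hπ' : ∀ q, algebraMap (MvPolynomial (Fin 3) k ⧸ Ideal.span {f}) F
      (Ideal.Quotient.mk (Ideal.span {f}) q) = π q)
    {l : MvPolynomial (Fin 3) k} (hl : l.IsHomogeneous 1) (hl0 : l ≠ 0) :
    h0 F f (fun q => (ordAt f q l : ℤ)) = 3 := by
  have hfl : ¬ f ∣ l := fun h => hl0 (pc_dvd_deg hf hp.ne_zero hl (by omega) h)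
  have := pc_h0_of hd hf hp hw π hπ hπ' (fun q => ordAt f q l) hl hl0
    (fun p => (hw.ord p 1 l hl hfl).2.le) ⊤ (fun c => by
      simp only [Submodule.mem_top, true_iff]
      intro p
      rw [(hw.ord p 1 l hl hfl).2]
      exact le_add_self)
  rw [this]
  simp

theorem pc_h0_collinear {d : ℕ} (hd : 2 ≤ d) (hf : f.IsHomogeneous d) (hp : Prime f)
    (hsm : ∀ v : Fin 3 → k, eval v f = 0 → (∀ i : Fin 3, eval v (pderiv i f) = 0) → v = 0)
    (hw : PCVal f w) (π : MvPolynomial (Fin 3) k →ₐ[k] F) (hπ : ∀ q, π q = 0 ↔ f ∣ q)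
    (hπ' : ∀ q, algebraMap (MvPolynomial (Fin 3) k ⧸ Ideal.span {f}) F
      (Ideal.Quotient.mk (Ideal.span {f}) q) = π q)
    {l : MvPolynomial (Fin 3) k} (hl : l.IsHomogeneous 1) (hl0 : l ≠ 0)
    {m : ℕ} (hm : m + 1 = d) (p : Fin m → PlanePoint f) (hpi : Function.Injective p)
    (hpl : ∀ i, eval (p i).1.rep l = 0) (D : PlanePoint f → ℕ)
    (hD : ∀ q [DecidablePred fun i => p i = q], D q = (Finset.univ.filter (fun i => p i = q)).card) :
    h0 F f (fun q => (D q : ℤ)) = 2 := by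
  classical
  obtain ⟨T, τ, hT⟩ := pc_line hd hf hp hsm hw hl hl0
  let M : Multiset k := Finset.univ.val.map (fun i => τ (p i))
  have hMnd : M.Nodup := Multiset.Nodup.map (fun i j hij => hpi (hT.inj _ _ (hpl i) (hpl j) hij))
    Finset.univ.nodup
  have hMT : M ≤ T := by
    rw [Multiset.le_iff_subset hMnd]
    intro t ht
    obtain ⟨i, -, rfl⟩ := Multiset.mem_map.1 ht
    have h1 := (hw.one_le (p i) l).2 (hpl i)
    rw [hT.on _ (hpl i)] at h1
    rw [← Multiset.one_le_count_iff_mem]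
    exact_mod_cast h1
  obtain ⟨N, hN⟩ := Multiset.le_iff_exists_add.1 hMT
  have hNc : Multiset.card N = 1 := by
    have := congrArg Multiset.card hN
    rw [hT.card, Multiset.card_add] at this
    simp [M] at this
    omega
  obtain ⟨t, rfl⟩ := Multiset.card_eq_one.1 hNc
  obtain ⟨q, hql, hqt⟩ := hT.surj t (by rw [hN]; simp)
  have hform : ∀ x, w x l = (D x : ℕ∞) + (if x = q then 1 else 0 : ℕ) := by
    intro x
    by_cases hx : eval x.1.rep l = 0
    · rw [hT.on x hx, hN, Multiset.count_add, Nat.cast_add]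
      congr 2
      · rw [hD, Multiset.count_map]
        rw [Finset.card_def, Finset.filter_val]
        congr 1
        refine Multiset.filter_congr fun i _ => ?_
        exact ⟨fun h => (hT.inj _ _ hx (hpl i) h).symm, fun h => by rw [h]⟩
      · rw [Multiset.count_singleton]
        refine if_congr ?_ rfl rfl
        exact ⟨fun h => hT.inj _ _ hx hql (h.trans hqt.symm), fun h => by rw [h, hqt]⟩
    · rw [hT.off x hx, hD]
      have h1 : x ≠ q := by rintro rfl; exact hx hql
      have h2 : Finset.univ.filter (fun i => p i = x) = ∅ := by
        rw [Finset.filter_eq_empty_iff]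
        rintro i - rfl
        exact hx (hpl i)
      rw [h2]; simp [h1]
  let φ : (Fin 3 → k) →ₗ[k] k := ∑ i, q.1.rep i • LinearMap.proj i
  have hφ : ∀ c, φ c = eval q.1.rep (pcLin c) := by
    intro c; simp [φ, pcLin_eval, mul_comm]
  rw [pc_h0_of hd hf hp hw π hπ hπ' D hl hl0 (fun x => by rw [hform]; exact le_self_add)
    (LinearMap.ker φ)]
  · obtain ⟨j, hj, -⟩ := pc_slice q.1.rep_nonzero
    have hsurj : LinearMap.range φ = ⊤ := by
      rw [LinearMap.range_eq_top]
      refine LinearMap.surjective (fun h => hj ?_)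
      have := LinearMap.congr_fun h (Pi.single j 1)
      simpa [φ, Pi.single_apply] using this
    have hrk := LinearMap.finrank_range_add_finrank_ker φ
    rw [hsurj] at hrk
    simp at hrk
    omega
  · intro c
    rw [LinearMap.mem_ker, hφ, ← hw.one_le]
    constructor
    · intro h x
      rw [hform, add_comm]
      refine add_le_add_left ?_ _
      split_ifs with hx
      · rw [hx]; exact_mod_cast h
      · simp
    · intro h
      have := h q
      rw [hform, add_comm, ENat.add_le_add_iff_right (ENat.natCast_ne_top _)] at this
      simpa using this

end

section
variable {k : Type*} [Field k] {f : MvPolynomial (Fin 3) k}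
  {w : PlanePoint f → MvPolynomial (Fin 3) k → ℕ∞}

theorem pc_line_through (u v : Fin 3 → k) : ∃ l : MvPolynomial (Fin 3) k, l.IsHomogeneous 1 ∧
    l ≠ 0 ∧ eval u l = 0 ∧ eval v l = 0 := by
  let φ : (Fin 3 → k) →ₗ[k] (Fin 2 → k) := LinearMap.pi
    ![∑ i, u i • LinearMap.proj i, ∑ i, v i • LinearMap.proj i]
  have h : LinearMap.ker φ ≠ ⊥ := LinearMap.ker_ne_bot_of_finrank_lt (by simp)
  obtain ⟨c, hc, hc0⟩ := Submodule.exists_mem_ne_zero_of_ne_bot h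
  have hc' := LinearMap.mem_ker.1 hc
  refine ⟨pcLin c, pcLin_hom c, fun h => hc0 (pcLin_inj (h.trans pcLin_zero.symm)), ?_, ?_⟩
  · have := congrFun hc' 0
    simp [φ] at this
    rw [pcLin_eval, ← this]
    exact Finset.sum_congr rfl fun i _ => mul_comm _ _
  · have := congrFun hc' 1
    simp [φ] at this
    rw [pcLin_eval, ← this]
    exact Finset.sum_congr rfl fun i _ => mul_comm _ _

theorem pc_hom_quot {l G : MvPolynomial (Fin 3) k} {n : ℕ} (hl : l.IsHomogeneous 1)
    (hG : G.IsHomogeneous (n + 1)) (h : l ∣ G) : ∃ G', G'.IsHomogeneous n ∧ G = G' * l := by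
  obtain ⟨q, hq⟩ := h
  obtain ⟨G', h1, h2⟩ := pc_comp_mul hl q (n + 1)
  refine ⟨G', h2 n rfl, ?_⟩
  rw [← h1, mul_comm, ← hq, homogeneousComponent_eq_self hG]

/-- number of indices in `B` whose point is `x` -/
noncomputable def pcN {m : ℕ} (p : Fin m → PlanePoint f) (B : Finset (Fin m)) (x : PlanePoint f) :
    ℕ := by
  classical
  exact (B.filter (fun i => p i = x)).card

theorem pcN_union {m : ℕ} (p : Fin m → PlanePoint f) {B B' : Finset (Fin m)} (h : Disjoint B B')
    (x : PlanePoint f) : pcN p (B ∪ B') x = pcN p B x + pcN p B' x := by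
  classical
  unfold pcN
  rw [Finset.filter_union, Finset.card_union_of_disjoint]
  exact Finset.disjoint_filter_filter h

theorem pcN_count [DecidableEq k] {m : ℕ} (p : Fin m → PlanePoint f) (B : Finset (Fin m))
    (τ : PlanePoint f → k) (x : PlanePoint f) :
    pcN p B x ≤ Multiset.count (τ x) (B.val.map (fun i => τ (p i))) := by
  classical
  unfold pcN
  rw [Multiset.count_map, Finset.card_def, Finset.filter_val]
  refine Multiset.card_le_card (Multiset.monotone_filter_right _ ?_)
  intro i h
  rw [h]

theorem pcN_le_one {m : ℕ} (p : Fin m → PlanePoint f) (hp : Function.Injective p)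
    (B : Finset (Fin m)) (x : PlanePoint f) : pcN p B x ≤ 1 := by
  classical
  unfold pcN
  rw [Finset.card_le_one]
  intro i hi j hj
  rw [Finset.mem_filter] at hi hj
  exact hp (hi.2.trans hj.2.symm)

theorem pcN_le_line (hw : PCVal f w) {m : ℕ} (p : Fin m → PlanePoint f)
    (hp : Function.Injective p) (B : Finset (Fin m)) (x : PlanePoint f)
    {l : MvPolynomial (Fin 3) k} (hB : ∀ i ∈ B, eval (p i).1.rep l = 0) :
    (pcN p B x : ℕ∞) ≤ w x l := by
  classical
  by_cases hx : ∃ i ∈ B, p i = x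
  · obtain ⟨i, hi, rfl⟩ := hx
    refine le_trans ?_ ((hw.one_le _ l).2 (hB i hi))
    exact_mod_cast pcN_le_one p hp B (p i)
  · have : pcN p B x = 0 := by
      unfold pcN
      rw [Finset.card_eq_zero, Finset.filter_eq_empty_iff]
      intro i hi h
      exact hx ⟨i, hi, h⟩
    rw [this]; simp

theorem pcN_le_sum (hw : PCVal f w) {m : ℕ} (p : Fin m → PlanePoint f)
    (hp : Function.Injective p) (B : Finset (Fin m)) (x : PlanePoint f)
    {L : Fin m → MvPolynomial (Fin 3) k} (hL : ∀ i, eval (p i).1.rep (L i) = 0) :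
    (pcN p B x : ℕ∞) ≤ ∑ i ∈ B, w x (L i) := by
  classical
  induction B using Finset.induction with
  | empty => simp [pcN]
  | insert j B hj ih =>
    rw [Finset.sum_insert hj, Finset.insert_eq, pcN_union p (by simpa using hj), Nat.cast_add]
    refine add_le_add (pcN_le_line hw p hp _ x ?_) ih
    intro i hi
    rw [Finset.mem_singleton.1 hi]; exact hL j

theorem pc_enat_aux {a b c d e : ℕ∞} (hb : b ≠ ⊤) (h : a + b ≤ c + (d + e)) (hd : d ≤ b) :
    a ≤ c + e := by
  rw [← ENat.add_le_add_iff_right hb]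
  refine h.trans ?_
  rw [add_assoc, add_comm e b]
  exact add_le_add_right (add_le_add_left hd e) c

variable [IsAlgClosed k]

theorem pc_peel {d : ℕ} (hd : 2 ≤ d) (hf : f.IsHomogeneous d) (hp : Prime f)
    (hsm : ∀ v : Fin 3 → k, eval v f = 0 → (∀ i : Fin 3, eval v (pderiv i f) = 0) → v = 0)
    (hw : PCVal f w) {m : ℕ} (hm : m + 1 = d) (p : Fin m → PlanePoint f)
    (hpi : Function.Injective p)
    {l : MvPolynomial (Fin 3) k} (hl : l.IsHomogeneous 1) (hl0 : l ≠ 0)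
    {L : Fin m → MvPolynomial (Fin 3) k} (hL : ∀ i, (L i).IsHomogeneous 1) (hL0 : ∀ i, L i ≠ 0)
    (hLp : ∀ i, eval (p i).1.rep (L i) = 0)
    (A : Finset (Fin m)) (hA : ∀ i, i ∈ A ↔ eval (p i).1.rep l = 0) (hA2 : 2 ≤ A.card)
    (hAm : A.card < m) (T : Finset (Fin m)) :
    Disjoint A T → ∀ G : MvPolynomial (Fin 3) k, G.IsHomogeneous (T.card + 1) →
    (∀ x, w x l + ∑ i ∈ T, w x (L i) ≤ w x G + pcN p Finset.univ x) →
    ∃ c, G = C c * (l * ∏ i ∈ T, L i) := by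
  classical
  have hfin : ∀ {l : MvPolynomial (Fin 3) k}, l.IsHomogeneous 1 → l ≠ 0 → ∀ x, w x l ≠ ⊤ := by
    intro l hl hl0 x
    exact (hw.ord x 1 l hl (fun h => hl0 (pc_dvd_deg hf hp.ne_zero hl (by omega) h))).1
  induction T using Finset.induction with
  | empty =>
    intro _ G hG hle
    obtain ⟨S, τ, hS⟩ := pc_line hd hf hp hsm hw hl hl0
    have hdv : l ∣ G := by
      refine hS.dvd _ G (A.val.map (fun i => τ (p i))) hG ?_ ?_
      · simp; omega
      · intro x hx
        rw [← hS.on x hx]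
        have h1 := hle x
        rw [Finset.sum_empty, add_zero] at h1
        refine h1.trans (add_le_add_right ?_ _)
        have h2 : pcN p Finset.univ x = pcN p A x := by
          unfold pcN
          congr 1
          ext i
          simp only [Finset.mem_filter, Finset.mem_univ, true_and]
          exact ⟨fun h => ⟨(hA i).2 (by rw [h]; exact hx), h⟩, fun h => h.2⟩
        rw [h2]
        exact_mod_cast pcN_count p A τ x
    obtain ⟨G', hG', rfl⟩ := pc_hom_quot hl hG hdv
    rw [Finset.card_empty] at hG'
    refine ⟨coeff 0 G', ?_⟩
    have h3 := totalDegree_eq_zero_iff_eq_C.1 (Nat.le_zero.1 hG'.totalDegree_le)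
    rw [Finset.prod_empty, mul_one, ← h3]
  | insert j T hj ih =>
    intro hdis G hG hle
    rw [Finset.disjoint_insert_right] at hdis
    obtain ⟨S, τ, hS⟩ := pc_line hd hf hp hsm hw (hL j) (hL0 j)
    have hcompl : Disjoint (A ∪ T) (A ∪ T)ᶜ := disjoint_compl_right
    have hN : ∀ x, pcN p Finset.univ x = pcN p A x + pcN p T x + pcN p (A ∪ T)ᶜ x := by
      intro x
      rw [← pcN_union p hdis.2, ← pcN_union p hcompl, Finset.union_compl]
    have hcard : (A ∪ T)ᶜ.card + (A.card + T.card) = m := by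
      rw [← Finset.card_union_of_disjoint hdis.2, Finset.card_compl_add_card]
      simp
    rw [Finset.card_insert_of_notMem hj] at hG
    have hdv : L j ∣ G := by
      refine hS.dvd _ G ((A ∪ T)ᶜ.val.map (fun i => τ (p i))) hG ?_ ?_
      · rw [Multiset.card_map]
        change (A ∪ T)ᶜ.card + _ < d
        omega
      · intro x hx
        rw [← hS.on x hx]
        have h1 := hle x
        rw [Finset.sum_insert hj, hN, Nat.cast_add, Nat.cast_add] at h1
        have h2 : w x (L j) ≤ w x G + pcN p (A ∪ T)ᶜ x := by
          refine pc_enat_aux (b := w x l + ∑ i ∈ T, w x (L i)) ?_ ?_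
            (add_le_add (pcN_le_line hw p hpi A x (fun i hi => (hA i).1 hi))
              (pcN_le_sum hw p hpi T x hLp))
          · refine WithTop.add_ne_top.2 ⟨hfin hl hl0 x, ?_⟩
            exact WithTop.sum_ne_top.2 fun i _ => hfin (hL i) (hL0 i) x
          · refine le_trans (le_of_eq ?_) h1
            ring
        refine h2.trans (add_le_add_right ?_ _)
        exact_mod_cast pcN_count p _ τ x
    obtain ⟨G', hG', rfl⟩ := pc_hom_quot (hL j) hG hdv
    obtain ⟨c, hc⟩ := ih hdis.2 G' hG' (fun x => by
      have h1 := hle x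
      rw [Finset.sum_insert hj, hw.mul] at h1
      rw [← ENat.add_le_add_iff_right (hfin (hL j) (hL0 j) x)]
      refine le_trans (le_of_eq ?_) (h1.trans (le_of_eq ?_)) <;> ring)
    refine ⟨c, ?_⟩
    rw [Finset.prod_insert hj, hc]
    ring

variable {F : Type*} [Field F] [Algebra k F]
  [Algebra (MvPolynomial (Fin 3) k ⧸ Ideal.span {f}) F]

theorem pc_h0_noncollinear {d : ℕ} (hd : 2 ≤ d) (hf : f.IsHomogeneous d) (hp : Prime f)
    (hsm : ∀ v : Fin 3 → k, eval v f = 0 → (∀ i : Fin 3, eval v (pderiv i f) = 0) → v = 0)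
    (hw : PCVal f w) (π : MvPolynomial (Fin 3) k →ₐ[k] F) (hπ : ∀ q, π q = 0 ↔ f ∣ q)
    (hπ' : ∀ q, algebraMap (MvPolynomial (Fin 3) k ⧸ Ideal.span {f}) F
      (Ideal.Quotient.mk (Ideal.span {f}) q) = π q)
    {m : ℕ} (hm : m + 1 = d) (p : Fin m → PlanePoint f) (hpi : Function.Injective p)
    (hnl : ¬ ∃ l : MvPolynomial (Fin 3) k, l.IsHomogeneous 1 ∧ l ≠ 0 ∧
        ∀ i, eval (p i).1.rep l = 0) :
    h0 F f (fun q => (pcN p Finset.univ q : ℤ)) = 1 := by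
  classical
  have hm2 : 2 ≤ m := by
    by_contra hcon
    have hm1 : m = 1 := by omega
    subst hm1
    obtain ⟨l, h1, h2, h3, -⟩ := pc_line_through (p 0).1.rep (p 0).1.rep
    refine hnl ⟨l, h1, h2, fun i => ?_⟩
    rw [Subsingleton.elim i 0]; exact h3
  obtain ⟨l, hl, hl0, hlp0, hlp1⟩ := pc_line_through (p ⟨0, by omega⟩).1.rep (p ⟨1, by omega⟩).1.rep
  choose L hL hL0 hLp _hLp' using fun i => pc_line_through (p i).1.rep (p i).1.rep
  let A : Finset (Fin m) := Finset.univ.filter (fun i => eval (p i).1.rep l = 0)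
  have hA : ∀ i, i ∈ A ↔ eval (p i).1.rep l = 0 := by intro i; simp [A]
  have hA2 : 2 ≤ A.card := by
    change 1 < A.card
    rw [Finset.one_lt_card]
    exact ⟨_, (hA _).2 hlp0, _, (hA _).2 hlp1, by simp [Fin.ext_iff]⟩
  have hAm : A.card < m := by
    have : A ⊂ Finset.univ := by
      rw [Finset.ssubset_univ_iff]
      intro h
      exact hnl ⟨l, hl, hl0, fun i => (hA i).1 (by rw [h]; simp)⟩
    simpa using Finset.card_lt_card this
  have hndv : ∀ {l : MvPolynomial (Fin 3) k}, l.IsHomogeneous 1 → l ≠ 0 → ¬ f ∣ l :=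
    fun hl hl0 h => hl0 (pc_dvd_deg hf hp.ne_zero hl (by omega) h)
  set H : MvPolynomial (Fin 3) k := l * ∏ i ∈ Aᶜ, L i with hHdef
  have hH : H.IsHomogeneous (Aᶜ.card + 1) := by
    rw [add_comm]
    refine hl.mul ?_
    have := IsHomogeneous.prod Aᶜ L (fun _ => 1) (fun i _ => hL i)
    simpa using this
  have hfH : ¬ f ∣ H := by
    intro h
    rcases hp.dvd_or_dvd h with h | h
    · exact hndv hl hl0 h
    · obtain ⟨i, -, hi⟩ := (hp.dvd_finsetProd_iff _).1 h
      exact hndv (hL i) (hL0 i) hi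
  have hwH : ∀ x, w x H = w x l + ∑ i ∈ Aᶜ, w x (L i) := by
    intro x; rw [hw.mul, hw.prod]
  have hD : ∀ x, (pcN p Finset.univ x : ℕ∞) ≤ w x H := by
    intro x
    rw [hwH, ← Finset.union_compl A, pcN_union p disjoint_compl_right, Nat.cast_add]
    exact add_le_add (pcN_le_line hw p hpi A x (fun i hi => (hA i).1 hi))
              (pcN_le_sum hw p hpi _ x hLp)
  have hH0 : π H ≠ 0 := fun h0 => hfH ((hπ H).1 h0)
  have hset : Submodule.span k (RRspace F f (fun q => (pcN p Finset.univ q : ℤ))) =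
      Submodule.span k {(1 : F)} := by
    apply le_antisymm
    · rw [Submodule.span_le]
      intro φ hφ
      rw [pc_rr_iff hd hf hp hw π hπ hπ' (pcN p Finset.univ) hH hfH hD] at hφ
      obtain ⟨G, hG, he, hle⟩ := hφ
      obtain ⟨c, hc⟩ := pc_peel hd hf hp hsm hw hm p hpi hl hl0 hL hL0 hLp A hA hA2 hAm Aᶜ
        disjoint_compl_right G hG (fun x => by rw [← hwH]; exact hle x)
      rw [SetLike.mem_coe, Submodule.mem_span_singleton]
      refine ⟨c, ?_⟩
      rw [← hHdef] at hc
      have hπC : π (C c) = algebraMap k F c := by rw [← algebraMap_eq, AlgHom.commutes]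
      rw [hc, map_mul π (C c) H, hπC] at he
      rw [← Algebra.algebraMap_eq_smul_one]
      exact (mul_right_cancel₀ hH0 he).symm
    · rw [Submodule.span_le, Set.singleton_subset_iff]
      apply Submodule.subset_span
      rw [pc_rr_iff hd hf hp hw π hπ hπ' (pcN p Finset.univ) hH hfH hD]
      exact ⟨H, hH, one_mul _, fun x => le_self_add⟩
  rw [h0, hset]
  exact finrank_span_singleton one_ne_zero

end

end PCProof

open Classical in
/-- Let `C ⊆ ℙ²_k` be a smooth plane curve of degree `d ≥ 2` over an algebraically closed
field, let `p₁, …, p_{d-1}` be distinct points of `C` and `L = O_C(p₁ + ⋯ + p_{d-1})`.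
If the points do not all lie on a line then `h⁰(C, L) = 1`; if they all lie on a line `ℓ`,
then `h⁰(C, L) = 2` and `h⁰(C, O_C(ℓ ∩ C)) = 3`, where `ℓ ∩ C` is the intersection divisor
of `ℓ` with `C`. -/
theorem h0_of_d_sub_one_points
    (k : Type*) [Field k] [IsAlgClosed k]
    (d : ℕ) (hd : 2 ≤ d) (f : MvPolynomial (Fin 3) k) (hf : f.IsHomogeneous d)
    (hsm : ∀ v : Fin 3 → k, MvPolynomial.eval v f = 0 →
      (∀ i : Fin 3, MvPolynomial.eval v (MvPolynomial.pderiv i f) = 0) → v = 0)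
    (m : ℕ) (hm : m + 1 = d)
    (p : Fin m → PlanePoint f) (hp : Function.Injective p)
    (F : Type*) [Field F]
    [Algebra (MvPolynomial (Fin 3) k ⧸ Ideal.span {f}) F]
    [IsFractionRing (MvPolynomial (Fin 3) k ⧸ Ideal.span {f}) F]
    [Algebra k F] [IsScalarTower k (MvPolynomial (Fin 3) k ⧸ Ideal.span {f}) F] :
    ((¬ ∃ l : MvPolynomial (Fin 3) k, l.IsHomogeneous 1 ∧ l ≠ 0 ∧
        ∀ i, MvPolynomial.eval (p i).1.rep l = 0) →
      h0 F f (fun q => ((Finset.univ.filter (fun i => p i = q)).card : ℤ)) = 1) ∧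
    (∀ l : MvPolynomial (Fin 3) k, l.IsHomogeneous 1 → l ≠ 0 →
      (∀ i, MvPolynomial.eval (p i).1.rep l = 0) →
      h0 F f (fun q => ((Finset.univ.filter (fun i => p i = q)).card : ℤ)) = 2 ∧
      h0 F f (fun q => (ordAt f q l : ℤ)) = 3) := by
  have hf0 : f ≠ 0 := by
    rintro rfl
    have h1 := hsm (fun _ => 1) (by simp) (by simp)
    exact one_ne_zero (congrFun h1 0)
  let π : MvPolynomial (Fin 3) k →ₐ[k] F :=
    (IsScalarTower.toAlgHom k (MvPolynomial (Fin 3) k ⧸ Ideal.span {f}) F).comp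
      (Ideal.Quotient.mkₐ k (Ideal.span {f}))
  have hπ' : ∀ q, algebraMap (MvPolynomial (Fin 3) k ⧸ Ideal.span {f}) F
      (Ideal.Quotient.mk (Ideal.span {f}) q) = π q := fun q => rfl
  have hπ : ∀ q, π q = 0 ↔ f ∣ q := by
    intro q
    rw [← hπ', ← Ideal.mem_span_singleton, ← Ideal.Quotient.eq_zero_iff_mem]
    exact map_eq_zero_iff _ (IsFractionRing.injective _ F)
  have hpr : Prime f := pc_prime π hπ hf0
  obtain ⟨w, hw⟩ := pc_exists_val hd hf hf0 hsm π hπ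
  refine ⟨fun hnl => ?_, fun l hl hl0 hpl => ⟨?_, ?_⟩⟩
  · have h1 := pc_h0_noncollinear hd hf hpr hsm hw π hπ hπ' hm p hp hnl
    rw [← h1]
    congr 1
  · refine pc_h0_collinear hd hf hpr hsm hw π hπ hπ' hl hl0 hm p hp hpl
      (fun q => (Finset.univ.filter (fun i => p i = q)).card) ?_
    intro q _
    congr
  · exact pc_h0_line hd hf hpr hw π hπ hπ' hl hl0
end

section
/- Let $k$ be an algebraically closed field and let $C \subset \mathbb{P}^2_k$ be a smooth plane curve of degree $d \geq 4$. Then $C$ has no $g^1_m$ for any $m \leq d-2$: that is, every line bundle $\mathcal{L}$ on $C$ of degree $m \leq d-2$ satisfies $h^0(C, \mathcal{L}) \leq 1$. Equivalently, every divisor $D$ on $C$ of degree at most $d-2$ satisfies $\ell(D) \leq 1$. (In particular, $C$ admits no dominant morphism to $\mathbb{P}^1_k$ of degree at most $d-2$; this holds in every characteristic.) -/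
namespace PCurve
open MvPolynomial

section Alg
variable {k : Type*} [Field k]

local notation "S" => MvPolynomial (Fin 3) k

lemma hc_mul_sum {m e : ℕ} (a g : S) (hg : g.IsHomogeneous e) :
    homogeneousComponent m (a * g) = ∑ j ∈ Finset.range (a.totalDegree + 1),
      if m = j + e then homogeneousComponent j a * g else 0 := by
  conv_lhs => rw [← sum_homogeneousComponent a, Finset.sum_mul, map_sum]
  refine Finset.sum_congr rfl fun j _ => ?_
  exact homogeneousComponent_of_mem ((mem_homogeneousSubmodule _ _).2
    ((homogeneousComponent_isHomogeneous j a).mul hg))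

lemma hc_mul_right {n e : ℕ} (a g : S) (hg : g.IsHomogeneous e) :
    homogeneousComponent (n + e) (a * g) = homogeneousComponent n a * g := by
  rw [hc_mul_sum a g hg, Finset.sum_eq_single n]
  · simp
  · intro j _ hj
    rw [if_neg (by omega)]
  · intro hn
    rw [if_pos rfl, homogeneousComponent_eq_zero _ _ (by simp at hn; omega), zero_mul]

lemma hc_mul_right_lt {n e : ℕ} (h : n < e) (a g : S) (hg : g.IsHomogeneous e) :
    homogeneousComponent n (a * g) = 0 := by
  rw [hc_mul_sum a g hg]
  refine Finset.sum_eq_zero fun j _ => ?_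
  rw [if_neg (by omega)]

/-- Koszul type lemma: first step. -/
lemma koszul_aux {a b c : S} (h : X 0 * a + X 1 * b + X 2 * c = 0) :
    ∃ r s u : S, a = X 2 * r - X 1 * u ∧ b = X 2 * s + X 0 * u ∧ c = - (X 0 * r) - X 1 * s := by
  set e : Fin 3 →₀ ℕ := Finsupp.single 2 1
  set a' := a.divMonomial e
  set b' := b.divMonomial e
  set a0 := a.modMonomial e with ha0
  set b0 := b.modMonomial e with hb0
  have ha : X 2 * a' + a0 = a := divMonomial_add_modMonomial_single a 2
  have hb : X 2 * b' + b0 = b := divMonomial_add_modMonomial_single b 2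
  have hz : X 0 * a0 + X 1 * b0 = 0 := by
    have hd : (X 2 : S) ∣ X 0 * a0 + X 1 * b0 :=
      ⟨-(X 0 * a' + X 1 * b' + c), by linear_combination h + X 0 * ha + X 1 * hb⟩
    ext m
    rw [coeff_zero]
    by_cases hm : m 2 = 0
    · obtain ⟨q, hq⟩ := hd
      rw [hq, coeff_X_mul', if_neg (by simp [hm])]
    · have key : ∀ (i : Fin 3) (y : S), i ≠ 2 →
          coeff m (X i * (y.modMonomial e)) = 0 := by
        intro i y hi
        rw [coeff_X_mul']
        split_ifs with h1
        · apply coeff_modMonomial_of_le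
          rw [Finsupp.single_le_iff]
          simp [hi]
          omega
        · rfl
      rw [coeff_add, ha0, hb0, key 0 a (by decide), key 1 b (by decide), add_zero]
  have h01 : (X 0 : S) ∣ b0 := by
    have : (X 0 : S) ∣ X 1 * b0 := ⟨-a0, by linear_combination hz⟩
    rcases (X_prime (i := (0 : Fin 3)) (R := k)).dvd_or_dvd this with h | h
    · rw [X_dvd_X] at h; exact absurd h (by decide)
    · exact h
  obtain ⟨u, hu⟩ := h01
  have ha0' : a0 = - (X 1 * u) := by
    have : (X 0 : S) * (a0 + X 1 * u) = 0 := by rw [hu] at hz; linear_combination hz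
    rcases mul_eq_zero.1 this with h | h
    · exact absurd h (X_ne_zero _)
    · linear_combination h
  refine ⟨a', b', u, by rw [← ha, ha0']; ring, by rw [← hb, hu], ?_⟩
  have : (X 2 : S) * (X 0 * a' + X 1 * b' + c) = 0 := by
    rw [← ha, ← hb, hu, ha0'] at h; linear_combination h
  rcases mul_eq_zero.1 this with h | h
  · exact absurd h (X_ne_zero _)
  · linear_combination h

lemma koszul_one {y : Fin 3 → S} (h : ∀ i j, X j * y i = X i * y j) : ∃ w, ∀ i, y i = X i * w := by
  have h01 : (X 0 : S) ∣ y 0 := by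
    have : (X 0 : S) ∣ X 1 * y 0 := ⟨y 1, h 0 1⟩
    rcases (X_prime (i := (0 : Fin 3)) (R := k)).dvd_or_dvd this with h | h
    · rw [X_dvd_X] at h; exact absurd h (by decide)
    · exact h
  obtain ⟨w, hw⟩ := h01
  refine ⟨w, fun i => ?_⟩
  have : (X 0 : S) * (y i - X i * w) = 0 := by linear_combination h i 0 + X i * hw
  rcases mul_eq_zero.1 this with h | h
  · exact absurd h (X_ne_zero _)
  · linear_combination h

lemma not_dvd_X_all {f : S} (hf : Prime f) {g : S} (h : ∀ i, f ∣ X i * g) : f ∣ g := by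
  by_contra hg
  have h0 := ((hf.dvd_or_dvd (h 0)).resolve_right hg)
  have h1 := ((hf.dvd_or_dvd (h 1)).resolve_right hg)
  have a0 := (hf.irreducible.associated_of_dvd (X_prime (i := (0 : Fin 3)) (R := k)).irreducible h0)
  have a1 := (hf.irreducible.associated_of_dvd (X_prime (i := (1 : Fin 3)) (R := k)).irreducible h1)
  have := (a0.symm.trans a1).dvd
  rw [X_dvd_X] at this; exact absurd this (by decide)

/-- `(f, h)` has depth: if `X i * g ∈ (f,h)` for all `i` then `g ∈ (f,h)`. -/
lemma sat_one {f h g : S} (hf : Prime f) (hh : ¬ f ∣ h)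
    (H : ∀ i, X i * g ∈ Ideal.span {f, h}) : g ∈ Ideal.span {f, h} := by
  simp only [Ideal.mem_span_pair] at H ⊢
  choose α β hαβ using H
  have hf0 := hf.ne_zero
  have ht : ∀ i j, ∃ t, X j * β i - X i * β j = f * t := by
    intro i j
    have : f ∣ (X j * β i - X i * β j) * h :=
      ⟨X i * α j - X j * α i, by linear_combination X j * hαβ i - X i * hαβ j⟩
    exact (hf.dvd_or_dvd this).resolve_right hh
  obtain ⟨t01, e01⟩ := ht 0 1
  obtain ⟨t12, e12⟩ := ht 1 2
  obtain ⟨t20, e20⟩ := ht 2 0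
  have hz : X 0 * t12 + X 1 * t20 + X 2 * t01 = 0 := by
    have : f * (X 0 * t12 + X 1 * t20 + X 2 * t01) = 0 := by
      linear_combination - X 0 * e12 - X 1 * e20 - X 2 * e01
    exact (mul_eq_zero.1 this).resolve_left hf0
  obtain ⟨r, s, u, h12, h20, h01⟩ := koszul_aux hz
  -- t12 = X2 r - X1 u ; t20 = X2 s + X0 u; t01 = -X0 r - X1 s
  -- want t_ij = X j s_i - X i s_j
  obtain ⟨w, hw⟩ := koszul_one (y := ![β 0 + f * s, β 1 - f * r, β 2 - f * u]) (by
    have k01 : X 1 * (β 0 + f * s) = X 0 * (β 1 - f * r) := by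
      rw [h01] at e01; linear_combination e01
    have k12 : X 2 * (β 1 - f * r) = X 1 * (β 2 - f * u) := by
      rw [h12] at e12; linear_combination e12
    have k20 : X 0 * (β 2 - f * u) = X 2 * (β 0 + f * s) := by
      rw [h20] at e20; linear_combination e20
    intro i j
    fin_cases i <;> fin_cases j <;> simp <;> first | exact k01 | exact k01.symm | exact k12 | exact k12.symm | exact k20 | exact k20.symm)
  have hd : f ∣ g - w * h := by
    apply not_dvd_X_all hf
    intro i
    have hb : ∃ q, β i = X i * w + f * q := by
      fin_cases i
      · exact ⟨-s, by have := hw 0; simp at this; simp; linear_combination this⟩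
      · exact ⟨r, by have := hw 1; simp at this; simp; linear_combination this⟩
      · exact ⟨u, by have := hw 2; simp at this; simp; linear_combination this⟩
    obtain ⟨q, hq⟩ := hb
    exact ⟨α i + q * h, by linear_combination - hαβ i + h * hq⟩
  obtain ⟨q, hq⟩ := hd
  exact ⟨q, w, by linear_combination -hq⟩

lemma sat {f h : S} (hf : Prime f) (hh : ¬ f ∣ h) (n : ℕ) : ∀ g : S,
    (∀ y ∈ (Ideal.span (Set.range (X : Fin 3 → S))) ^ n, y * g ∈ Ideal.span {f, h}) →
    g ∈ Ideal.span {f, h} := by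
  induction n with
  | zero => intro g H; simpa using H 1 (by simp)
  | succ n ih =>
    intro g H
    apply sat_one hf hh
    intro i
    apply ih
    intro y hy
    rw [← mul_assoc]
    apply H
    rw [pow_succ]
    exact Ideal.mul_mem_mul hy (Ideal.subset_span ⟨i, rfl⟩)

lemma theta_hom {y : S} (K : Type*) [Field K] [Algebra S K] [Algebra k K] [IsScalarTower k S K]
    (hy0 : algebraMap S K y ≠ 0) (G : S) (e : ℕ) (hG : G.IsHomogeneous e) :
    algebraMap S K G = algebraMap S K y ^ e *
      aeval (fun j => algebraMap S K (X j) * (algebraMap S K y)⁻¹) G := by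
  have h1 : algebraMap S K G = aeval (fun j => algebraMap S K (X j)) G := by
    have := aeval_algebraMap_apply K (X : Fin 3 → S) G
    rw [aeval_X_left_apply] at this
    exact this.symm
  rw [mul_comm, h1, aeval_def, aeval_def, eval₂_eq, eval₂_eq, Finset.sum_mul]
  refine Finset.sum_congr rfl fun m hm => ?_
  have hdeg : ∑ i ∈ m.support, m i = e := (hG.degree_eq_sum_deg_support hm).symm
  rw [← hdeg, ← Finset.prod_pow_eq_pow_sum, mul_assoc, ← Finset.prod_mul_distrib]
  congr 1
  refine Finset.prod_congr rfl fun i _ => ?_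
  rw [← mul_pow, mul_assoc, inv_mul_cancel₀ hy0, mul_one]

/-- Homogenization. -/
lemma homogenize {v : Fin 3 → k} {y : S} (hy : y.IsHomogeneous 1) (hyv : eval v y = 1)
    (K : Type*) [Field K] [Algebra S K] [IsFractionRing S K] [Algebra k K] [IsScalarTower k S K]
    (P : S) (N : ℕ) (hN : P.totalDegree ≤ N) : ∃ P' : S, P'.IsHomogeneous N ∧ eval v P' = eval v P ∧
      algebraMap S K P' = (algebraMap S K y) ^ N *
        aeval (fun j => algebraMap S K (X j) * (algebraMap S K y)⁻¹) P := by
  have hy0 : algebraMap S K y ≠ 0 := by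
    intro h
    rw [map_eq_zero_iff _ (IsFractionRing.injective S K)] at h
    simp [h] at hyv
  have hP : P = ∑ j ∈ Finset.range (N + 1), homogeneousComponent j P := by
    conv_lhs => rw [← sum_homogeneousComponent P]
    apply Finset.sum_subset
    · intro x; simp; omega
    · intro x _ hx
      apply homogeneousComponent_eq_zero
      simp at hx; omega
  refine ⟨∑ j ∈ Finset.range (N + 1), y ^ (N - j) * homogeneousComponent j P, ?_, ?_, ?_⟩
  · apply IsHomogeneous.sum
    intro j hj
    have := (hy.pow (N - j)).mul (homogeneousComponent_isHomogeneous j P)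
    convert this using 1
    simp at hj; omega
  · conv_rhs => rw [hP]
    simp [hyv]
  · conv_rhs => rw [hP]
    simp only [map_sum, map_mul, map_pow, Finset.mul_sum]
    refine Finset.sum_congr rfl fun j hj => ?_
    rw [theta_hom K hy0 _ j (homogeneousComponent_isHomogeneous j P)]
    have : N = N - j + j := by simp at hj; omega
    conv_rhs => rw [this, pow_add]
    ring

lemma remove_slice_aux (K : Type*) [Field K] [Algebra S K] [IsFractionRing S K] [Algebra k K]
    [IsScalarTower k S K] {v : Fin 3 → k} {y : S} (hy : y.IsHomogeneous 1) (hyv : eval v y = 1)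
    {f h g s : S} {d e n : ℕ} (hf : f.IsHomogeneous d) (hh : h.IsHomogeneous e)
    (hg : g.IsHomogeneous n) (hs : eval v s ≠ 0) (hmem : s * g ∈ Ideal.span {h, f, y - 1}) :
    ∃ (m : ℕ) (s' : S), s'.IsHomogeneous m ∧ eval v s' ≠ 0 ∧ s' * g ∈ Ideal.span {f, h} := by
  obtain ⟨b, hb⟩ := (Ideal.mem_span_insert' _ _ _).1 hmem
  obtain ⟨a, c, hE⟩ := Ideal.mem_span_pair.1 hb
  -- a * f + c * (y - 1) = s * g + b * h
  let θ : S →ₐ[k] K := aeval (fun j => algebraMap S K (X j) * (algebraMap S K y)⁻¹)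
  have hinj := IsFractionRing.injective S K
  obtain ⟨s', hs'1, hs'2, hs'3⟩ := homogenize hy hyv K s _ le_rfl
  obtain ⟨a', -, -, ha'⟩ := homogenize hy hyv K a _ le_rfl
  obtain ⟨b', -, -, hb'⟩ := homogenize hy hyv K b _ le_rfl
  have hy0 : algebraMap S K y ≠ 0 := by
    intro h
    rw [map_eq_zero_iff _ hinj] at h
    simp [h] at hyv
  have hhom : ∀ (G : S) (e : ℕ), G.IsHomogeneous e →
      algebraMap S K G = algebraMap S K y ^ e * θ G := by
    exact fun G e hG => theta_hom K hy0 G e hG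
  have hθy : θ y = 1 := by
    have := hhom y 1 hy
    rw [pow_one] at this
    exact (mul_right_injective₀ hy0 (by simpa using this)).symm
  have hE' := congrArg θ hE
  simp only [map_add, map_mul, map_sub, map_one, hθy, sub_self, mul_zero, add_zero] at hE'
  set A := a.totalDegree
  set B := b.totalDegree
  set T := s.totalDegree
  set Y := algebraMap S K y
  refine ⟨T + (A + B + d + e), s' * y ^ (A + B + d + e), ?_, ?_, ?_⟩
  · have := hs'1.mul (hy.pow (A + B + d + e)); rwa [one_mul] at this
  · simp [hyv, hs'2, hs]
  · rw [Ideal.mem_span_pair]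
    refine ⟨a' * y ^ (T + n + B + e), - b' * y ^ (T + n + A + d), ?_⟩
    apply hinj
    simp only [map_add, map_mul, map_pow, map_neg]
    rw [hhom f d hf, hhom h e hh, hhom g n hg, hs'3, ha', hb']
    change (Y ^ A * θ a) * Y ^ _ * (Y ^ d * θ f) + -(Y ^ B * θ b) * Y ^ _ * (Y ^ e * θ h) =
      (Y ^ T * θ s) * Y ^ _ * (Y ^ n * θ g)
    ring_nf
    linear_combination Y ^ (A + B + T + n + d + e) * hE'

lemma remove_slice {v : Fin 3 → k} {y : S} (hy : y.IsHomogeneous 1) (hyv : eval v y = 1)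
    {f h g s : S} {d e n : ℕ} (hf : f.IsHomogeneous d) (hh : h.IsHomogeneous e)
    (hg : g.IsHomogeneous n) (hs : eval v s ≠ 0) (hmem : s * g ∈ Ideal.span {h, f, y - 1}) :
    ∃ (m : ℕ) (s' : S), s'.IsHomogeneous m ∧ eval v s' ≠ 0 ∧ s' * g ∈ Ideal.span {f, h} :=
  remove_slice_aux (FractionRing S) hy hyv hf hh hg hs hmem

lemma finrank_hom (n : ℕ) : Module.finrank k (homogeneousSubmodule (Fin 3) k n) = (n + 2).choose 2 := by
  classical
  rw [homogeneousSubmodule_eq_finsupp_supported,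
    (AddMonoidAlgebra.supportedEquivFinsupp (R := k) _).finrank_eq]
  have hs : {d : Fin 3 →₀ ℕ | d.degree = n} =
      ((Finset.univ : Finset (Fin 3)).finsuppAntidiag n : Set (Fin 3 →₀ ℕ)) := by
    ext m
    simp [Finset.mem_finsuppAntidiag, Finsupp.degree_eq_sum]
  rw [hs, Module.finrank_finsupp_self]
  have := Finset.card_finsuppAntidiag_nat_eq_choose (s := (Finset.univ : Finset (Fin 3))) n
  simp only [Finset.coe_sort_coe, Fintype.card_coe, this, Finset.card_univ, Fintype.card_fin]
  rw [show 3 + n - 1 = n + 2 by omega, ← Nat.choose_symm_of_eq_add (n := n + 2) (a := 2) (b := n)]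
  omega

instance finite_hom (n : ℕ) : Module.Finite k (homogeneousSubmodule (Fin 3) k n) :=
  Module.Finite.of_fg (homogeneousSubmodule_fg _ _ n)

/-- Multiplication by a homogeneous form, and its image. -/
noncomputable def mulImg (h : S) (n : ℕ) : Submodule k S :=
  (homogeneousSubmodule (Fin 3) k n).map (LinearMap.mulLeft k h)

lemma mem_mulImg {h x : S} {n : ℕ} : x ∈ mulImg h n ↔ ∃ y : S, y.IsHomogeneous n ∧ h * y = x := by
  simp [mulImg]

lemma finrank_mulImg {h : S} (hh : h ≠ 0) (n : ℕ) :
    Module.finrank k (mulImg h n) = (n + 2).choose 2 := by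
  rw [← finrank_hom (k := k) n]
  exact (LinearEquiv.finrank_eq (Submodule.equivMapOfInjective (LinearMap.mulLeft k h)
    (fun a b hab => mul_left_cancel₀ hh hab) (homogeneousSubmodule (Fin 3) k n))).symm

instance finite_mulImg (h : S) (n : ℕ) : Module.Finite k (mulImg h n) := by
  unfold mulImg; infer_instance

lemma finrank_sup_mulImg {f h : S} {d e : ℕ} (hfp : Prime f) (hfh : ¬ f ∣ h)
    (hf : f.IsHomogeneous d) (hh : h.IsHomogeneous e) (n : ℕ) :
    Module.finrank k ↥(mulImg f (n + e) ⊔ mulImg h (n + d)) + d * e = (n + d + e + 2).choose 2 := by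
  have hh0 : h ≠ 0 := fun h0 => hfh (h0 ▸ dvd_zero f)
  have hinf : mulImg f (n + e) ⊓ mulImg h (n + d) = mulImg (f * h) n := by
    ext x
    simp only [Submodule.mem_inf, mem_mulImg]
    constructor
    · rintro ⟨⟨y, hy, rfl⟩, ⟨z, hz, hzy⟩⟩
      have : f ∣ h * z := ⟨y, hzy⟩
      obtain ⟨w, rfl⟩ := (hfp.dvd_or_dvd this).resolve_left hfh
      refine ⟨homogeneousComponent n w, homogeneousComponent_isHomogeneous _ _, ?_⟩
      have h1 := hc_mul_right (n := n) w f hf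
      rw [mul_comm w f, homogeneousComponent_eq_self hz] at h1
      rw [← hzy, h1]; ring
    · rintro ⟨y, hy, rfl⟩
      refine ⟨⟨h * y, ?_, by ring⟩, ⟨f * y, ?_, by ring⟩⟩
      · rw [mul_comm]; exact hy.mul hh
      · rw [mul_comm]; exact hy.mul hf
  have h1 := Submodule.finrank_sup_add_finrank_inf_eq (mulImg f (n + e)) (mulImg h (n + d))
  rw [hinf, finrank_mulImg hfp.ne_zero, finrank_mulImg hh0,
    finrank_mulImg (mul_ne_zero hfp.ne_zero hh0)] at h1
  have cast : ∀ m : ℕ, (m + 2).choose 2 * 2 = (m + 2) * (m + 1) := by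
    intro m
    rw [Nat.choose_two_right, Nat.div_mul_cancel]
    · rfl
    · exact (Nat.even_mul_pred_self (m + 2)).two_dvd
  have c1 := cast n
  have c2 := cast (n + e)
  have c3 := cast (n + d)
  have c4 := cast (n + d + e)
  nlinarith

end Alg
end PCurve

namespace PCurve
open MvPolynomial

section Loc
variable {k : Type*} [Field k]

local notation "S" => MvPolynomial (Fin 3) k

/-- Vanishing to order at least `n` at `v`. -/
def InJ (f sl : S) (v : Fin 3 → k) (n : ℕ) (g : S) : Prop :=
  ∃ h : S, eval v h ≠ 0 ∧ h * g ∈ Ideal.span {f, sl} + (RingHom.ker (eval v)) ^ n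

universe u

lemma exists_local {k : Type u} [Field k] (f sl : MvPolynomial (Fin 3) k) (v : Fin 3 → k)
    (hf : eval v f = 0) (hsl : eval v sl = 0) :
    ∃ (Q : Type u) (_ : CommRing Q) (_ : IsLocalRing Q) (_ : IsNoetherianRing Q)
      (θ : MvPolynomial (Fin 3) k →+* Q),
      (∀ n g, InJ f sl v n g ↔ θ g ∈ (IsLocalRing.maximalIdeal Q) ^ n) ∧
      (∀ g, θ g = 0 ↔ ∃ s, eval v s ≠ 0 ∧ s * g ∈ Ideal.span {f, sl}) ∧
      (∀ x : Q, ∃ r s, eval v s ≠ 0 ∧ x * θ s = θ r) ∧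
      IsLocalRing.maximalIdeal Q = (RingHom.ker (eval v)).map θ ∧
      (∀ s, eval v s ≠ 0 → IsUnit (θ s)) := by
  classical
  set I : Ideal (MvPolynomial (Fin 3) k) := Ideal.span {f, sl} with hI
  set M : Ideal (MvPolynomial (Fin 3) k) := RingHom.ker (eval v) with hM
  have hIM : I ≤ M := by
    rw [hI, Ideal.span_le]
    rintro x (rfl | rfl) <;> simpa [hM, RingHom.mem_ker]
  have hMp : M.IsPrime := RingHom.ker_isPrime _
  set π := Ideal.Quotient.mk I
  have hsurj : Function.Surjective π := Ideal.Quotient.mk_surjective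
  set P := M.map π with hP
  have : P.IsPrime := Ideal.map_isPrime_of_surjective hsurj (by rwa [Ideal.mk_ker])
  have hPmem : ∀ s, π s ∈ P ↔ s ∈ M := by
    intro s
    rw [hP, Ideal.mem_quotient_iff_mem hIM]
  let Q := Localization.AtPrime P
  have hθ0 : ∀ (J : Ideal (MvPolynomial (Fin 3) k)) g, algebraMap _ Q (π g) ∈ (J.map π).map (algebraMap _ Q) ↔
      ∃ s, eval v s ≠ 0 ∧ s * g ∈ I + J := by
    intro J g
    rw [IsLocalization.algebraMap_mem_map_algebraMap_iff P.primeCompl]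
    constructor
    · rintro ⟨m, hm, hmem⟩
      obtain ⟨s, rfl⟩ := hsurj m
      refine ⟨s, fun h => hm ((hPmem s).2 h), ?_⟩
      rw [← map_mul, Ideal.mem_quotient_iff_mem_sup] at hmem
      rwa [Submodule.add_eq_sup, sup_comm]
    · rintro ⟨s, hs, hmem⟩
      refine ⟨π s, fun h => hs ((hPmem s).1 h), ?_⟩
      rw [← map_mul, Ideal.mem_quotient_iff_mem_sup]
      rwa [Submodule.add_eq_sup, sup_comm] at hmem
  refine ⟨Q, inferInstance, inferInstance, IsLocalization.isNoetherianRing P.primeCompl Q inferInstance,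
    (algebraMap _ Q).comp π, ?_, ?_, ?_, ?_, ?_⟩
  · intro n g
    rw [← Localization.AtPrime.map_eq_maximalIdeal, ← Ideal.map_pow,
      show P ^ n = (M ^ n).map π from (Ideal.map_pow _ _ _).symm]
    exact (hθ0 _ g).symm
  · intro g
    have := hθ0 ⊥ g
    rw [Ideal.map_bot, Ideal.map_bot, Ideal.mem_bot, Submodule.add_eq_sup, sup_bot_eq] at this
    exact this
  · intro x
    obtain ⟨⟨a, s⟩, h⟩ := IsLocalization.surj P.primeCompl x
    obtain ⟨r, hr⟩ := hsurj a
    obtain ⟨s', hs'⟩ := hsurj s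
    refine ⟨r, s', fun h0 => s.2 (by rw [← hs']; exact (hPmem s').2 h0), ?_⟩
    simp only [RingHom.comp_apply, hr, hs']
    exact h
  · rw [← Localization.AtPrime.map_eq_maximalIdeal, ← Ideal.map_map]
  · intro s hs
    exact IsLocalization.map_units Q (⟨π s, fun h => hs ((hPmem s).1 h)⟩ : P.primeCompl)

/-- In a local ring with principal maximal ideal `(t)`. -/
lemma unit_pow_of_not_mem {Q : Type*} [CommRing Q] [IsLocalRing Q] {t x : Q}
    (ht : IsLocalRing.maximalIdeal Q = Ideal.span {t}) (n : ℕ)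
    (hx : x ∉ (IsLocalRing.maximalIdeal Q) ^ (n + 1)) :
    ∃ (m : ℕ) (w : Q), m ≤ n ∧ IsUnit w ∧ x = w * t ^ m := by
  induction n generalizing x with
  | zero =>
    refine ⟨0, x, le_rfl, ?_, by simp⟩
    rw [zero_add, pow_one] at hx
    by_contra h
    exact hx ((IsLocalRing.mem_maximalIdeal x).2 h)
  | succ n ih =>
    by_cases hu : IsUnit x
    · exact ⟨0, x, Nat.zero_le _, hu, by simp⟩
    · have : x ∈ IsLocalRing.maximalIdeal Q := (IsLocalRing.mem_maximalIdeal x).2 hu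
      rw [ht, Ideal.mem_span_singleton'] at this
      obtain ⟨y, rfl⟩ := this
      have hy : y ∉ (IsLocalRing.maximalIdeal Q) ^ (n + 1) := by
        intro hy
        apply hx
        rw [pow_succ _ (n + 1)]
        exact Ideal.mul_mem_mul hy (by rw [ht]; exact Ideal.mem_span_singleton_self t)
      obtain ⟨m, w, hm, hw, rfl⟩ := ih hy
      exact ⟨m + 1, w, by omega, hw, by ring⟩

lemma pow_mem_iff {Q : Type*} [CommRing Q] [IsLocalRing Q] {t : Q}
    (ht : IsLocalRing.maximalIdeal Q = Ideal.span {t}) (hn : ¬ IsNilpotent t) (a b : ℕ) :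
    t ^ a ∈ (IsLocalRing.maximalIdeal Q) ^ b ↔ b ≤ a := by
  constructor
  · intro h
    by_contra hab
    have hb : b = a + 1 + (b - a - 1) := by omega
    rw [ht, Ideal.span_singleton_pow, Ideal.mem_span_singleton'] at h
    obtain ⟨y, hy⟩ := h
    have h2 : t ^ a * (1 - y * t ^ (b - a - 1) * t) = 0 := by
      rw [hb, pow_add, pow_succ] at hy
      linear_combination -hy
    have htm : t ∈ IsLocalRing.maximalIdeal Q := by rw [ht]; exact Ideal.mem_span_singleton_self t
    have hu : IsUnit (1 - y * t ^ (b - a - 1) * t) := by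
      by_contra hu
      have h3 := (IsLocalRing.mem_maximalIdeal _).2 hu
      have h4 := Ideal.add_mem _ h3 (Ideal.mul_mem_left _ (y * t ^ (b - a - 1)) htm)
      rw [sub_add_cancel] at h4
      exact (IsLocalRing.mem_maximalIdeal _).1 h4 isUnit_one
    rw [hu.mul_left_eq_zero] at h2
    exact hn ⟨a, h2⟩
  · intro h
    apply Ideal.pow_le_pow_right h
    apply Ideal.pow_mem_pow
    rw [ht]; exact Ideal.mem_span_singleton_self t

/-- The local facts about vanishing orders at a point. -/
structure LocFacts (f sl : S) (v : Fin 3 → k) : Prop where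
  zero : ∀ g, InJ f sl v 0 g
  anti : ∀ {a b g}, a ≤ b → InJ f sl v b g → InJ f sl v a g
  add : ∀ {a g h}, InJ f sl v a g → InJ f sl v a h → InJ f sl v a (g + h)
  smul : ∀ {a g} (r : S), InJ f sl v a g → InJ f sl v a (r * g)
  mul : ∀ {a b g h}, InJ f sl v a g → InJ f sl v b h → InJ f sl v (a + b) (g * h)
  notmul : ∀ {a b g h}, ¬ InJ f sl v (a + 1) g → ¬ InJ f sl v (b + 1) h →
    ¬ InJ f sl v (a + b + 1) (g * h)
  one_iff : ∀ {g}, InJ f sl v 1 g ↔ eval v g = 0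
  f_mem : ∀ n, InJ f sl v n f
  approx : ∀ {n g h}, InJ f sl v n g → InJ f sl v n h → ¬ InJ f sl v (n + 1) h →
    ∃ c : k, InJ f sl v (n + 1) (g - C c * h)
  finite : ∀ {g}, (∀ n, InJ f sl v n g) → ∃ s, eval v s ≠ 0 ∧ s * g ∈ Ideal.span {f, sl}
  dvd : ∀ {n g h}, InJ f sl v n g → ¬ InJ f sl v (n + 1) h →
    ∃ s, eval v s ≠ 0 ∧ s * g ∈ Ideal.span {h, f, sl}

lemma locFacts (f sl t : S) (v : Fin 3 → k)
    (hf : eval v f = 0) (hsl : eval v sl = 0) (htv : eval v t = 0)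
    (htan : RingHom.ker (eval v) ≤ Ideal.span {t, f, sl} ⊔ (RingHom.ker (eval v)) ^ 2)
    (hnil : ∀ (n : ℕ) (s : S), eval v s ≠ 0 → s * t ^ n ∉ Ideal.span {f, sl}) :
    LocFacts f sl v ∧ ¬ InJ f sl v 2 t := by
  obtain ⟨Q, _, _, _, θ, hJ, h0, hfrac, hmax, hunit⟩ := exists_local f sl v hf hsl
  have hI0 : ∀ x ∈ Ideal.span {f, sl}, θ x = 0 := fun x hx => (h0 x).2 ⟨1, by simp, by simpa using hx⟩
  have hθf : θ f = 0 := hI0 f (Ideal.subset_span (by simp))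
  have hθsl : θ sl = 0 := hI0 sl (Ideal.subset_span (by simp))
  have hker : ∀ g, eval v g = 0 → θ g ∈ IsLocalRing.maximalIdeal Q := by
    intro g hg
    rw [hmax]
    exact Ideal.mem_map_of_mem _ (by simpa [RingHom.mem_ker] using hg)
  have ht : IsLocalRing.maximalIdeal Q = Ideal.span {θ t} := by
    apply le_antisymm
    · apply Submodule.le_of_le_smul_of_le_jacobson_bot
        (I := IsLocalRing.maximalIdeal Q) (IsNoetherian.noetherian _)
        (IsLocalRing.maximalIdeal_le_jacobson _)
      conv_lhs => rw [hmax]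
      refine (Ideal.map_mono htan).trans ?_
      rw [Ideal.map_sup, Ideal.map_pow, ← hmax, Ideal.map_span, smul_eq_mul, ← pow_two]
      apply sup_le_sup_right
      rw [Ideal.span_le]
      rintro _ ⟨x, (rfl | rfl | rfl), rfl⟩
      · exact Ideal.mem_span_singleton_self _
      · rw [hθf]; exact Ideal.zero_mem _
      · rw [hθsl]; exact Ideal.zero_mem _
    · rw [Ideal.span_le, Set.singleton_subset_iff]
      exact hker t htv
  have hn : ¬ IsNilpotent (θ t) := by
    rintro ⟨n, hn⟩
    rw [← map_pow, h0] at hn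
    obtain ⟨s, hs, h⟩ := hn
    exact hnil n s hs h
  have hquot : ∀ {n g h}, InJ f sl v n g → ¬ InJ f sl v (n + 1) h → ∃ y, θ g = y * θ h := by
    intro n g h hg hh
    rw [hJ] at hg hh
    obtain ⟨m, w, hm, hw, hx⟩ := unit_pow_of_not_mem ht n hh
    rw [ht, Ideal.span_singleton_pow, Ideal.mem_span_singleton'] at hg
    obtain ⟨z, hz⟩ := hg
    obtain ⟨w', hw'⟩ := hw.exists_left_inv
    refine ⟨z * θ t ^ (n - m) * w', ?_⟩
    rw [hx, ← hz]
    have : θ t ^ n = θ t ^ (n - m) * θ t ^ m := by rw [← pow_add]; congr 1; omega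
    rw [this]
    linear_combination (- z * θ t ^ (n - m) * θ t ^ m) * hw'
  refine ⟨⟨?_, ?_, ?_, ?_, ?_, ?_, ?_, ?_, ?_, ?_, ?_⟩, ?_⟩
  · intro g; simp [hJ]
  · intro a b g hab h
    rw [hJ] at h ⊢
    exact Ideal.pow_le_pow_right hab h
  · intro a g h hg hh
    rw [hJ] at *
    rw [map_add]; exact Ideal.add_mem _ hg hh
  · intro a g r hg
    rw [hJ] at *
    rw [map_mul]; exact Ideal.mul_mem_left _ _ hg
  · intro a b g h hg hh
    rw [hJ] at *
    rw [map_mul, pow_add]; exact Ideal.mul_mem_mul hg hh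
  · intro a b g h hg hh hgh
    rw [hJ] at *
    obtain ⟨m, w, hm, hw, hx⟩ := unit_pow_of_not_mem ht a hg
    obtain ⟨m', w', hm', hw', hx'⟩ := unit_pow_of_not_mem ht b hh
    have : θ (g * h) = (w * w') * (θ t) ^ (m + m') := by rw [map_mul, hx, hx']; ring
    rw [this, Ideal.unit_mul_mem_iff_mem _ (hw.mul hw'), pow_mem_iff ht hn] at hgh
    omega
  · intro g
    rw [hJ, pow_one]
    constructor
    · intro h
      by_contra hg
      exact (IsLocalRing.mem_maximalIdeal _).1 h (hunit g hg)
    · exact hker g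
  · intro n
    rw [hJ, hθf]; exact Ideal.zero_mem _
  · intro n g h hg hh hh'
    obtain ⟨y, hy⟩ := hquot hg hh'
    obtain ⟨r, s, hs, hrs⟩ := hfrac y
    refine ⟨eval v r / eval v s, ?_⟩
    rw [hJ] at *
    have h1 : y - θ (C (eval v r / eval v s)) ∈ IsLocalRing.maximalIdeal Q := by
      have h2 : θ (r - C (eval v r / eval v s) * s) ∈ IsLocalRing.maximalIdeal Q := by
        apply hker
        simp [div_mul_cancel₀ _ hs]
      rw [map_sub, map_mul, ← hrs, ← sub_mul] at h2
      rwa [mul_comm, Ideal.unit_mul_mem_iff_mem _ (hunit s hs)] at h2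
    rw [map_sub, map_mul, hy, ← sub_mul, pow_succ, mul_comm (y - _)]
    exact Ideal.mul_mem_mul hh h1
  · intro g hg
    rw [← h0]
    have := Ideal.iInf_pow_eq_bot_of_isLocalRing (IsLocalRing.maximalIdeal Q)
      (IsLocalRing.maximalIdeal.isMaximal Q).ne_top
    rw [← Ideal.mem_bot, ← this, Ideal.mem_iInf]
    intro n
    exact (hJ n g).1 (hg n)
  · intro n g h hg hh
    obtain ⟨y, hy⟩ := hquot hg hh
    obtain ⟨r, s, hs, hrs⟩ := hfrac y
    have h1 : θ (s * g - r * h) = 0 := by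
      rw [map_sub, map_mul, map_mul, hy, ← hrs]; ring
    obtain ⟨s', hs', hmem⟩ := (h0 _).1 h1
    refine ⟨s' * s, by simp [hs, hs'], ?_⟩
    rw [Ideal.mem_span_insert']
    refine ⟨- (s' * r), ?_⟩
    convert hmem using 1
    ring
  · rw [hJ]
    have := (pow_mem_iff ht hn 1 2).not.2 (by norm_num)
    rwa [pow_one] at this

end Loc
end PCurve

namespace PCurve
open MvPolynomial Matrix

section Tan
variable {k : Type*} [Field k]

local notation "S" => MvPolynomial (Fin 3) k

/-- The linear form with coefficients `b`. -/
noncomputable def lin (b : Fin 3 → k) : S := ∑ i, C (b i) * X i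

lemma lin_hom (b : Fin 3 → k) : (lin b).IsHomogeneous 1 :=
  IsHomogeneous.sum _ _ _ fun i _ => isHomogeneous_C_mul_X _ _

lemma eval_lin (b w : Fin 3 → k) : eval w (lin b) = b ⬝ᵥ w := by
  simp [lin, dotProduct]

lemma lin_ne_zero {b : Fin 3 → k} (hb : b ≠ 0) : lin b ≠ 0 := by
  intro h
  apply hb
  funext i
  have := eval_lin b (Pi.single i 1)
  rw [h] at this
  simpa using this.symm

lemma eq_zero_of_dvd {f g : S} {d n : ℕ} (hf : f.IsHomogeneous d) (hg : g.IsHomogeneous n)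
    (hn : n < d) (h : f ∣ g) : g = 0 := by
  obtain ⟨w, rfl⟩ := h
  rw [← homogeneousComponent_eq_self hg, mul_comm]
  exact hc_mul_right_lt hn w f hf

lemma exists_dot_ne [Infinite k] (T : Finset (Fin 3 → k)) (hT : ∀ u ∈ T, u ≠ 0) :
    ∃ c : Fin 3 → k, ∀ u ∈ T, c ⬝ᵥ u ≠ 0 := by
  have h0 : (∏ u ∈ T, lin u) ≠ 0 := Finset.prod_ne_zero_iff.2 fun u hu => lin_ne_zero (hT u hu)
  have : ∃ c, eval c (∏ u ∈ T, lin u) ≠ 0 := by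
    by_contra h
    push Not at h
    exact h0 (MvPolynomial.funext fun c => by rw [h c, map_zero])
  obtain ⟨c, hc⟩ := this
  rw [map_prod, Finset.prod_ne_zero_iff] at hc
  refine ⟨c, fun u hu => ?_⟩
  have := hc u hu
  rwa [eval_lin, dotProduct_comm] at this

lemma taylor (v : Fin 3 → k) (x : S) :
    x - C (eval v x) - ∑ i, C (eval v (pderiv i x)) * (X i - C (v i)) ∈
      (RingHom.ker (eval v)) ^ 2 := by
  have hX : ∀ i, (X i - C (v i) : S) ∈ RingHom.ker (eval v) := by
    intro i; simp [RingHom.mem_ker]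
  induction x using MvPolynomial.induction_on with
  | C a => simp
  | add p q hp hq =>
    convert Ideal.add_mem _ hp hq using 1
    simp only [map_add, add_mul, Finset.sum_add_distrib]
    ring
  | mul_X p j hp =>
    have h1 : (∑ i, C (eval v (pderiv i p)) * (X i - C (v i))) * (X j - C (v j) : S) ∈
        (RingHom.ker (eval v)) ^ 2 := by
      rw [pow_two]
      exact Ideal.mul_mem_mul (Ideal.sum_mem _ fun i _ => Ideal.mul_mem_left _ _ (hX i)) (hX j)
    convert Ideal.add_mem _ (Ideal.mul_mem_left _ (X j) hp) h1 using 1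
    have h2 : ∑ i, C (eval v (pderiv i (p * X j))) * (X i - C (v i) : S) =
        (∑ i, C (eval v (pderiv i p)) * (X i - C (v i))) * C (v j) +
          C (eval v p) * (X j - C (v j)) := by
      have : ∀ i, C (eval v (pderiv i (p * X j))) * (X i - C (v i) : S) =
          C (eval v (pderiv i p)) * (X i - C (v i)) * C (v j) +
            if i = j then C (eval v p) * (X j - C (v j)) else 0 := by
        intro i
        rw [Derivation.leibniz]
        by_cases hij : i = j
        · subst hij
          simp
          ring
        · simp [pderiv_X_of_ne (Ne.symm hij), hij]
          ring
      rw [Finset.sum_congr rfl fun i _ => this i, Finset.sum_add_distrib, ← Finset.sum_mul]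
      simp
    rw [h2]
    simp only [map_mul, eval_X]
    ring

lemma transversal {f : S} {d : ℕ} (hd : 4 ≤ d) (hf : f.IsHomogeneous d) (hfp : Prime f)
    {v c : Fin 3 → k} (hfv : eval v f = 0) {i : Fin 3} (hvi : v i ≠ 0)
    (hc : c ⬝ᵥ (fun j => eval v (pderiv j f)) ≠ 0) :
    LocFacts f (C (v i)⁻¹ * X i - 1) v ∧
      ¬ InJ f (C (v i)⁻¹ * X i - 1) v 2 (lin (crossProduct v c)) := by
  set a : Fin 3 → k := fun j => eval v (pderiv j f) with ha
  set b := crossProduct v c with hb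
  have hav : a ⬝ᵥ v = 0 := by
    have := congrArg (eval v) hf.sum_X_mul_pderiv
    simp only [map_sum, map_mul, eval_X, map_nsmul, hfv, smul_zero] at this
    rw [dotProduct_comm]; exact this
  have hbv : b ⬝ᵥ v = 0 := by rw [dotProduct_comm]; exact dot_self_cross v c
  have hab : crossProduct b a = - (c ⬝ᵥ a) • v := by
    simp only [hb, cross_apply, dotProduct, Fin.sum_univ_three] at hav ⊢
    ext j
    fin_cases j <;> simp
    · linear_combination c 0 * hav
    · linear_combination c 1 * hav
    · linear_combination c 2 * hav
  have hb0 : b ≠ 0 := by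
    intro h
    rw [h] at hab
    have := congrFun hab i
    simp [hvi, hc] at this
  set y : S := C (v i)⁻¹ * X i with hy
  have hyh : y.IsHomogeneous 1 := isHomogeneous_C_mul_X _ _
  have hyv : eval v y = 1 := by simp [hy, hvi]
  set M := RingHom.ker (eval v) with hM
  apply locFacts f (y - 1) (lin b) v hfv (by simp [hyv]) (by rw [eval_lin, hbv])
  · set N := Ideal.span {lin b, f, y - 1} ⊔ M ^ 2 with hN
    have hsub : ∀ x ∈ ({lin b, f, y - 1} : Set S), x ∈ N := fun x hx =>
      Ideal.mem_sup_left (Ideal.subset_span hx)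
    have e1 : ∑ j, C (a j) * (X j - C (v j)) ∈ N := by
      have h1 := taylor v f
      rw [hfv, map_zero, sub_zero] at h1
      have h2 := Ideal.sub_mem N (hsub f (by simp)) (Ideal.mem_sup_right h1)
      rwa [sub_sub_cancel] at h2
    have e2 : ∑ j, C (b j) * (X j - C (v j)) ∈ N := by
      have h2 := hsub (lin b) (by simp)
      convert h2 using 1
      rw [lin]
      simp only [mul_sub, Finset.sum_sub_distrib]
      rw [sub_eq_self]
      have : ∑ j, C (b j) * C (v j) = (C (b ⬝ᵥ v) : S) := by simp [dotProduct]
      rw [this, hbv, map_zero]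
    have e3 : (X i - C (v i) : S) ∈ N := by
      have h2 := Ideal.mul_mem_left N (C (v i)) (hsub (y - 1) (by simp))
      convert h2 using 1
      rw [hy, mul_sub, ← mul_assoc, ← C_mul, mul_inv_cancel₀ hvi]
      simp
    have e4 : ∀ j, (X j - C (v j) : S) ∈ N := by
      have hu : ∀ (r : k) (x : S), r ≠ 0 → C r * x ∈ N → x ∈ N := by
        intro r x hr hx
        have := Ideal.mul_mem_left N (C r⁻¹) hx
        rwa [← mul_assoc, ← C_mul, inv_mul_cancel₀ hr, C_1, one_mul] at this
      have hne : (crossProduct b a) i ≠ 0 := by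
        rw [hab]; simp [hvi, hc]
      rw [Fin.sum_univ_three] at e1 e2
      set E0 : S := X 0 - C (v 0)
      set E1 : S := X 1 - C (v 1)
      set E2 : S := X 2 - C (v 2)
      rw [cross_apply] at hne
      have main : E0 ∈ N ∧ E1 ∈ N ∧ E2 ∈ N := by
        fin_cases i
        · have e3 : E0 ∈ N := e3
          simp at hne
          refine ⟨e3, hu _ _ hne ?_, hu _ _ hne ?_⟩
          · convert Ideal.add_mem _ (Ideal.sub_mem _ (Ideal.mul_mem_left _ (C (a 2)) e2)
              (Ideal.mul_mem_left _ (C (b 2)) e1)) (Ideal.mul_mem_left _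
              (C (b 2) * C (a 0) - C (a 2) * C (b 0)) e3) using 1
            simp; ring
          · convert Ideal.add_mem _ (Ideal.sub_mem _ (Ideal.mul_mem_left _ (C (b 1)) e1)
              (Ideal.mul_mem_left _ (C (a 1)) e2)) (Ideal.mul_mem_left _
              (C (b 0) * C (a 1) - C (a 0) * C (b 1)) e3) using 1
            simp; ring
        · have e3 : E1 ∈ N := e3
          simp at hne
          refine ⟨hu _ _ hne ?_, e3, hu _ _ hne ?_⟩
          · convert Ideal.add_mem _ (Ideal.sub_mem _ (Ideal.mul_mem_left _ (C (b 2)) e1)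
              (Ideal.mul_mem_left _ (C (a 2)) e2)) (Ideal.mul_mem_left _
              (C (b 1) * C (a 2) - C (a 1) * C (b 2)) e3) using 1
            simp; ring
          · convert Ideal.add_mem _ (Ideal.sub_mem _ (Ideal.mul_mem_left _ (C (a 0)) e2)
              (Ideal.mul_mem_left _ (C (b 0)) e1)) (Ideal.mul_mem_left _
              (C (b 0) * C (a 1) - C (a 0) * C (b 1)) e3) using 1
            simp; ring
        · have e3 : E2 ∈ N := e3
          simp at hne
          refine ⟨hu _ _ hne ?_, hu _ _ hne ?_, e3⟩
          · convert Ideal.add_mem _ (Ideal.sub_mem _ (Ideal.mul_mem_left _ (C (a 1)) e2)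
              (Ideal.mul_mem_left _ (C (b 1)) e1)) (Ideal.mul_mem_left _
              (C (b 1) * C (a 2) - C (a 1) * C (b 2)) e3) using 1
            simp; ring
          · convert Ideal.add_mem _ (Ideal.sub_mem _ (Ideal.mul_mem_left _ (C (b 0)) e1)
              (Ideal.mul_mem_left _ (C (a 0)) e2)) (Ideal.mul_mem_left _
              (C (b 2) * C (a 0) - C (a 2) * C (b 0)) e3) using 1
            simp; ring
      intro j
      fin_cases j
      exacts [main.1, main.2.1, main.2.2]
    intro x hx
    have h1 := taylor v x
    have hx0 : eval v x = 0 := hx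
    rw [hx0, map_zero, sub_zero] at h1
    have h2 : ∑ j, C (eval v (pderiv j x)) * (X j - C (v j)) ∈ N :=
      Ideal.sum_mem _ fun j _ => Ideal.mul_mem_left _ _ (e4 j)
    have h3 := Ideal.add_mem N (Ideal.mem_sup_right h1) h2
    rwa [sub_add_cancel] at h3
  · intro n s hs hmem
    have h1 : s * lin b ^ n ∈ Ideal.span {f, f, y - 1} := by simpa using hmem
    obtain ⟨m, s', -, hs', h2⟩ := remove_slice hyh hyv hf hf ((lin_hom b).pow n) hs h1
    have h2 : f ∣ s' * lin b ^ n := by simpa [Ideal.mem_span_singleton] using h2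
    rcases hfp.dvd_or_dvd h2 with ⟨w, hw⟩ | h3
    · apply hs'; rw [hw]; simp [hfv]
    · have h4 := hfp.dvd_of_dvd_pow h3
      exact lin_ne_zero hb0 (eq_zero_of_dvd hf (lin_hom b) (by omega) h4)

end Tan
end PCurve

namespace PCurve
open MvPolynomial Matrix

section Glob
variable {k : Type*} [Field k]

local notation "S" => MvPolynomial (Fin 3) k

/-- The hypotheses on the curve. -/
structure Crv (f : S) (d : ℕ) : Prop where
  hd : 4 ≤ d
  hom : f.IsHomogeneous d
  prime : Prime f
  sm : ∀ v : Fin 3 → k, eval v f = 0 → (∀ i : Fin 3, eval v (pderiv i f) = 0) → v = 0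

/-- Vanishing to order at least `n` at the point `p`. -/
def J {f : S} (p : PlanePoint f) (n : ℕ) (g : S) : Prop :=
  InJ f (slicePoly p.1.rep) p.1.rep n g

lemma ordAt_eq {f : S} (p : PlanePoint f) (g : S) : ordAt f p g = sSup {n | J p n g} := rfl

lemma slice_spec {v : Fin 3 → k} (hv : v ≠ 0) :
    ∃ i, v i ≠ 0 ∧ slicePoly v = C (v i)⁻¹ * X i - 1 := by
  have h : ∃ i, v i ≠ 0 := by
    by_contra h
    push Not at h
    exact hv (funext h)
  exact ⟨h.choose, h.choose_spec, by rw [slicePoly, dif_pos h]⟩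

variable {f : MvPolynomial (Fin 3) k} {d : ℕ}

lemma eval_smul_hom {g : S} {n : ℕ} (hg : g.IsHomogeneous n) (a : k) (w : Fin 3 → k) :
    eval (a • w) g = a ^ n * eval w g := by
  rw [eval_eq, eval_eq, Finset.mul_sum]
  refine Finset.sum_congr rfl fun m hm => ?_
  have h1 : ∑ i ∈ m.support, m i = n := by
    have := hg (mem_support_iff.1 hm)
    rw [Finsupp.weight_apply, Finsupp.sum] at this
    simpa using this
  simp only [Pi.smul_apply, smul_eq_mul, mul_pow, Finset.prod_mul_distrib,
    Finset.prod_pow_eq_pow_sum, h1]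
  ring

lemma cross_rep_ne {p q : PlanePoint f} (h : q ≠ p) :
    crossProduct q.1.rep p.1.rep ≠ 0 := by
  rw [crossProduct_ne_zero_iff_linearIndependent]
  have h1 : q.1 ≠ p.1 := fun h' => h (Subtype.ext h')
  have h2 := (Projectivization.independent_pair_iff_ne q.1 p.1).2 h1
  rw [Projectivization.independent_iff] at h2
  have h3 : ![q.1.rep, p.1.rep] = Projectivization.rep ∘ ![q.1, p.1] := by
    funext i
    fin_cases i <;> rfl
  rw [h3]
  exact h2

/-- Existence of transversal lines avoiding finitely many points. -/
lemma Crv.line0 [Infinite k] (hC : Crv f d) (p : PlanePoint f) (T : Finset (Fin 3 → k))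
    (hT : ∀ w ∈ T, crossProduct w p.1.rep ≠ 0) :
    LocFacts f (slicePoly p.1.rep) p.1.rep ∧ ∃ b : Fin 3 → k, b ≠ 0 ∧ b ⬝ᵥ p.1.rep = 0 ∧
      ¬ J p 2 (lin b) ∧ ∀ w ∈ T, eval w (lin b) ≠ 0 := by
  classical
  set v := p.1.rep with hv
  have hv0 : v ≠ 0 := p.1.rep_nonzero
  obtain ⟨i, hvi, hsl⟩ := slice_spec hv0
  have ha : (fun j => eval v (pderiv j f)) ≠ 0 := by
    intro h
    exact hv0 (hC.sm v p.2 fun i => congrFun h i)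
  obtain ⟨c, hc⟩ := exists_dot_ne (insert (fun j => eval v (pderiv j f))
    (T.image fun w => crossProduct w v)) (by
      intro u hu
      rw [Finset.mem_insert, Finset.mem_image] at hu
      rcases hu with rfl | ⟨w, hw, rfl⟩
      · exact ha
      · exact hT w hw)
  have h1 := transversal hC.hd hC.hom hC.prime (v := v) (c := c) p.2 hvi
    (hc _ (Finset.mem_insert_self _ _))
  have hbv : crossProduct v c ⬝ᵥ v = 0 := by rw [dotProduct_comm]; exact dot_self_cross v c
  rw [← hsl] at h1
  refine ⟨h1.1, crossProduct v c, ?_, hbv, h1.2, ?_⟩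
  · intro h0
    apply h1.2
    rw [h0]
    have : lin (0 : Fin 3 → k) = 0 * f := by simp [lin]
    rw [this]
    exact h1.1.smul _ (h1.1.f_mem 2)
  · intro w hw
    rw [eval_lin, dotProduct_comm]
    have h2 := hc _ (Finset.mem_insert_of_mem (Finset.mem_image_of_mem _ hw))
    rwa [triple_product_permutation, triple_product_permutation]

lemma Crv.facts [Infinite k] (hC : Crv f d) (p : PlanePoint f) :
    LocFacts f (slicePoly p.1.rep) p.1.rep := (hC.line0 p ∅ (by simp)).1

lemma Crv.line [Infinite k] (hC : Crv f d) (p : PlanePoint f) (T : Finset (PlanePoint f)) :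
    ∃ b : Fin 3 → k, b ≠ 0 ∧ b ⬝ᵥ p.1.rep = 0 ∧
      ¬ J p 2 (lin b) ∧ ∀ q ∈ T, q ≠ p → ¬ J q 1 (lin b) := by
  classical
  obtain ⟨b, h0, h1, h2, h3⟩ := (hC.line0 p ((T.erase p).image fun q => q.1.rep) (by
    intro w hw
    obtain ⟨q, hq, rfl⟩ := Finset.mem_image.1 hw
    exact cross_rep_ne (Finset.ne_of_mem_erase hq))).2
  refine ⟨b, h0, h1, h2, fun q hq hqp => ?_⟩
  rw [J, (hC.facts q).one_iff]
  exact h3 _ (Finset.mem_image_of_mem _ (Finset.mem_erase.2 ⟨hqp, hq⟩))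

lemma Crv.exists_not [Infinite k] (hC : Crv f d) (p : PlanePoint f) {g : S} {n : ℕ}
    (hg : g.IsHomogeneous n) (hfg : ¬ f ∣ g) : ∃ m, ¬ J p m g := by
  by_contra h
  push Not at h
  obtain ⟨s, hs, hmem⟩ := (hC.facts p).finite h
  obtain ⟨i, hvi, hsl⟩ := slice_spec p.1.rep_nonzero
  rw [hsl] at hmem
  have hmem' : s * g ∈ Ideal.span {f, f, C (p.1.rep i)⁻¹ * X i - 1} := by simpa using hmem
  obtain ⟨m, s', -, hs', h2⟩ := remove_slice (isHomogeneous_C_mul_X _ _)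
    (by simp [hvi]) hC.hom hC.hom hg hs hmem'
  have h2 : f ∣ s' * g := by simpa [Ideal.mem_span_singleton] using h2
  rcases hC.prime.dvd_or_dvd h2 with ⟨w, hw⟩ | h3
  · apply hs'; rw [hw]; simp [p.2]
  · exact hfg h3

lemma Crv.le_ord [Infinite k] (hC : Crv f d) (p : PlanePoint f) {g : S} {n : ℕ}
    (hg : g.IsHomogeneous n) (hfg : ¬ f ∣ g) (m : ℕ) : m ≤ ordAt f p g ↔ J p m g := by
  obtain ⟨N, hN⟩ := hC.exists_not p hg hfg
  have hbdd : BddAbove {n | J p n g} := ⟨N, fun m hm => by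
    by_contra hlt
    exact hN ((hC.facts p).anti (by omega) hm)⟩
  have hne : {n | J p n g}.Nonempty := ⟨0, (hC.facts p).zero g⟩
  rw [ordAt_eq]
  constructor
  · intro h
    exact (hC.facts p).anti h (Nat.sSup_mem hne hbdd)
  · intro h
    exact le_csSup hbdd h

lemma Crv.ord_mul [Infinite k] (hC : Crv f d) (p : PlanePoint f) {g h : S} {n e : ℕ}
    (hg : g.IsHomogeneous n) (hfg : ¬ f ∣ g) (hh : h.IsHomogeneous e) (hfh : ¬ f ∣ h) :
    ordAt f p (g * h) = ordAt f p g + ordAt f p h := by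
  have hgh : ¬ f ∣ g * h := fun h => (hC.prime.dvd_or_dvd h).elim hfg hfh
  apply le_antisymm
  · by_contra hlt
    have h1 := (hC.le_ord p (hg.mul hh) hgh (ordAt f p g + ordAt f p h + 1)).1 (by omega)
    refine (hC.facts p).notmul ?_ ?_ h1
    · exact fun h2 => by have := (hC.le_ord p hg hfg _).2 h2; omega
    · exact fun h2 => by have := (hC.le_ord p hh hfh _).2 h2; omega
  · rw [hC.le_ord p (hg.mul hh) hgh]
    exact (hC.facts p).mul ((hC.le_ord p hg hfg _).1 le_rfl) ((hC.le_ord p hh hfh _).1 le_rfl)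

/-- Noether's theorem. -/
lemma Crv.noether [IsAlgClosed k] [Infinite k] (hC : Crv f d) {g h : S} {n e : ℕ}
    (hg : g.IsHomogeneous n) (hh : h.IsHomogeneous e) (hfh : ¬ f ∣ h)
    (H : ∀ (p : PlanePoint f) (m : ℕ), J p m h → J p m g) : g ∈ Ideal.span {f, h} := by
  classical
  have hloc : ∀ p : PlanePoint f, ∃ (m : ℕ) (s : S), s.IsHomogeneous m ∧ eval p.1.rep s ≠ 0 ∧
      s * g ∈ Ideal.span {f, h} := by
    intro p
    have h1 : J p (ordAt f p h) g := H _ _ ((hC.le_ord p hh hfh _).1 le_rfl)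
    have h2 : ¬ J p (ordAt f p h + 1) h := fun h2 => by
      have := (hC.le_ord p hh hfh _).2 h2; omega
    obtain ⟨s, hs, hmem⟩ := (hC.facts p).dvd h1 h2
    obtain ⟨i, hvi, hsl⟩ := slice_spec p.1.rep_nonzero
    rw [hsl] at hmem
    exact remove_slice (isHomogeneous_C_mul_X _ _) (by simp [hvi]) hC.hom hh hg hs hmem
  let I : Ideal S := Submodule.colon (Ideal.span {f, h}) {g}
  have hI : ∀ x, x ∈ I ↔ x * g ∈ Ideal.span {f, h} := by
    intro x
    simp [I, Submodule.mem_colon_singleton]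
  have hrad : Ideal.span (Set.range (X : Fin 3 → S)) ≤ I.radical := by
    rw [← vanishingIdeal_zeroLocus_eq_radical (K := k) I, Ideal.span_le]
    rintro _ ⟨i, rfl⟩
    rw [SetLike.mem_coe, mem_vanishingIdeal_iff]
    intro w hw
    rw [mem_zeroLocus_iff] at hw
    suffices w = 0 by simp [this]
    by_contra hw0
    have hfw : eval w f = 0 := by
      have := hw f ((hI f).2 (Ideal.mul_mem_right _ _ (Ideal.subset_span (by simp))))
      simpa only [aeval_eq_eval] using this
    let P := Projectivization.mk k w hw0
    obtain ⟨a, ha⟩ := Projectivization.exists_smul_eq_mk_rep k w hw0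
    have hPr : P.rep = (a : k) • w := ha.symm
    have hPf : eval P.rep f = 0 := by
      rw [hPr, eval_smul_hom hC.hom, hfw, mul_zero]
    obtain ⟨m, s, hs, hse, hmem⟩ := hloc ⟨P, hPf⟩
    have h3 := hw s ((hI s).2 hmem)
    have h4 : eval w s = 0 := by simpa only [aeval_eq_eval] using h3
    apply hse
    change eval P.rep s = 0
    rw [hPr, eval_smul_hom hs, h4, mul_zero]
  obtain ⟨N, hN⟩ := Ideal.exists_pow_le_of_le_radical_of_fg hrad (IsNoetherian.noetherian _)
  exact sat hC.prime hfh N g fun y hy => (hI y).1 (hN hy)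

end Glob
end PCurve

namespace PCurve
open MvPolynomial Matrix

section Bez
variable {k : Type*} [Field k]

local notation "S" => MvPolynomial (Fin 3) k

variable {f : MvPolynomial (Fin 3) k} {d : ℕ}

lemma hc_dvd (hf : f.IsHomogeneous d) {x : S} (hx : f ∣ x) (n : ℕ) :
    f ∣ homogeneousComponent n x := by
  obtain ⟨y, rfl⟩ := hx
  rw [mul_comm]
  rcases lt_or_ge n d with h | h
  · rw [hc_mul_right_lt h y f hf]; exact dvd_zero _
  · obtain ⟨m, rfl⟩ := Nat.exists_eq_add_of_le' h
    rw [hc_mul_right y f hf]; exact Dvd.intro_left _ rfl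

/-- Noether's theorem, homogeneous version. -/
lemma Crv.noether_hom [IsAlgClosed k] [Infinite k] (hC : Crv f d) {g h : S} {m e : ℕ}
    (hg : g.IsHomogeneous (m + e)) (hh : h.IsHomogeneous e) (hfh : ¬ f ∣ h)
    (H : ∀ (p : PlanePoint f) (m : ℕ), J p m h → J p m g) :
    ∃ b : S, b.IsHomogeneous m ∧ f ∣ g - h * b := by
  have h1 := hC.noether hg hh hfh H
  rw [Ideal.mem_span_pair] at h1
  obtain ⟨a, b, hab⟩ := h1
  refine ⟨homogeneousComponent m b, homogeneousComponent_isHomogeneous _ _, ?_⟩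
  have h2 := hc_dvd hC.hom (Dvd.intro_left a rfl : f ∣ a * f) (m + e)
  have h3 : homogeneousComponent (m + e) (a * f) = g - h * homogeneousComponent m b := by
    have h4 : a * f = g - b * h := by rw [← hab]; ring
    rw [h4, map_sub, homogeneousComponent_eq_self hg, hc_mul_right b h hh, mul_comm h]
  rwa [h3] at h2

lemma exists_hom_ne [Infinite k] (hC : Crv f d) (p : PlanePoint f) (n : ℕ) :
    ∃ G : S, G.IsHomogeneous n ∧ ¬ J p 1 G := by
  obtain ⟨i, hi, -⟩ := slice_spec p.1.rep_nonzero
  refine ⟨X i ^ n, by simpa using (isHomogeneous_X k i).pow n, ?_⟩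
  rw [J, (hC.facts p).one_iff]
  simp [hi]

open Classical in
lemma Crv.exists_G [Infinite k] (hC : Crv f d) (p : PlanePoint f) (Z : Multiset (PlanePoint f)) :
    ∀ n : ℕ, Multiset.card Z ≤ n → ∃ G : S, G.IsHomogeneous n ∧
      (∀ q, J q (Z.count q) G) ∧ ¬ J p (Z.count p + 1) G := by
  induction Z using Multiset.induction_on with
  | empty =>
    intro n _
    obtain ⟨G, h1, h2⟩ := exists_hom_ne hC p n
    exact ⟨G, h1, fun q => by simpa [J] using (hC.facts q).zero G, by simpa using h2⟩
  | cons q Z ih =>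
    intro n hn
    rw [Multiset.card_cons] at hn
    obtain ⟨n, rfl⟩ : ∃ m, n = m + 1 := ⟨n - 1, by omega⟩
    obtain ⟨G, h1, h2, h3⟩ := ih n (by omega)
    obtain ⟨b, hb0, hbq, hb2, hbp⟩ := hC.line q {p}
    refine ⟨G * lin b, h1.mul (lin_hom b), fun q' => ?_, ?_⟩
    · by_cases hq : q' = q
      · subst hq
        rw [Multiset.count_cons_self]
        refine (hC.facts q').mul (h2 q') ?_
        rw [(hC.facts q').one_iff, eval_lin]
        exact hbq
      · rw [Multiset.count_cons_of_ne hq]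
        rw [J, mul_comm]
        exact (hC.facts q').smul _ (h2 q')
    · by_cases hq : p = q
      · subst hq
        rw [Multiset.count_cons_self]
        exact (hC.facts p).notmul h3 hb2
      · rw [Multiset.count_cons_of_ne hq]
        exact (hC.facts p).notmul (b := 0) h3 (hbp p (by simp) hq)

open Classical in
/-- Forms of degree `n` vanishing on `Z`. -/
noncomputable def W [Infinite k] (hC : Crv f d) (Z : Multiset (PlanePoint f)) (n : ℕ) :
    Submodule k (MvPolynomial (Fin 3) k) where
  carrier := {g | g.IsHomogeneous n ∧ ∀ p, J p (Z.count p) g}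
  add_mem' := fun ha hb => ⟨ha.1.add hb.1, fun p => (hC.facts p).add (ha.2 p) (hb.2 p)⟩
  zero_mem' := ⟨isHomogeneous_zero _ _ _, fun p => by
    have := (hC.facts p).smul 0 ((hC.facts p).f_mem (Z.count p))
    rwa [zero_mul] at this⟩
  smul_mem' := fun c x hx => ⟨by
    rw [smul_eq_C_mul]; exact hx.1.C_mul c, fun p => by
    rw [smul_eq_C_mul]; exact (hC.facts p).smul _ (hx.2 p)⟩

open Classical in
lemma mem_W [Infinite k] {hC : Crv f d} {Z : Multiset (PlanePoint f)} {n : ℕ} {g : S} :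
    g ∈ W hC Z n ↔ g.IsHomogeneous n ∧ ∀ p, J p (Z.count p) g := Iff.rfl

instance finite_W [Infinite k] (hC : Crv f d) (Z : Multiset (PlanePoint f)) (n : ℕ) :
    FiniteDimensional k (W hC Z n) := by
  have : W hC Z n ≤ homogeneousSubmodule (Fin 3) k n := fun g hg =>
    (mem_homogeneousSubmodule _ _).2 hg.1
  exact Submodule.finiteDimensional_of_le this

lemma finrank_W [Infinite k] (hC : Crv f d) (Z : Multiset (PlanePoint f)) (n : ℕ) 
    (hn : Multiset.card Z ≤ n) :
    Module.finrank k (W hC Z n) + Multiset.card Z = (n + 2).choose 2 := by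
  classical
  induction Z using Multiset.induction_on with
  | empty =>
    have : W hC 0 n = homogeneousSubmodule (Fin 3) k n := by
      ext g
      rw [mem_W, mem_homogeneousSubmodule]
      exact ⟨fun h => h.1, fun h => ⟨h, fun p => by simpa [J] using (hC.facts p).zero g⟩⟩
    rw [this, finrank_hom]; simp
  | cons p Z ih =>
    rw [Multiset.card_cons] at hn ⊢
    rw [← ih (by omega)]
    obtain ⟨G, h1, h2, h3⟩ := hC.exists_G p Z n (by omega)
    have hG : G ∉ W hC (p ::ₘ Z) n := by
      intro h
      have := (mem_W.1 h).2 p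
      simp only [Multiset.count_cons_self] at this
      apply h3
      convert this
    have hsup : W hC Z n = W hC (p ::ₘ Z) n ⊔ Submodule.span k {G} := by
      apply le_antisymm
      · intro g hg
        have hg := mem_W.1 hg
        obtain ⟨c, hc⟩ := (hC.facts p).approx (hg.2 p) (h2 p) h3
        have h5 : g - C c * G ∈ W hC (p ::ₘ Z) n := by
          rw [mem_W]
          refine ⟨hg.1.sub (h1.C_mul c), fun q => ?_⟩
          by_cases hq : q = p
          · subst hq
            rw [Multiset.count_cons_self]
            exact hc
          · rw [Multiset.count_cons_of_ne hq]
            have := (hC.facts q).add (hg.2 q) ((hC.facts q).smul (-C c) (h2 q))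
            rw [show g - C c * G = g + -C c * G by ring]
            exact this
        have : g = (g - C c * G) + c • G := by rw [smul_eq_C_mul]; ring
        rw [this]
        exact Submodule.add_mem_sup h5 (Submodule.smul_mem _ _ (Submodule.mem_span_singleton_self _))
      · rw [sup_le_iff]
        constructor
        · intro g hg
          rw [mem_W] at hg ⊢
          exact ⟨hg.1, fun q => (hC.facts q).anti (Multiset.count_le_count_cons _ _ _) (hg.2 q)⟩
        · rw [Submodule.span_singleton_le_iff_mem, mem_W]
          exact ⟨h1, h2⟩
    have hG0 : G ≠ 0 := fun h => hG (h ▸ zero_mem _)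
    have hinf : W hC (p ::ₘ Z) n ⊓ Submodule.span k {G} = ⊥ := by
      rw [← disjoint_iff, Submodule.disjoint_span_singleton' hG0]
      exact hG
    have h6 := Submodule.finrank_sup_add_finrank_inf_eq (W hC (p ::ₘ Z) n) (Submodule.span k {G})
    rw [hinf, ← hsup, finrank_bot, finrank_span_singleton hG0] at h6
    omega

open Classical in
lemma Crv.bez1 [Infinite k] (hC : Crv f d) {h : S} {e : ℕ} (hh : h.IsHomogeneous e)
    (hfh : ¬ f ∣ h) (Z : Multiset (PlanePoint f)) (hZ : ∀ p, J p (Z.count p) h) :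
    Multiset.card Z ≤ d * e := by
  have h1 := finrank_sup_mulImg hC.prime hfh hC.hom hh (Multiset.card Z)
  have h2 := finrank_W hC Z (Multiset.card Z + d + e) (by omega)
  have hle : mulImg f (Multiset.card Z + e) ⊔ mulImg h (Multiset.card Z + d) ≤
      W hC Z (Multiset.card Z + d + e) := by
    rw [sup_le_iff]
    constructor
    · intro x hx
      obtain ⟨y, hy, rfl⟩ := mem_mulImg.1 hx
      refine mem_W.2 ⟨?_, fun p => ?_⟩
      · have := hC.hom.mul hy
        rwa [show d + (Multiset.card Z + e) = Multiset.card Z + d + e by ring] at this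
      · rw [J, mul_comm]
        exact (hC.facts p).smul _ ((hC.facts p).f_mem _)
    · intro x hx
      obtain ⟨y, hy, rfl⟩ := mem_mulImg.1 hx
      refine mem_W.2 ⟨?_, fun p => ?_⟩
      · have := hh.mul hy
        rwa [show e + (Multiset.card Z + d) = Multiset.card Z + d + e by ring] at this
      · rw [J, mul_comm]
        exact (hC.facts p).smul _ (hZ p)
  have h3 := Submodule.finrank_mono hle
  omega

/-- Bezout's theorem. -/
lemma Crv.bezout [IsAlgClosed k] [Infinite k] (hC : Crv f d) {h : S} {e : ℕ}
    (hh : h.IsHomogeneous e) (hfh : ¬ f ∣ h) :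
    ∃ o : PlanePoint f →₀ ℕ, (∀ p, o p = ordAt f p h) ∧ o.sum (fun _ n => n) = d * e := by
  classical
  have hfin : {p : PlanePoint f | ordAt f p h ≠ 0}.Finite := by
    by_contra hinf
    obtain ⟨T, hT, hcard⟩ := Set.Infinite.exists_subset_card_eq hinf (d * e + 1)
    have := hC.bez1 hh hfh T.val (fun p => by
      by_cases hp : p ∈ T
      · have h1 : ordAt f p h ≠ 0 := hT hp
        rw [← hC.le_ord p hh hfh]
        have := Multiset.nodup_iff_count_le_one.1 T.nodup p
        omega
      · rw [Multiset.count_eq_zero_of_notMem (by simpa using hp)]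
        exact (hC.facts p).zero h)
    have h2 : Multiset.card T.val = T.card := rfl
    omega
  let o : PlanePoint f →₀ ℕ := Finsupp.onFinset hfin.toFinset (fun p => ordAt f p h)
    (fun p hp => by simpa using hp)
  have ho : ∀ p, o p = ordAt f p h := fun p => rfl
  refine ⟨o, ho, ?_⟩
  have hc : ∀ p, (Finsupp.toMultiset o).count p = ordAt f p h := fun p => by
    rw [Finsupp.count_toMultiset, ho]
  have hcard : Multiset.card (Finsupp.toMultiset o) = o.sum (fun _ n => n) :=
    Finsupp.card_toMultiset o
  set Z := Finsupp.toMultiset o with hZ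
  have h0 : Multiset.card Z ≤ d * e := hC.bez1 hh hfh Z (fun p => by
    rw [hc, ← hC.le_ord p hh hfh])
  have h1 := finrank_sup_mulImg hC.prime hfh hC.hom hh (Multiset.card Z)
  have h2 := finrank_W hC Z (Multiset.card Z + d + e) (by omega)
  have hle : W hC Z (Multiset.card Z + d + e) ≤
      mulImg f (Multiset.card Z + e) ⊔ mulImg h (Multiset.card Z + d) := by
    intro g hg
    rw [mem_W] at hg
    obtain ⟨b, hb, hfb⟩ := hC.noether_hom hg.1 hh hfh (fun p m hm => by
      rw [← hC.le_ord p hh hfh, ← hc] at hm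
      exact (hC.facts p).anti hm (hg.2 p))
    obtain ⟨y, hy⟩ := hfb
    have hhom : (g - h * b).IsHomogeneous (Multiset.card Z + e + d) := by
      have h5 := hh.mul hb
      have h6 := hg.1
      rw [show e + (Multiset.card Z + d) = Multiset.card Z + e + d by ring] at h5
      rw [show Multiset.card Z + d + e = Multiset.card Z + e + d by ring] at h6
      exact h6.sub h5
    have hgy : g = f * homogeneousComponent (Multiset.card Z + e) y + h * b := by
      have h7 := homogeneousComponent_eq_self hhom
      rw [hy, mul_comm, hc_mul_right _ _ hC.hom] at h7
      rw [mul_comm f, h7, mul_comm y, ← hy]; ring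
    rw [hgy]
    exact Submodule.add_mem_sup
      (mem_mulImg.2 ⟨_, homogeneousComponent_isHomogeneous _ _, rfl⟩) (mem_mulImg.2 ⟨_, hb, rfl⟩)
  have h3 := Submodule.finrank_mono hle
  omega

end Bez
end PCurve

namespace PCurve
open MvPolynomial Matrix

section Canc
variable {k : Type*} [Field k]

local notation "S" => MvPolynomial (Fin 3) k

variable {f : MvPolynomial (Fin 3) k} {d : ℕ}

lemma lin_prime {b : Fin 3 → k} (hb : b ≠ 0) : Prime (lin b) := by
  rw [← UniqueFactorizationMonoid.irreducible_iff_prime]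
  have hne := lin_ne_zero hb
  have htd : (lin b).totalDegree = 1 := (lin_hom b).totalDegree hne
  have hu : ∀ x : S, x ≠ 0 → x.totalDegree = 0 → IsUnit x := by
    intro x hx h
    rw [totalDegree_eq_zero_iff_eq_C] at h
    rw [h]
    refine (IsUnit.mk0 _ ?_).map C
    intro h0
    rw [h0, map_zero] at h
    exact hx h
  constructor
  · intro h
    rw [isUnit_iff_totalDegree_of_isReduced] at h
    omega
  · intro x y hxy
    have hx : x ≠ 0 := by rintro rfl; exact hne (by rw [hxy, zero_mul])
    have hy : y ≠ 0 := by rintro rfl; exact hne (by rw [hxy, mul_zero])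
    have := totalDegree_mul_of_isDomain hx hy
    rw [← hxy, htd] at this
    rcases Nat.eq_zero_or_pos x.totalDegree with h | h
    · exact Or.inl (hu x hx h)
    · exact Or.inr (hu y hy (by omega))

lemma Crv.not_dvd_lin (hC : Crv f d) {b : Fin 3 → k} (hb : b ≠ 0) : ¬ f ∣ lin b := fun h =>
  lin_ne_zero hb (eq_zero_of_dvd hC.hom (lin_hom b) (by have := hC.hd; omega) h)

lemma Crv.line_cancel [IsAlgClosed k] [Infinite k] (hC : Crv f d) {p : PlanePoint f}
    {b : Fin 3 → k} (hb : b ≠ 0) (hbp : b ⬝ᵥ p.1.rep = 0) (hb2 : ¬ J p 2 (lin b))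
    {u : S} {m : ℕ} (hu : u.IsHomogeneous m) (hm : m + 1 < d)
    (H : ∀ q, q ≠ p → ∀ n, J q n (lin b) → J q n u) : lin b ∣ u := by
  classical
  obtain ⟨c, hc⟩ := exists_dot_ne {p.1.rep} (by simpa using p.1.rep_nonzero)
  have hc : c ⬝ᵥ p.1.rep ≠ 0 := hc _ (by simp)
  have hbw : b ⬝ᵥ crossProduct b c = 0 := dot_self_cross b c
  have hwv : crossProduct (crossProduct b c) p.1.rep ≠ 0 := by
    have : crossProduct (crossProduct b c) p.1.rep = - ((c ⬝ᵥ p.1.rep) • b) := by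
      rw [cross_cross_eq_smul_sub_smul, hbp]
      simp
    rw [this, neg_ne_zero]
    exact smul_ne_zero hc hb
  obtain ⟨b', hb'0, hb'p, -, hb'w⟩ := (hC.line0 p {crossProduct b c} (by simpa using hwv)).2
  have hb'w : eval (crossProduct b c) (lin b') ≠ 0 := hb'w _ (by simp)
  have hhom : (lin b' * u).IsHomogeneous (m + 1) := by
    rw [add_comm]; exact (lin_hom b').mul hu
  obtain ⟨y, hy, hdv⟩ := hC.noether_hom hhom (lin_hom b) (hC.not_dvd_lin hb) (by
    intro q n hn
    by_cases hq : q = p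
    · subst hq
      have hn1 : n ≤ 1 := by
        by_contra h
        exact hb2 ((hC.facts q).anti (by omega) hn)
      refine (hC.facts q).anti hn1 ?_
      rw [mul_comm]
      refine (hC.facts q).smul _ ?_
      rw [(hC.facts q).one_iff, eval_lin]
      exact hb'p
    · exact (hC.facts q).smul _ (H q hq n hn))
  have h0 := eq_zero_of_dvd hC.hom (n := m + 1) (hhom.sub (by
    rw [add_comm]; exact (lin_hom b).mul hy)) hm hdv
  have h1 : lin b ∣ lin b' * u := ⟨y, by rw [← sub_eq_zero, h0]⟩
  rcases (lin_prime hb).dvd_or_dvd h1 with ⟨z, hz⟩ | h2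
  · exfalso
    apply hb'w
    rw [hz, map_mul, eval_lin, hbw, zero_mul]
  · exact h2

lemma Crv.cancel [IsAlgClosed k] [Infinite k] (hC : Crv f d) {a h : S} {n : ℕ}
    (hh : h.IsHomogeneous n) (hfh : ¬ f ∣ h) (T : Finset (PlanePoint f))
    (H : ∀ q, q ∉ T → ∀ m, J q m h → J q m a) (bs : List (Fin 3 → k)) :
    (∀ b ∈ bs, b ≠ 0 ∧ ∃ p : PlanePoint f, b ⬝ᵥ p.1.rep = 0 ∧ ¬ J p 2 (lin b) ∧
      ∀ q ∈ T, q ≠ p → ¬ J q 1 (lin b)) → bs.length + 2 ≤ d →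
    ∀ u : S, u.IsHomogeneous bs.length → f ∣ a * (bs.map lin).prod - h * u →
      ∃ c : k, f ∣ a - C c * h := by
  induction bs with
  | nil =>
    intro _ _ u hu hdv
    have h1 : u.totalDegree = 0 := by
      have := hu.totalDegree_le
      simpa using this
    rw [totalDegree_eq_zero_iff_eq_C] at h1
    refine ⟨coeff 0 u, ?_⟩
    rw [← h1]
    convert hdv using 1
    simp [mul_comm]
  | cons b bs ih =>
    intro hbs hlen u hu hdv
    rw [List.length_cons] at hlen hu
    rw [List.map_cons, List.prod_cons] at hdv
    obtain ⟨hb0, p, hbp, hb2, hbT⟩ := hbs b (by simp)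
    obtain ⟨z, hz⟩ : lin b ∣ u := by
      refine hC.line_cancel hb0 hbp hb2 hu (by omega) ?_
      intro q hq m hm
      rcases m with _ | m
      · exact (hC.facts q).zero _
      by_cases hqT : q ∈ T
      · exact absurd ((hC.facts q).anti (by omega) hm) (hbT q hqT hq)
      · by_contra hnu
        have h1 : ¬ J q (ordAt f q h + 1) h := fun h2 => by
          have := (hC.le_ord q hh hfh _).2 h2
          omega
        have h2 := (hC.facts q).notmul h1 hnu
        apply h2
        have h3 : J q (ordAt f q h) a := H q hqT _ ((hC.le_ord q hh hfh _).1 le_rfl)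
        have h4 := (hC.facts q).smul (bs.map lin).prod ((hC.facts q).mul h3 hm)
        obtain ⟨y, hy⟩ := hdv
        have h5 := (hC.facts q).smul (-y) ((hC.facts q).f_mem (ordAt f q h + (m + 1)))
        have h6 := (hC.facts q).add h4 h5
        have h7 : h * u = (bs.map lin).prod * (a * lin b) + -y * f := by
          linear_combination -hy
        rw [h7]
        exact h6
    have hz' : u = lin b * homogeneousComponent bs.length z := by
      have h1 := homogeneousComponent_eq_self hu
      rw [hz, mul_comm, hc_mul_right _ _ (lin_hom b)] at h1
      rw [mul_comm, h1, hz, mul_comm]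
    refine ih (fun b' hb' => hbs b' (by simp [hb'])) (by omega) _
      (homogeneousComponent_isHomogeneous bs.length z) ?_
    have h2 : f ∣ lin b * (a * (bs.map lin).prod - h * homogeneousComponent bs.length z) := by
      convert hdv using 1
      rw [hz']
      ring
    exact (hC.prime.dvd_or_dvd h2).resolve_left (hC.not_dvd_lin hb0)

end Canc
end PCurve

namespace PCurve
open MvPolynomial Matrix

section Fin
variable {k : Type*} [Field k]

local notation "S" => MvPolynomial (Fin 3) k

variable {f : MvPolynomial (Fin 3) k} {d : ℕ}

open Classical in
lemma Crv.lines [Infinite k] (hC : Crv f d) (T : Finset (PlanePoint f))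
    (E : List (PlanePoint f)) :
    ∃ bs : List (Fin 3 → k), bs.length = E.length ∧
      (∀ b ∈ bs, b ≠ 0 ∧ ∃ p : PlanePoint f, b ⬝ᵥ p.1.rep = 0 ∧ ¬ J p 2 (lin b) ∧
        ∀ q ∈ T, q ≠ p → ¬ J q 1 (lin b)) ∧
      ((bs.map lin).prod : S).IsHomogeneous bs.length ∧
      ∀ q, J q (E.count q) (bs.map lin).prod := by
  induction E with
  | nil => exact ⟨[], rfl, by simp, by simpa using isHomogeneous_one (Fin 3) k,
      fun q => by simpa [J] using (hC.facts q).zero 1⟩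
  | cons p E ih =>
    obtain ⟨bs, h1, h2, h3, h4⟩ := ih
    obtain ⟨b, hb0, hbp, hb2, hbT⟩ := hC.line p T
    refine ⟨b :: bs, by simp [h1], ?_, ?_, ?_⟩
    · intro b' hb'
      rcases List.mem_cons.1 hb' with rfl | hb'
      · exact ⟨hb0, p, hbp, hb2, hbT⟩
      · exact h2 b' hb'
    · rw [List.map_cons, List.prod_cons, List.length_cons, add_comm]
      exact (lin_hom b).mul h3
    · intro q
      rw [List.map_cons, List.prod_cons]
      by_cases hq : q = p
      · subst hq
        rw [List.count_cons_self, mul_comm]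
        refine (hC.facts q).mul (h4 q) ?_
        rw [(hC.facts q).one_iff, eval_lin]
        exact hbp
      · rw [List.count_cons_of_ne (Ne.symm hq)]
        exact (hC.facts q).smul _ (h4 q)

lemma Crv.key [IsAlgClosed k] [Infinite k] (hC : Crv f d) (D : PlanePoint f →₀ ℤ)
    (hdeg : D.sum (fun _ n => n) ≤ (d : ℤ) - 2) {e1 e2 : ℕ} {g1 h1 g2 h2 : S}
    (hg1 : g1.IsHomogeneous e1) (hh1 : h1.IsHomogeneous e1)
    (hfg1 : ¬ f ∣ g1) (hfh1 : ¬ f ∣ h1)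
    (hg2 : g2.IsHomogeneous e2) (hh2 : h2.IsHomogeneous e2)
    (hfg2 : ¬ f ∣ g2) (hfh2 : ¬ f ∣ h2)
    (H1 : ∀ p, 0 ≤ (ordAt f p g1 : ℤ) - (ordAt f p h1 : ℤ) + D p)
    (H2 : ∀ p, 0 ≤ (ordAt f p g2 : ℤ) - (ordAt f p h2 : ℤ) + D p) :
    ∃ c : k, f ∣ g2 * h1 - C c * (h2 * g1) := by
  classical
  obtain ⟨og, hog, hogs⟩ := hC.bezout hg1 hfg1
  obtain ⟨oh, hoh, hohs⟩ := hC.bezout hh1 hfh1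
  let E' : PlanePoint f →₀ ℤ := og.mapRange (fun n : ℕ => (n : ℤ)) rfl -
    oh.mapRange (fun n : ℕ => (n : ℤ)) rfl + D
  have hE' : ∀ p, E' p = (ordAt f p g1 : ℤ) - (ordAt f p h1 : ℤ) + D p := fun p => by
    simp [E', hog, hoh]
  have hE's : E'.sum (fun _ n => n) = D.sum (fun _ n => n) := by
    have h1 : (og.mapRange (fun n : ℕ => (n : ℤ)) rfl).sum (fun _ n => n) = ((d * e1 : ℕ) : ℤ) := by
      rw [← hogs, Finsupp.sum_mapRange_index (fun _ => rfl)]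
      simp [Finsupp.sum]
    have h2 : (oh.mapRange (fun n : ℕ => (n : ℤ)) rfl).sum (fun _ n => n) = ((d * e1 : ℕ) : ℤ) := by
      rw [← hohs, Finsupp.sum_mapRange_index (fun _ => rfl)]
      simp [Finsupp.sum]
    rw [Finsupp.sum_add_index' (fun _ => rfl) (fun _ _ _ => rfl),
      Finsupp.sum_sub_index (fun _ _ _ => rfl), h1, h2]
    ring
  let E0 : PlanePoint f →₀ ℕ := E'.mapRange Int.toNat rfl
  have hE0 : ∀ p, (E0 p : ℤ) = (ordAt f p g1 : ℤ) - (ordAt f p h1 : ℤ) + D p := fun p => by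
    rw [← hE']
    have := H1 p
    rw [← hE'] at this
    simpa [E0] using this
  have hE0s : ((E0.sum (fun _ n => n) : ℕ) : ℤ) = E'.sum (fun _ n => n) := by
    rw [Finsupp.sum_mapRange_index (fun _ => rfl)]
    simp only [Finsupp.sum, Nat.cast_sum]
    refine Finset.sum_congr rfl fun p _ => ?_
    rw [Int.toNat_of_nonneg]
    rw [hE']
    exact H1 p
  let E := (Finsupp.toMultiset E0).toList
  have hcount : ∀ p, E.count p = E0 p := fun p => by
    rw [← Finsupp.count_toMultiset, ← Multiset.coe_count, Multiset.coe_toList]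
  have hlen : E.length = E0.sum (fun _ n => n) := by
    rw [Multiset.length_toList]; exact Finsupp.card_toMultiset E0
  obtain ⟨bs, hb1, hb2, hb3, hb4⟩ := hC.lines E.toFinset E
  have hh : (h2 * g1).IsHomogeneous (e1 + e2) := by
    rw [add_comm]; exact hh2.mul hg1
  have ha : (g2 * h1).IsHomogeneous (e1 + e2) := by
    rw [add_comm]; exact hg2.mul hh1
  have hfh : ¬ f ∣ h2 * g1 := fun h => (hC.prime.dvd_or_dvd h).elim hfh2 hfg1
  have hfa : ¬ f ∣ g2 * h1 := fun h => (hC.prime.dvd_or_dvd h).elim hfg2 hfh1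
  have hord : ∀ p, ordAt f p (h2 * g1) ≤ ordAt f p (g2 * h1) + E.count p := by
    intro p
    rw [hC.ord_mul p hh2 hfh2 hg1 hfg1, hC.ord_mul p hg2 hfg2 hh1 hfh1, hcount]
    have h3 := H2 p
    have h4 := hE0 p
    omega
  have hhom : (g2 * h1 * (bs.map lin).prod).IsHomogeneous (bs.length + (e1 + e2)) := by
    rw [add_comm]; exact ha.mul hb3
  obtain ⟨u, hu, hdv⟩ := hC.noether_hom hhom hh hfh (fun p m hm => by
    rw [← hC.le_ord p hh hfh] at hm
    exact (hC.facts p).anti (hm.trans (hord p))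
      ((hC.facts p).mul ((hC.le_ord p ha hfa _).1 le_rfl) (hb4 p)))
  refine hC.cancel hh hfh E.toFinset ?_ bs hb2 ?_ u hu hdv
  · intro q hq m hm
    rw [← hC.le_ord q hh hfh] at hm
    rw [← hC.le_ord q ha hfa]
    have h3 := hord q
    rw [List.count_eq_zero_of_not_mem (by simpa using hq)] at h3
    omega
  · have : ((bs.length : ℕ) : ℤ) ≤ d - 2 := by
      rw [hb1, hlen, hE0s, hE's]; exact hdeg
    omega

end Fin
end PCurve

/-- A smooth plane curve of degree `d ≥ 4` over an algebraically closed field has no `g¹_m`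
for `m ≤ d - 2`: every divisor `D` on `C` of degree at most `d - 2` has `ℓ(D) ≤ 1`
(equivalently, every line bundle of degree at most `d - 2` has `h⁰ ≤ 1`). -/
theorem no_g1m_of_degree_le_sub_two
    (k : Type*) [Field k] [IsAlgClosed k]
    (d : ℕ) (hd : 4 ≤ d) (f : MvPolynomial (Fin 3) k) (hf : f.IsHomogeneous d)
    (hsm : ∀ v : Fin 3 → k, MvPolynomial.eval v f = 0 →
      (∀ i : Fin 3, MvPolynomial.eval v (MvPolynomial.pderiv i f) = 0) → v = 0)
    (F : Type*) [Field F]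
    [Algebra (MvPolynomial (Fin 3) k ⧸ Ideal.span {f}) F]
    [IsFractionRing (MvPolynomial (Fin 3) k ⧸ Ideal.span {f}) F]
    [Algebra k F] [IsScalarTower k (MvPolynomial (Fin 3) k ⧸ Ideal.span {f}) F]
    (D : PlanePoint f →₀ ℤ) (hdeg : D.sum (fun _ n => n) ≤ (d : ℤ) - 2) :
    h0 F f (fun q => D q) ≤ 1 := by
  classical
  haveI : Infinite k := IsAlgClosed.instInfinite
  have hf0 : f ≠ 0 := by
    rintro rfl
    have := hsm (fun _ => 1) (by simp) (by simp)
    exact one_ne_zero (congrFun this 0)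
  have hinj : Function.Injective
      (algebraMap (MvPolynomial (Fin 3) k ⧸ Ideal.span {f}) F) := IsFractionRing.injective _ _
  haveI : IsDomain (MvPolynomial (Fin 3) k ⧸ Ideal.span {f}) := hinj.isDomain _
  have hfp : Prime f := by
    rw [← Ideal.span_singleton_prime hf0]
    exact (Ideal.Quotient.isDomain_iff_prime _).1 inferInstance
  have hC : PCurve.Crv f d := ⟨hd, hf, hfp, hsm⟩
  let ι : MvPolynomial (Fin 3) k →+* F :=
    (algebraMap (MvPolynomial (Fin 3) k ⧸ Ideal.span {f}) F).comp (Ideal.Quotient.mk _)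
  have hι : ∀ x, ι x = 0 ↔ f ∣ x := by
    intro x
    rw [← Ideal.mem_span_singleton, ← Ideal.Quotient.eq_zero_iff_mem]
    exact map_eq_zero_iff _ hinj
  have hιC : ∀ c : k, ι (MvPolynomial.C c) = algebraMap k F c := by
    intro c
    rw [IsScalarTower.algebraMap_apply k (MvPolynomial (Fin 3) k ⧸ Ideal.span {f}) F]
    rfl
  rw [h0]
  by_cases hex : ∃ φ ∈ RRspace F f (fun q => D q), φ ≠ 0
  · obtain ⟨φ₁, hφ₁, hφ₁0⟩ := hex
    rcases hφ₁ with h | ⟨e1, g1, h1, hg1, hh1, hfg1, hfh1, heq1, H1⟩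
    · exact absurd h hφ₁0
    have hle : Submodule.span k (RRspace F f (fun q => D q)) ≤ Submodule.span k {φ₁} := by
      rw [Submodule.span_le]
      rintro φ₂ (rfl | ⟨e2, g2, h2, hg2, hh2, hfg2, hfh2, heq2, H2⟩)
      · exact zero_mem _
      obtain ⟨c, hc⟩ := hC.key D hdeg hg1 hh1 hfg1 hfh1 hg2 hh2 hfg2 hfh2 H1 H2
      rw [SetLike.mem_coe, Submodule.mem_span_singleton]
      refine ⟨c, ?_⟩
      rw [← hι, map_sub, map_mul, map_mul, map_mul, hιC] at hc
      have heq1' : φ₁ * ι h1 = ι g1 := heq1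
      have heq2' : φ₂ * ι h2 = ι g2 := heq2
      have hn1 : ι h1 ≠ 0 := fun h => hfh1 ((hι _).1 h)
      have hn2 : ι h2 ≠ 0 := fun h => hfh2 ((hι _).1 h)
      rw [Algebra.smul_def]
      apply mul_right_cancel₀ (mul_ne_zero hn1 hn2)
      rw [← heq1', ← heq2'] at hc
      linear_combination -hc
    calc _ ≤ Module.finrank k (Submodule.span k {φ₁}) := Submodule.finrank_mono hle
      _ ≤ 1 := (finrank_span_singleton hφ₁0).le
  · push Not at hex
    have : Submodule.span k (RRspace F f (fun q => D q)) = ⊥ := by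
      rw [Submodule.span_eq_bot]
      exact hex
    rw [this, finrank_bot]
    exact Nat.zero_le _
end
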